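/- arXiv:1908.06396 — 5 statements merged into one kernel-verified Lean document; each statement's English description precedes it below -/
import Mathlib

section
/- Let Ω be a bounded open convex domain in ℝⁿ (n ≥ 2). Suppose F : Ω × (−∞,0) → ℝ is continuous and non-decreasing in its second argument, and there are constants A > 0, α ≥ 0, β ≥ n+1 with β < α + 2n − 1 such that 0 < F(x,t) ≤ A·d_x^{β−n−1}·|t|^{−α} for all x ∈ Ω and t < 0. If u is a classical solution of det D²u = F(x,u) in Ω with u = 0 on ∂Ω, then there is a constant C depending only on α, β, A, diam Ω and n such that |u(y)| ≤ C·d_y^{(β−n+1)/(n+α)} for every y ∈ Ω. -/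
/-- The determinant of the Hessian matrix of `u` at `x`. -/
noncomputable def hessianDet {n : ℕ} (u : EuclideanSpace ℝ (Fin n) → ℝ)
    (x : EuclideanSpace ℝ (Fin n)) : ℝ :=
  (Matrix.of fun i j : Fin n =>
    iteratedFDeriv ℝ 2 u x ![EuclideanSpace.single i (1 : ℝ), EuclideanSpace.single j (1 : ℝ)]).det

/-- `u` is a classical solution of `det D²u = F(x,u)` in `Ω`, `u = 0` on `∂Ω`:
continuous on the closure, convex, `C²` and negative inside. -/
def IsClassicalSolution {n : ℕ} (Ω : Set (EuclideanSpace ℝ (Fin n)))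
    (F : EuclideanSpace ℝ (Fin n) → ℝ → ℝ) (u : EuclideanSpace ℝ (Fin n) → ℝ) : Prop :=
  ContinuousOn u (closure Ω) ∧ ConvexOn ℝ Ω u ∧ ContDiffOn ℝ 2 u Ω ∧
    (∀ x ∈ Ω, u x < 0) ∧ (∀ x ∈ frontier Ω, u x = 0) ∧
    ∀ x ∈ Ω, hessianDet u x = F x (u x)

/-- `F` is continuous on `Ω × (-∞,0)`, non-decreasing in its second argument, and satisfies
`0 < F(x,t) ≤ A d_x^{β-n-1} |t|^{-α}`. -/
def SatisfiesFCond {n : ℕ} (Ω : Set (EuclideanSpace ℝ (Fin n)))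
    (F : EuclideanSpace ℝ (Fin n) → ℝ → ℝ) (A α β : ℝ) : Prop :=
  ContinuousOn (fun p : EuclideanSpace ℝ (Fin n) × ℝ => F p.1 p.2) (Ω ×ˢ Set.Iio (0 : ℝ)) ∧
    (∀ x ∈ Ω, ∀ s t : ℝ, s ≤ t → t < 0 → F x s ≤ F x t) ∧
    ∀ x ∈ Ω, ∀ t : ℝ, t < 0 →
      0 < F x t ∧ F x t ≤ A * Metric.infDist x (frontier Ω) ^ (β - n - 1) * |t| ^ (-α)

section Helpers

open Matrix

lemma det_ge_one {n : ℕ} (C : Matrix (Fin n) (Fin n) ℝ) (hC : C.IsHermitian)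
    (h : ∀ v : Fin n → ℝ, v ⬝ᵥ v ≤ v ⬝ᵥ (C *ᵥ v)) : 1 ≤ C.det := by
  rw [hC.det_eq_prod_eigenvalues]
  have : ∀ i, 1 ≤ hC.eigenvalues i := by
    intro i
    rw [hC.eigenvalues_eq]
    have h1 := h (hC.eigenvectorBasis i)
    have h2 : (hC.eigenvectorBasis i : Fin n → ℝ) ⬝ᵥ (hC.eigenvectorBasis i) = 1 := by
      have := hC.eigenvectorBasis.orthonormal.1 i
      have h3 : inner ℝ (hC.eigenvectorBasis i) (hC.eigenvectorBasis i) = (1:ℝ) := by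
        rw [real_inner_self_eq_norm_sq, this]; norm_num
      rw [← h3, PiLp.inner_apply]
      simp [dotProduct, sq]
    rw [h2] at h1
    simpa using h1
  have h9 := Finset.prod_le_prod (s := Finset.univ) (f := fun _ : Fin n => (1:ℝ)) (g := hC.eigenvalues)
    (fun _ _ => zero_le_one) (fun i _ => this i)
  simpa using h9

lemma det_lower {n : ℕ} (B : Matrix (Fin n) (Fin n) ℝ) (hB : B.IsHermitian)
    (e : Fin n → ℝ) (he : e ⬝ᵥ e = 1) (p q : ℝ) (hp : 0 < p) (hq : 0 < q)
    (h : ∀ v : Fin n → ℝ, p ^ 2 * (e ⬝ᵥ v) ^ 2 + q ^ 2 * (v ⬝ᵥ v - (e ⬝ᵥ v) ^ 2)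
      ≤ v ⬝ᵥ (B *ᵥ v)) : p ^ 2 * (q ^ 2) ^ n ≤ q ^ 2 * B.det := by
  set V : Matrix (Fin n) (Fin n) ℝ := 1 + replicateCol Unit ((q / p - 1) • e) * replicateRow Unit e with hV
  have hdet : V.det = q / p := by
    rw [hV, det_one_add_replicateCol_mul_replicateRow, dotProduct_smul, he]; simp
  have hVv : ∀ v, V *ᵥ v = v + ((q / p - 1) * (e ⬝ᵥ v)) • e := by
    intro v
    ext i
    simp [hV, mulVec, dotProduct, Matrix.mul_apply, Finset.mul_sum, Finset.sum_mul]
    simp [add_mul, Finset.sum_add_distrib, Matrix.one_apply]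
    refine Finset.sum_congr rfl fun j _ => ?_
    ring
  have hVt : Vᵀ = V := by
    ext i j
    simp only [hV, Matrix.transpose_apply, Matrix.add_apply, Matrix.mul_apply, Matrix.one_apply, eq_comm]
    simp
    ring
  have key : 1 ≤ ((q⁻¹ ^ 2) • (V * B * V)).det := by
    apply det_ge_one
    · have hB' : Bᵀ = B := by
        simpa [IsHermitian, conjTranspose_eq_transpose_of_trivial] using hB
      unfold IsHermitian
      ext i j
      have : (V * B * V)ᵀ = V * B * V := by
        rw [transpose_mul, transpose_mul, hVt, hB', Matrix.mul_assoc]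
      simpa using Or.inl (congrFun (congrFun this i) j)
    · intro v
      have h1 := h (V *ᵥ v)
      have h2 : v ⬝ᵥ ((q⁻¹ ^ 2 • (V * B * V)) *ᵥ v) = q⁻¹ ^ 2 * ((V *ᵥ v) ⬝ᵥ (B *ᵥ (V *ᵥ v))) := by
        rw [smul_mulVec, dotProduct_smul, smul_eq_mul, ← mulVec_mulVec, ← mulVec_mulVec, dotProduct_mulVec v V, ← mulVec_transpose V v, hVt]
      have h3 : e ⬝ᵥ (V *ᵥ v) = q / p * (e ⬝ᵥ v) := by
        rw [hVv, dotProduct_add, dotProduct_smul, he]; simp; ring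
      have h4 : (V *ᵥ v) ⬝ᵥ (V *ᵥ v) = v ⬝ᵥ v + ((q/p)^2 - 1) * (e ⬝ᵥ v)^2 := by
        rw [hVv]
        simp only [dotProduct_add, add_dotProduct, dotProduct_smul, smul_dotProduct, he, dotProduct_comm v e, smul_eq_mul]
        ring
      rw [h2]
      rw [h3, h4] at h1
      have h5 : p ^ 2 * (q / p * e ⬝ᵥ v) ^ 2 +
          q ^ 2 * (v ⬝ᵥ v + ((q / p) ^ 2 - 1) * (e ⬝ᵥ v) ^ 2 - (q / p * e ⬝ᵥ v) ^ 2) = q^2 * (v ⬝ᵥ v) := by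
        field_simp; ring
      rw [h5] at h1
      calc v ⬝ᵥ v = q⁻¹ ^ 2 * (q ^ 2 * v ⬝ᵥ v) := by field_simp
        _ ≤ _ := by gcongr
  rw [det_smul, det_mul, det_mul, hdet] at key
  simp only [Fintype.card_fin, inv_pow] at key
  have hpp : 0 < p ^ 2 * (q ^ 2) ^ n := by positivity
  calc p ^ 2 * (q ^ 2) ^ n = (p ^ 2 * (q ^ 2) ^ n) * 1 := by ring
    _ ≤ (p ^ 2 * (q ^ 2) ^ n) * (((q ^ 2) ^ n)⁻¹ * (q / p * B.det * (q / p))) := by gcongr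
    _ = _ := by field_simp

open Filter Topology

lemma deriv2_nonneg (f f' : ℝ → ℝ) (c : ℝ) (h1 : ∀ᶠ t in 𝓝 0, HasDerivAt f (f' t) t)
    (h2 : HasDerivAt f' c 0) (hm : IsLocalMin f 0) : 0 ≤ c := by
  by_contra hc
  push Not at hc
  have e1 : deriv f =ᶠ[𝓝 0] f' := h1.mono fun t ht => ht.deriv
  have e2 : deriv (deriv f) 0 = c := by rw [e1.deriv_eq]; exact h2.deriv
  have hM := isLocalMax_of_deriv_deriv_neg (by rw [e2]; exact hc) hm.deriv_eq_zero
    h1.self_of_nhds.continuousAt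
  have e3 : f =ᶠ[𝓝 0] fun _ => f 0 := by
    filter_upwards [hm, hM] with t h3 h4
    exact le_antisymm h4 h3
  have e4 : deriv f =ᶠ[𝓝 0] fun _ => 0 := by
    simpa using e3.deriv
  rw [e4.deriv_eq] at e2
  simp at e2
  linarith

lemma hess_ge {n : ℕ} (u : EuclideanSpace ℝ (Fin n) → ℝ) (x v : EuclideanSpace ℝ (Fin n))
    (hu : ContDiffAt ℝ 2 u x) (q q' : ℝ → ℝ) (c : ℝ)
    (h1 : ∀ᶠ t in 𝓝 0, HasDerivAt q (q' t) t) (h2 : HasDerivAt q' c 0)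
    (hm : IsLocalMin (fun t : ℝ => u (x + t • v) - q t) 0) :
    c ≤ fderiv ℝ (fderiv ℝ u) x v v := by
  have hl : ∀ t : ℝ, HasDerivAt (fun t : ℝ => x + t • v) v t := by
    intro t
    simpa using ((hasDerivAt_id t).smul_const v).const_add x
  have hlc : Tendsto (fun t : ℝ => x + t • v) (𝓝 0) (𝓝 x) := by
    have := (hl 0).continuousAt.tendsto
    simpa using this
  have hd : ∀ᶠ y in 𝓝 x, DifferentiableAt ℝ u y := by
    have := hu.eventually (by simp)
    filter_upwards [this] with y hy
    exact hy.differentiableAt (by simp)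
  have hd2 : DifferentiableAt ℝ (fderiv ℝ u) x :=
    (hu.fderiv_right (m := 1) (by norm_num)).differentiableAt (by simp)
  have := deriv2_nonneg _ (fun t => fderiv ℝ u (x + t • v) v - q' t)
    (fderiv ℝ (fderiv ℝ u) x v v - c) ?_ ?_ hm
  · linarith
  · filter_upwards [h1, hlc.eventually hd] with t a b
    exact (b.hasFDerivAt.comp_hasDerivAt t (hl t)).sub a
  · refine HasDerivAt.sub ?_ h2
    have h0 : HasFDerivAt (fderiv ℝ u) (fderiv ℝ (fderiv ℝ u) x) (x + (0:ℝ) • v) := by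
      simpa using hd2.hasFDerivAt
    have h3 : HasDerivAt (fun t : ℝ => fderiv ℝ u (x + t • v)) (fderiv ℝ (fderiv ℝ u) x v) 0 :=
      h0.comp_hasDerivAt (0:ℝ) (hl 0)
    exact (h3.clm_apply (hasDerivAt_const (0:ℝ) v)).congr_deriv (by simp)

lemma barrier_deriv (M γ s σ g b k : ℝ) (hs : 0 < s) :
    ∃ q' : ℝ → ℝ, (∀ᶠ t in 𝓝 (0:ℝ), HasDerivAt
      (fun t : ℝ => -(M * (s + t * σ) ^ γ * (g + 2 * t * b - t ^ 2 * k))) (q' t) t) ∧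
      HasDerivAt q' (-(M * (γ * (γ - 1) * s ^ (γ - 2) * σ ^ 2 * g + 4 * γ * σ * s ^ (γ - 1) * b
        - 2 * s ^ γ * k))) 0 := by
  have hl : ∀ t : ℝ, HasDerivAt (fun t : ℝ => s + t * σ) σ t := by
    intro t
    simpa using ((hasDerivAt_id t).mul_const σ).const_add s
  have hq : ∀ t : ℝ, HasDerivAt (fun t : ℝ => g + 2 * t * b - t ^ 2 * k) (2 * b - 2 * t * k) t := by
    intro t
    have h1 := (((hasDerivAt_id t).const_mul 2).mul_const b).const_add g
    have h2 := ((hasDerivAt_id t).pow 2).mul_const k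
    exact (h1.sub h2).congr_deriv (by simp)
  have hq2 : ∀ t : ℝ, HasDerivAt (fun t : ℝ => 2 * b - 2 * t * k) (- 2 * k) t := by
    intro t
    have h1 := (((hasDerivAt_id t).const_mul 2).mul_const k).const_sub (2 * b)
    exact h1.congr_deriv (by simp)
  have hpos : ∀ᶠ t in 𝓝 (0:ℝ), 0 < s + t * σ := by
    have := (hl 0).continuousAt.tendsto
    exact this.eventually (lt_mem_nhds (by simpa using hs))
  have hp : ∀ δ t : ℝ, 0 < s + t * σ → HasDerivAt (fun t : ℝ => (s + t * σ) ^ δ)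
      (σ * δ * (s + t * σ) ^ (δ - 1)) t := by
    intro δ t ht
    exact (hl t).rpow_const (Or.inl ht.ne')
  refine ⟨fun t => -(M * ((σ * γ * (s + t * σ) ^ (γ - 1)) * (g + 2 * t * b - t ^ 2 * k)
    + (s + t * σ) ^ γ * (2 * b - 2 * t * k))), ?_, ?_⟩
  · filter_upwards [hpos] with t ht
    have := (((hp γ t ht).mul (hq t)).const_mul M).neg
    refine HasDerivAt.congr_of_eventuallyEq this (Eventually.of_forall fun t => ?_)
    simp [mul_assoc]
  · have h0 := hpos.self_of_nhds
    have h3 := ((((hp (γ - 1) 0 h0).const_mul (σ * γ)).mul (hq 0)).add ((hp γ 0 h0).mul (hq2 0))).const_mul M |>.neg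
    refine h3.congr_deriv ?_
    have e : γ - 1 - 1 = γ - 2 := by ring
    simp only [e, zero_mul, add_zero, mul_zero]
    ring

lemma alg_ineq (γ s σ g b k P r : ℝ) (hP : 0 < P) (hr : 0 ≤ r)
    (hg : 4 * γ ^ 2 * P + 1 ≤ γ * (1 - γ) * g) (hb : b ^ 2 ≤ P * k) :
    r * σ ^ 2 + r * s ^ 2 * k ≤ -(γ * (γ - 1) * r * σ ^ 2 * g + 4 * γ * σ * (r * s) * b
        - 2 * (r * s ^ 2) * k) := by
  have key : 0 ≤ 4 * γ ^ 2 * P * σ ^ 2 - 4 * γ * σ * s * b + k * s ^ 2 := by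
    have h1 : 0 ≤ P * (4 * γ ^ 2 * P * σ ^ 2 - 4 * γ * σ * s * b + k * s ^ 2) := by
      nlinarith [sq_nonneg (2 * γ * P * σ - b * s), mul_le_mul_of_nonneg_right hb (sq_nonneg s)]
    exact nonneg_of_mul_nonneg_right h1 hP
  have k2 : 0 ≤ (γ * (1 - γ) * g - 1) * σ ^ 2 - 4 * γ * σ * s * b + k * s ^ 2 := by
    nlinarith [mul_le_mul_of_nonneg_right hg (sq_nonneg σ)]
  nlinarith [mul_nonneg hr k2]

lemma final_ineq (n : ℕ) (A α β γ M s W d : ℝ) (hA : 0 < A) (hα : 0 ≤ α) (hn : 2 ≤ n)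
    (hβ : (n : ℝ) + 1 ≤ β) (hγ : γ * (n + α) = β - n + 1) (hM : M = A + 1) (hs : 0 < s)
    (hd : 0 ≤ d) (hds : d ≤ s) (hW : M * s ^ γ ≤ W)
    (h : M * s ^ (γ - 2) * (M * s ^ γ) ^ n ≤ M * s ^ γ * (A * d ^ (β - n - 1) * W ^ (-α))) :
    False := by
  have hM0 : 0 < M := by linarith
  have hsg : 0 < s ^ γ := Real.rpow_pos_of_pos hs _
  have hT : 0 < M * s ^ γ := by positivity
  have h1 : d ^ (β - n - 1) ≤ s ^ (β - n - 1) := Real.rpow_le_rpow hd hds (by linarith)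
  have h2 : W ^ (-α) ≤ (M * s ^ γ) ^ (-α) :=
    Real.rpow_le_rpow_of_nonpos hT hW (by linarith)
  have hW0 : 0 < W := lt_of_lt_of_le hT hW
  have h3 : M * s ^ (γ - 2) * (M * s ^ γ) ^ n
      ≤ M * s ^ γ * (A * s ^ (β - n - 1) * (M * s ^ γ) ^ (-α)) := by
    refine h.trans ?_
    gcongr
  have h4 : M * s ^ (γ - 2) * (M * s ^ γ) ^ n = M ^ (n + α) * (M * s ^ γ) ^ (-α) *
      (M * s ^ γ * s ^ (β - n - 1)) := by
    rw [← Real.rpow_natCast (M * s ^ γ) n, Real.mul_rpow hM0.le hsg.le,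
      Real.mul_rpow hM0.le hsg.le, ← Real.rpow_mul hs.le, ← Real.rpow_mul hs.le]
    have a1 : M ^ ((n : ℝ) + α) * M ^ (-α) = M ^ (n : ℝ) := by
      rw [← Real.rpow_add hM0]; congr 1; ring
    have a2 : s ^ (γ - 2) * s ^ (γ * n) = s ^ (γ * -α) * (s ^ γ * s ^ (β - n - 1)) := by
      rw [← Real.rpow_add hs, ← Real.rpow_add hs, ← Real.rpow_add hs]; congr 1; linarith
    calc M * s ^ (γ - 2) * (M ^ (n : ℝ) * s ^ (γ * n))
        = M * M ^ (n : ℝ) * (s ^ (γ - 2) * s ^ (γ * n)) := by ring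
      _ = M * (M ^ ((n : ℝ) + α) * M ^ (-α)) * (s ^ (γ * -α) * (s ^ γ * s ^ (β - n - 1))) := by
          rw [a1, a2]
      _ = _ := by ring
  have h5 : A < M ^ ((n : ℝ) + α) := by
    have hn' : (2 : ℝ) ≤ n := by exact_mod_cast hn
    have : M ^ (1 : ℝ) ≤ M ^ ((n : ℝ) + α) :=
      Real.rpow_le_rpow_of_exponent_le (by linarith) (by linarith)
    rw [Real.rpow_one] at this
    linarith
  have h6 : 0 < (M * s ^ γ) ^ (-α) * (M * s ^ γ * s ^ (β - n - 1)) := by positivity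
  rw [h4] at h3
  have := mul_lt_mul_of_pos_right h5 h6
  nlinarith

lemma support_plane {n : ℕ} (hn : 2 ≤ n) (Ω : Set (EuclideanSpace ℝ (Fin n))) (ho : IsOpen Ω)
    (hc : Convex ℝ Ω) (hb : Bornology.IsBounded Ω) (y : EuclideanSpace ℝ (Fin n)) (hy : y ∈ Ω) :
    ∃ p ∈ frontier Ω, ∃ e : EuclideanSpace ℝ (Fin n), ‖e‖ = 1 ∧
      Metric.infDist y (frontier Ω) = ‖y - p‖ ∧ (∀ x ∈ Ω, 0 < inner ℝ e (x - p)) ∧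
      ∀ x ∈ Ω, Metric.infDist x (frontier Ω) ≤ inner ℝ e (x - p) := by
  have : Nonempty (Fin n) := ⟨⟨0, by omega⟩⟩
  have hne : Ω ≠ Set.univ := by
    rintro rfl
    exact NormedSpace.unbounded_univ ℝ (EuclideanSpace ℝ (Fin n)) hb
  have hfne : (frontier Ω).Nonempty := nonempty_frontier_iff.2 ⟨⟨y, hy⟩, hne⟩
  obtain ⟨p, hp, hpd⟩ := isClosed_frontier.exists_infDist_eq_dist hfne y
  have hpn : p ∉ Ω := by
    have := hp.2
    rwa [ho.interior_eq] at this
  obtain ⟨f, hf⟩ := geometric_hahn_banach_open_point hc ho hpn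
  set a := (InnerProductSpace.toDual ℝ (EuclideanSpace ℝ (Fin n))).symm f with ha
  have haf : ∀ x, inner ℝ a x = f x := fun x => InnerProductSpace.toDual_symm_apply
  have ha0 : a ≠ 0 := by
    intro h0
    have := hf y hy
    rw [← haf, ← haf, h0] at this
    simp at this
  have hna : 0 < ‖a‖ := norm_pos_iff.2 ha0
  set e := -(‖a‖⁻¹ • a) with he
  have he1 : ‖e‖ = 1 := by
    rw [he, norm_neg, norm_smul, norm_inv, norm_norm, inv_mul_cancel₀ hna.ne']
  have hin : ∀ x, inner ℝ e (x - p) = ‖a‖⁻¹ * (f p - f x) := by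
    intro x
    rw [he, inner_neg_left, real_inner_smul_left, haf, map_sub]; ring
  have hpos : ∀ x ∈ Ω, 0 < inner ℝ e (x - p) := by
    intro x hx
    rw [hin]
    have := hf x hx
    have : 0 < f p - f x := by linarith
    positivity
  refine ⟨p, hp, e, he1, by rw [hpd, dist_eq_norm], hpos, ?_⟩
  intro x hx
  obtain ⟨z, hz, hzd⟩ := exists_mem_frontier_infDist_compl_eq_dist hx hne
  set s := inner ℝ e (x - p) with hs
  have hout : x - s • e ∈ Ωᶜ := by
    intro hmem
    have h1 := hpos _ hmem
    have h2 : x - s • e - p = (x - p) - s • e := by abel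
    rw [h2, inner_sub_right, real_inner_smul_right, real_inner_self_eq_norm_sq, he1] at h1
    linarith
  calc Metric.infDist x (frontier Ω) ≤ dist x z := Metric.infDist_le_dist_of_mem hz
    _ = Metric.infDist x Ωᶜ := hzd.symm
    _ ≤ dist x (x - s • e) := Metric.infDist_le_dist_of_mem hout
    _ = s := by
      rw [dist_eq_norm, sub_sub_cancel, norm_smul, he1, mul_one, Real.norm_of_nonneg (hpos x hx).le]

lemma hess_det_lower {n : ℕ} (u : EuclideanSpace ℝ (Fin n) → ℝ) (x e : EuclideanSpace ℝ (Fin n))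
    (hu : ContDiffAt ℝ 2 u x) (he : ‖e‖ = 1) (a b : ℝ) (ha : 0 < a) (hb : 0 < b)
    (h : ∀ v : EuclideanSpace ℝ (Fin n), a * (inner ℝ e v) ^ 2 + b * (‖v‖ ^ 2 - (inner ℝ e v) ^ 2)
      ≤ fderiv ℝ (fderiv ℝ u) x v v) : a * b ^ n ≤ b * hessianDet u x := by
  have hdot : ∀ v w : EuclideanSpace ℝ (Fin n), (v : Fin n → ℝ) ⬝ᵥ (w : Fin n → ℝ) = inner ℝ v w := by
    intro v w
    rw [PiLp.inner_apply]
    simp [dotProduct, mul_comm]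
  have hsym : IsSymmSndFDerivAt ℝ u x := hu.isSymmSndFDerivAt (by simp)
  have := det_lower (Matrix.of fun i j : Fin n =>
    iteratedFDeriv ℝ 2 u x ![EuclideanSpace.single i (1 : ℝ), EuclideanSpace.single j (1 : ℝ)])
    ?_ e ?_ (√a) (√b) (Real.sqrt_pos.2 ha) (Real.sqrt_pos.2 hb) ?_
  · rwa [Real.sq_sqrt ha.le, Real.sq_sqrt hb.le] at this
  · ext i j
    simp [iteratedFDeriv_two_apply]
    exact hsym.eq _ _
  · rw [hdot, real_inner_self_eq_norm_sq, he]; norm_num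
  · intro v
    rw [Real.sq_sqrt ha.le, Real.sq_sqrt hb.le]
    have h1 := h (WithLp.toLp 2 v)
    have h2 : e.ofLp ⬝ᵥ v = inner ℝ e (WithLp.toLp 2 v) := hdot e (WithLp.toLp 2 v)
    have h3 : v ⬝ᵥ v = ‖(WithLp.toLp 2 v : EuclideanSpace ℝ (Fin n))‖ ^ 2 := by
      rw [← real_inner_self_eq_norm_sq]; exact hdot (WithLp.toLp 2 v) (WithLp.toLp 2 v)
    rw [h2, h3]
    refine h1.trans (le_of_eq ?_)
    have hv : (WithLp.toLp 2 v : EuclideanSpace ℝ (Fin n))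
        = ∑ i, v i • EuclideanSpace.single i (1:ℝ) := by
      ext j
      simp [Finset.sum_apply, Pi.single_apply]
    rw [hv]
    simp only [map_sum, map_smul, _root_.sum_apply, _root_.smul_apply]
    simp only [dotProduct, mulVec, Matrix.of_apply, iteratedFDeriv_two_apply, smul_eq_mul, Finset.mul_sum]
    simp
    refine Finset.sum_congr rfl fun i _ => Finset.sum_congr rfl fun j _ => ?_
    rw [hsym.eq (EuclideanSpace.single j (1:ℝ)) (EuclideanSpace.single i (1:ℝ))]
    ring

end Helpers

set_option maxHeartbeats 1000000 in
/-- Lemma 2.2 (pointwise form): `|u(y)| ≤ C d_y^{(β-n+1)/(n+α)}` with `C` depending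
only on `α, β, A, diam Ω` (through the bound `D`) and `n`. -/
theorem pointwise_distance_bound
    (n : ℕ) (hn : 2 ≤ n) (A α β D : ℝ) (hA : 0 < A) (hα : 0 ≤ α)
    (hβ : (n : ℝ) + 1 ≤ β) (hβ' : β < α + 2 * n - 1) :
    ∃ C : ℝ, 0 < C ∧
      ∀ (Ω : Set (EuclideanSpace ℝ (Fin n))) (F : EuclideanSpace ℝ (Fin n) → ℝ → ℝ)
        (u : EuclideanSpace ℝ (Fin n) → ℝ),
        IsOpen Ω → Convex ℝ Ω → Bornology.IsBounded Ω → Ω.Nonempty →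
        Metric.diam Ω ≤ D →
        SatisfiesFCond Ω F A α β →
        IsClassicalSolution Ω F u →
        ∀ y ∈ Ω, |u y| ≤ C * Metric.infDist y (frontier Ω) ^ ((β - n + 1) / (n + α)) := by
  have hn' : (2 : ℝ) ≤ n := by exact_mod_cast hn
  have hna : 0 < (n : ℝ) + α := by linarith
  set γ : ℝ := (β - n + 1) / (n + α) with hγdef
  have hγ0 : 0 < γ := div_pos (by linarith) hna
  have hγ1 : γ < 1 := by rw [hγdef, div_lt_one hna]; linarith
  have hγe : γ * (n + α) = β - n + 1 := div_mul_cancel₀ _ hna.ne'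
  have hγγ : 0 < γ * (1 - γ) := mul_pos hγ0 (by linarith)
  set P : ℝ := D ^ 2 + 1 with hP
  have hP0 : 0 < P := by positivity
  set G : ℝ := (4 * γ ^ 2 * P + 1) / (γ * (1 - γ)) + 1 with hG
  have hG1 : 1 ≤ G := by
    have : 0 ≤ (4 * γ ^ 2 * P + 1) / (γ * (1 - γ)) := by positivity
    linarith
  have hGγ : 4 * γ ^ 2 * P + 1 ≤ γ * (1 - γ) * G := by
    have h1 : γ * (1 - γ) * ((4 * γ ^ 2 * P + 1) / (γ * (1 - γ))) = 4 * γ ^ 2 * P + 1 :=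
      mul_div_cancel₀ _ hγγ.ne'
    have h2 : γ * (1 - γ) * G
        = γ * (1 - γ) * ((4 * γ ^ 2 * P + 1) / (γ * (1 - γ))) + γ * (1 - γ) := by
      rw [hG]; ring
    rw [h2, h1]; linarith
  set M : ℝ := A + 1 with hM
  have hM0 : 0 < M := by linarith
  refine ⟨M * (P + G), by positivity, ?_⟩
  intro Ω F u ho hc hb hne hD hF hu y hy
  obtain ⟨-, -, hF3⟩ := hF
  obtain ⟨hu1, -, hu2, hu3, hu4, hu5⟩ := hu
  obtain ⟨p, hp, e, he, hyp, hpos, hdist⟩ := support_plane hn Ω ho hc hb y hy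
  -- the barrier
  set g : EuclideanSpace ℝ (Fin n) → ℝ := fun x => P + G + (inner ℝ e (x - p)) ^ 2 - ‖x - p‖ ^ 2
    with hg
  set w : EuclideanSpace ℝ (Fin n) → ℝ := fun x => -(M * (inner ℝ e (x - p)) ^ γ * g x) with hw
  have hcl : ∀ x ∈ closure Ω, 0 ≤ inner ℝ e (x - p) := by
    intro x hx
    have hcs : IsClosed {x : EuclideanSpace ℝ (Fin n) | 0 ≤ inner ℝ e (x - p)} :=
      isClosed_le continuous_const (by fun_prop)
    exact closure_minimal (fun z hz => (hpos z hz).le) hcs hx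
  have hnorm : ∀ x ∈ closure Ω, ‖x - p‖ ^ 2 ≤ P := by
    intro x hx
    have h1 : dist x p ≤ Metric.diam (closure Ω) :=
      Metric.dist_le_diam_of_mem hb.closure hx hp.1
    rw [Metric.diam_closure, dist_eq_norm] at h1
    have h2 : ‖x - p‖ ≤ D := h1.trans hD
    have h3 : ‖x - p‖ ^ 2 ≤ D ^ 2 := pow_le_pow_left₀ (norm_nonneg _) h2 2
    linarith
  have hgG : ∀ x ∈ closure Ω, G ≤ g x := by
    intro x hx
    have := hnorm x hx
    have := sq_nonneg (inner ℝ e (x - p))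
    simp only [hg]
    linarith
  have hwcont : ContinuousOn (fun x => u x - w x) (closure Ω) := by
    refine hu1.sub (Continuous.continuousOn ?_)
    have h1 : Continuous fun x : EuclideanSpace ℝ (Fin n) => (inner ℝ e (x - p)) ^ γ :=
      Continuous.rpow_const (by fun_prop) (fun _ => Or.inr hγ0.le)
    have h2 : Continuous g := by
      simp only [hg]; fun_prop
    exact ((continuous_const.mul h1).mul h2).neg
  have hcs : ∀ x, (inner ℝ e (x - p)) ^ 2 ≤ ‖x - p‖ ^ 2 := by
    intro x
    have := abs_real_inner_le_norm e (x - p)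
    rw [he, one_mul] at this
    exact sq_le_sq' (by linarith [neg_abs_le (inner ℝ e (x - p))]) ((le_abs_self _).trans this)
  have main : w y ≤ u y := by
    by_contra hlt
    push Not at hlt
    have hcomp : IsCompact (closure Ω) := hb.isCompact_closure
    obtain ⟨z, hz, hzmin⟩ := hcomp.exists_isMinOn ⟨y, subset_closure hy⟩ hwcont
    have hzlt : u z - w z < 0 := by
      have h1 : u z - w z ≤ u y - w y := hzmin (subset_closure hy)
      linarith
    have hzΩ : z ∈ Ω := by
      by_contra hzn
      have hzf : z ∈ frontier Ω := ⟨hz, by rwa [ho.interior_eq]⟩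
      have h1 := hu4 z hzf
      have h2 : w z ≤ 0 := by
        have a1 := Real.rpow_nonneg (hcl z hz) γ
        have a2 := hgG z hz
        have : 0 ≤ M * (inner ℝ e (z - p)) ^ γ * g z := by
          have : 0 ≤ g z := by linarith
          positivity
        simp only [hw]
        linarith
      linarith
    have hloc : IsLocalMin (fun x => u x - w x) z := by
      filter_upwards [ho.mem_nhds hzΩ] with x hx
      exact hzmin (subset_closure hx)
    set s := inner ℝ e (z - p) with hs
    have hs0 : 0 < s := hpos z hzΩ
    have hud : ContDiffAt ℝ 2 u z := hu2.contDiffAt (ho.mem_nhds hzΩ)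
    have hsγ : 0 < s ^ γ := Real.rpow_pos_of_pos hs0 _
    have hsγ2 : 0 < s ^ (γ - 2) := Real.rpow_pos_of_pos hs0 _
    have e1 : s ^ (γ - 1) = s ^ (γ - 2) * s := by
      rw [← Real.rpow_add_one hs0.ne']; congr 1; ring
    have e2 : s ^ γ = s ^ (γ - 2) * s ^ 2 := by
      rw [← Real.rpow_natCast, ← Real.rpow_add hs0]; congr 1; norm_num
    have hlow := hess_det_lower u z e hud he (M * s ^ (γ - 2)) (M * s ^ γ) (by positivity)
      (by positivity) ?_
    · rw [hu5 z hzΩ] at hlow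
      have hFz := (hF3 z hzΩ (u z) (hu3 z hzΩ)).2
      have hW : M * s ^ γ ≤ |u z| := by
        rw [abs_of_neg (hu3 z hzΩ)]
        have h1 : u z < w z := by linarith
        have h2 : w z = -(M * s ^ γ * g z) := rfl
        have h3 : 1 ≤ g z := hG1.trans (hgG z hz)
        have h4 : M * s ^ γ * 1 ≤ M * s ^ γ * g z := by gcongr
        linarith
      refine final_ineq n A α β γ M s |u z| (Metric.infDist z (frontier Ω)) hA hα hn hβ hγe hM hs0
        Metric.infDist_nonneg (hdist z hzΩ) hW (hlow.trans ?_)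
      gcongr
    · intro v
      set σ := inner ℝ e v with hσ
      set k := ‖v‖ ^ 2 - σ ^ 2 with hk
      set b := s * σ - inner ℝ (z - p) v with hbdef
      obtain ⟨q', hq1, hq2⟩ := barrier_deriv M γ s σ (g z) b k hs0
      have hline : ∀ t : ℝ, w (z + t • v)
          = -(M * (s + t * σ) ^ γ * (g z + 2 * t * b - t ^ 2 * k)) := by
        intro t
        have a0 : z + t • v - p = (z - p) + t • v := by abel
        have a1 : inner ℝ e (z + t • v - p) = s + t * σ := by
          rw [a0, inner_add_right, real_inner_smul_right]
        have a2 : ‖z + t • v - p‖ ^ 2 = ‖z - p‖ ^ 2 + 2 * t * inner ℝ (z - p) v + t ^ 2 * ‖v‖ ^ 2 := by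
          rw [a0, norm_add_sq_real, real_inner_smul_right, norm_smul, mul_pow, Real.norm_eq_abs, sq_abs]
          ring
        simp only [hw, hg]
        rw [a1, a2]
        simp only [hbdef, hk, hs]
        ring
      have hmin : IsLocalMin (fun t : ℝ => u (z + t • v)
          - (fun t : ℝ => -(M * (s + t * σ) ^ γ * (g z + 2 * t * b - t ^ 2 * k))) t) 0 := by
        have hcont : Filter.Tendsto (fun t : ℝ => z + t • v) (nhds 0) (nhds z) := by
          have : Continuous fun t : ℝ => z + t • v := by fun_prop
          simpa using this.tendsto 0
        have h1 := hcont.eventually hloc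
        filter_upwards [h1] with t ht
        simp only [← hline]
        simpa using ht
      have hge := hess_ge u z v hud _ q' _ hq1 hq2 hmin
      refine le_trans ?_ hge
      have hb2 : b ^ 2 ≤ P * k := by
        have c1 : inner ℝ ((z - p) - s • e) (v - σ • e) = -b := by
          rw [inner_sub_left, inner_sub_right, inner_sub_right, real_inner_smul_left,
            real_inner_smul_right, real_inner_smul_right, real_inner_smul_left,
            real_inner_self_eq_norm_sq, he, real_inner_comm e (z - p), ← hs, ← hσ, hbdef]
          ring
        have c2 : ‖(z - p) - s • e‖ ^ 2 = ‖z - p‖ ^ 2 - s ^ 2 := by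
          rw [norm_sub_sq_real, real_inner_smul_right, real_inner_comm, ← hs, norm_smul, he,
            mul_one, Real.norm_eq_abs, sq_abs]
          ring
        have c3 : ‖v - σ • e‖ ^ 2 = k := by
          rw [norm_sub_sq_real, real_inner_smul_right, real_inner_comm, ← hσ, norm_smul, he,
            mul_one, Real.norm_eq_abs, sq_abs]
          ring
        have c4 := abs_real_inner_le_norm ((z - p) - s • e) (v - σ • e)
        rw [c1, abs_neg] at c4
        have c5 := pow_le_pow_left₀ (abs_nonneg b) c4 2
        rw [sq_abs, mul_pow, c2, c3] at c5
        have c6 : 0 ≤ k := by rw [← c3]; positivity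
        have c7 := hnorm z hz
        refine c5.trans (mul_le_mul_of_nonneg_right ?_ c6)
        have c8 := sq_nonneg s
        linarith only [c7, c8]
      have hgz : 4 * γ ^ 2 * P + 1 ≤ γ * (1 - γ) * g z :=
        hGγ.trans (mul_le_mul_of_nonneg_left (hgG z hz) hγγ.le)
      have hal := alg_ineq γ s σ (g z) b k P (s ^ (γ - 2)) hP0 hsγ2.le hgz hb2
      rw [e1, e2]
      have := mul_le_mul_of_nonneg_left hal hM0.le
      linarith only [this]
  have hsy := hpos y hy
  have hsd : inner ℝ e (y - p) ≤ Metric.infDist y (frontier Ω) := by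
    rw [hyp]
    have := real_inner_le_norm e (y - p)
    rwa [he, one_mul] at this
  rw [abs_of_neg (hu3 y hy)]
  have hgy : g y ≤ P + G := by
    have := hcs y
    simp only [hg]
    linarith
  have hr := Real.rpow_le_rpow hsy.le hsd hγ0.le
  have hr0 := Real.rpow_nonneg hsy.le γ
  have hwy : w y = -(M * (inner ℝ e (y - p)) ^ γ * g y) := rfl
  calc -u y ≤ M * (inner ℝ e (y - p)) ^ γ * g y := by linarith
    _ ≤ M * (inner ℝ e (y - p)) ^ γ * (P + G) := by gcongr
    _ ≤ M * (Metric.infDist y (frontier Ω)) ^ γ * (P + G) := by gcongr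
    _ = _ := by ring
end

section
/- Let Ω be a bounded open convex domain in ℝⁿ (n ≥ 2). Suppose F : Ω × (−∞,0) → ℝ is continuous and non-decreasing in its second argument, and there are constants A > 0, α ≥ 0, β ≥ n+1 such that 0 < F(x,t) ≤ A·d_x^{β−n−1}·|t|^{−α} for all x ∈ Ω and t < 0. Let γ₁ = (β−n+1)/(n+α) if β < α + 2n − 1, and let γ₁ be any number in (0,1) if β ≥ α + 2n − 1. Then every classical solution u of det D²u = F(x,u) in Ω with u = 0 on ∂Ω is γ₁-Hölder continuous on the closure of Ω, with C^{γ₁}-norm bounded by a constant depending only on α, β, A, diam Ω and n. -/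
section Helpers
open Matrix

lemma det_ge_pow {n : ℕ} (N : Matrix (Fin n) (Fin n) ℝ) (hN : N.IsHermitian) (c : ℝ) (hc : 0 ≤ c)
    (h : ∀ v : Fin n → ℝ, c * (v ⬝ᵥ v) ≤ v ⬝ᵥ (N *ᵥ v)) : c ^ n ≤ N.det := by
  rw [hN.det_eq_prod_eigenvalues]
  have : ∀ i, c ≤ hN.eigenvalues i := by
    intro i
    have h1 := h (hN.eigenvectorBasis i).ofLp
    rw [hN.mulVec_eigenvectorBasis i, dotProduct_smul] at h1
    have h2 : (hN.eigenvectorBasis i).ofLp ⬝ᵥ (hN.eigenvectorBasis i).ofLp = 1 := by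
      have h3 := hN.eigenvectorBasis.orthonormal.1 i
      have h4 := EuclideanSpace.real_norm_sq_eq (hN.eigenvectorBasis i)
      rw [h3] at h4
      simp only [dotProduct, ← sq]
      linarith
    rw [h2] at h1
    simpa using h1
  calc c ^ n = ∏ i : Fin n, c := by simp
    _ ≤ _ := by
      simpa using Finset.prod_le_prod (s := Finset.univ) (fun i _ => hc) (fun i _ => this i)

lemma det_ge_special {n : ℕ} (H : Matrix (Fin n) (Fin n) ℝ) (hH : H.IsHermitian) (e : Fin n → ℝ)
    (he : e ⬝ᵥ e = 1) (s κ : ℝ) (hs : 0 < s) (hκ : 0 ≤ κ)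
    (h : ∀ v : Fin n → ℝ, κ * ((e ⬝ᵥ v) ^ 2 + s ^ 2 * (v ⬝ᵥ v - (e ⬝ᵥ v) ^ 2)) ≤ v ⬝ᵥ (H *ᵥ v)) :
    (κ * s ^ 2) ^ n ≤ s ^ 2 * H.det := by
  set T : Matrix (Fin n) (Fin n) ℝ := 1 + vecMulVec ((s - 1) • e) e with hT
  have hTT : Tᵀ = T := by
    rw [hT, transpose_add, transpose_one, transpose_vecMulVec]
    congr 1
    ext i j; simp [vecMulVec_apply]; ring
  have hTdet : T.det = s := by
    rw [hT, vecMulVec_eq Unit, det_one_add_replicateCol_mul_replicateRow, dotProduct_smul, he]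
    simp
  have hTv : ∀ v, T *ᵥ v = v + ((s - 1) * (e ⬝ᵥ v)) • e := by
    intro v
    rw [hT, add_mulVec, one_mulVec, vecMulVec_mulVec]
    ext i; simp; ring
  have key := det_ge_pow (T * H * T) (by
      have := isHermitian_conjTranspose_mul_mul T hH
      rwa [conjTranspose_eq_transpose_of_trivial, hTT] at this) (κ * s ^ 2) (by positivity) (by
      intro v
      have h1 := h (T *ᵥ v)
      have h2 : v ⬝ᵥ ((T * H * T) *ᵥ v) = (T *ᵥ v) ⬝ᵥ (H *ᵥ (T *ᵥ v)) := by
        rw [← mulVec_mulVec, ← mulVec_mulVec, dotProduct_mulVec, ← mulVec_transpose, hTT]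
      rw [h2]
      refine le_trans (le_of_eq ?_) h1
      rw [hTv]
      simp only [dotProduct_add, add_dotProduct, dotProduct_smul, smul_dotProduct, he, smul_eq_mul, dotProduct_comm v e]
      ring)
  rw [det_mul, det_mul, hTdet] at key
  nlinarith [key]

open Filter Topology

lemma second_deriv_nonneg (f f' : ℝ → ℝ) (f'' : ℝ) (hf : ∀ᶠ t in 𝓝 (0:ℝ), HasDerivAt f (f' t) t)
    (hf' : HasDerivAt f' f'' 0) (hmin : IsLocalMin f 0) : 0 ≤ f'' := by
  by_contra hneg
  push Not at hneg
  have e1 : deriv f =ᶠ[𝓝 0] f' := hf.mono fun t ht => ht.deriv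
  have h0 : deriv f 0 = 0 := hmin.deriv_eq_zero
  have h2 : deriv (deriv f) 0 = f'' := by rw [e1.deriv_eq]; exact hf'.deriv
  have hmax := isLocalMax_of_deriv_deriv_neg (h2 ▸ hneg) h0 hf.self_of_nhds.continuousAt
  have hconst : f =ᶠ[𝓝 0] fun _ => f 0 := by
    filter_upwards [hmax, hmin] with t h1 h2 using le_antisymm h1 h2
  have : deriv (deriv f) 0 = 0 := by
    have : deriv f =ᶠ[𝓝 0] fun _ => 0 := by
      filter_upwards [hconst.eventually_nhds] with t ht
      rw [Filter.EventuallyEq.deriv_eq (f := fun _ => f 0) ht]; simp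
    rw [this.deriv_eq]; simp
  linarith

lemma hess_line {E : Type*} [NormedAddCommGroup E] [NormedSpace ℝ E] (u : E → ℝ) (x ξ : E)
    (hu : ContDiffAt ℝ 2 u x) :
    (∀ᶠ t in 𝓝 (0:ℝ), HasDerivAt (fun t : ℝ => u (x + t • ξ)) (fderiv ℝ u (x + t • ξ) ξ) t) ∧
    HasDerivAt (fun t : ℝ => fderiv ℝ u (x + t • ξ) ξ) (iteratedFDeriv ℝ 2 u x ![ξ, ξ]) 0 := by
  have hl : ∀ t : ℝ, HasDerivAt (fun t : ℝ => x + t • ξ) ξ t := by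
    intro t
    simpa using ((hasDerivAt_id t).smul_const ξ).const_add x
  have hc : Tendsto (fun t : ℝ => x + t • ξ) (𝓝 0) (𝓝 x) := by
    have := (hl 0).continuousAt.tendsto
    simpa using this
  constructor
  · have h1 : ∀ᶠ y in 𝓝 x, ContDiffAt ℝ 2 u y := hu.eventually (by simp)
    filter_upwards [hc.eventually h1] with t ht
    exact (ht.differentiableAt (by simp)).hasFDerivAt.comp_hasDerivAt t (hl t)
  · have h2 : DifferentiableAt ℝ (fderiv ℝ u) x :=
      (hu.fderiv_right (m := 1) (by norm_num)).differentiableAt (by simp)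
    have h3 : HasFDerivAt (fderiv ℝ u) (fderiv ℝ (fderiv ℝ u) x) (x + (0:ℝ) • ξ) := by
      simpa using h2.hasFDerivAt
    have h4 := h3.comp_hasDerivAt (0:ℝ) (hl 0)
    have h5 := h4.clm_apply (hasDerivAt_const (0:ℝ) ξ)
    rw [iteratedFDeriv_two_apply]
    simpa using h5

lemma barrier_line (M γ s σ w m τ K : ℝ) (hs : 0 < s) :
    (∀ᶠ t in 𝓝 (0:ℝ), HasDerivAt (fun t : ℝ => M * ((s + t * σ) ^ γ * (w + 2 * t * m + t ^ 2 * τ - K)))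
      (M * ((σ * γ * (s + t * σ) ^ (γ - 1)) * (w + 2 * t * m + t ^ 2 * τ - K) + (s + t * σ) ^ γ * (2 * m + 2 * t * τ))) t) ∧
    HasDerivAt (fun t : ℝ => M * ((σ * γ * (s + t * σ) ^ (γ - 1)) * (w + 2 * t * m + t ^ 2 * τ - K) + (s + t * σ) ^ γ * (2 * m + 2 * t * τ)))
      (M * (s ^ (γ - 2) * (γ * (1 - γ) * σ ^ 2 * (K - w) + 4 * γ * s * σ * m + 2 * τ * s ^ 2))) 0 := by
  have hl : ∀ t : ℝ, HasDerivAt (fun t : ℝ => s + t * σ) σ t := by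
    intro t
    simpa using ((hasDerivAt_id t).mul_const σ).const_add s
  have hq : ∀ t : ℝ, HasDerivAt (fun t : ℝ => w + 2 * t * m + t ^ 2 * τ - K) (2 * m + 2 * t * τ) t := by
    intro t
    have h1 := ((((hasDerivAt_id t).const_mul 2).mul_const m).const_add w).add ((hasDerivAt_pow 2 t).mul_const τ)
    have := h1.sub_const K
    simpa using this
  have hq' : ∀ t : ℝ, HasDerivAt (fun t : ℝ => 2 * m + 2 * t * τ) (2 * τ) t := by
    intro t
    simpa using (((hasDerivAt_id t).const_mul 2).mul_const τ).const_add (2 * m)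
  have hpos : ∀ᶠ t in 𝓝 (0:ℝ), 0 < s + t * σ := by
    have := (hl 0).continuousAt.tendsto
    simp only [zero_mul, add_zero] at this
    exact this.eventually (lt_mem_nhds hs)
  constructor
  · filter_upwards [hpos] with t ht
    exact (((hl t).rpow_const (p := γ) (Or.inl ht.ne')).mul (hq t)).const_mul M
  · have ht : s + 0 * σ ≠ 0 := by simpa using hs.ne'
    have h1 := (hl 0).rpow_const (p := γ) (Or.inl ht)
    have h2 := (hl 0).rpow_const (p := γ - 1) (Or.inl ht)
    have h3 := (((h2.const_mul (σ * γ)).mul (hq 0)).add (h1.mul (hq' 0))).const_mul M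
    refine HasDerivAt.congr_deriv h3 ?_
    have e1 : s ^ (γ - 1) = s ^ (γ - 2) * s := by
      rw [← Real.rpow_add_one hs.ne']; ring_nf
    have e2 : s ^ γ = s ^ (γ - 2) * s ^ 2 := by
      rw [← Real.rpow_add_natCast hs.ne']; norm_num
    have e3 : γ - 1 - 1 = γ - 2 := by ring
    simp only [zero_mul, add_zero, mul_zero, e3]
    rw [e1, e2]
    ring

lemma hess_quad {n : ℕ} (u : EuclideanSpace ℝ (Fin n) → ℝ) (x : EuclideanSpace ℝ (Fin n))
    (v : Fin n → ℝ) :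
    v ⬝ᵥ ((Matrix.of fun i j : Fin n =>
    iteratedFDeriv ℝ 2 u x ![EuclideanSpace.single i (1 : ℝ), EuclideanSpace.single j (1 : ℝ)]) *ᵥ v)
      = iteratedFDeriv ℝ 2 u x ![WithLp.toLp 2 v, WithLp.toLp 2 v] := by
  have hv : (WithLp.toLp 2 v : EuclideanSpace ℝ (Fin n)) = ∑ i, v i • EuclideanSpace.single i (1:ℝ) := by
    ext j; simp [Finset.sum_apply, Pi.single_apply]
  rw [iteratedFDeriv_two_apply]
  simp only [Matrix.cons_val_zero, Matrix.cons_val_one]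
  rw [hv]
  simp only [map_sum, map_smul, _root_.sum_apply, _root_.smul_apply, smul_eq_mul,
    dotProduct, mulVec, Matrix.of_apply, iteratedFDeriv_two_apply, Matrix.cons_val_zero, Matrix.cons_val_one, Finset.mul_sum]
  rw [Finset.sum_comm]
  refine Finset.sum_congr rfl fun i _ => Finset.sum_congr rfl fun j _ => ?_
  ring

lemma hess_herm {n : ℕ} (u : EuclideanSpace ℝ (Fin n) → ℝ) (x : EuclideanSpace ℝ (Fin n))
    (hu : ContDiffAt ℝ 2 u x) :
    (Matrix.of fun i j : Fin n =>
    iteratedFDeriv ℝ 2 u x ![EuclideanSpace.single i (1 : ℝ), EuclideanSpace.single j (1 : ℝ)]).IsHermitian := by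
  ext i j
  have := hu.isSymmSndFDerivAt (by simp)
  simp [iteratedFDeriv_two_apply]
  exact this _ _

lemma cs_proj {E : Type*} [NormedAddCommGroup E] [InnerProductSpace ℝ E] (e y ξ : E) (he : ‖e‖ = 1) :
    (inner ℝ y ξ - inner ℝ y e * inner ℝ ξ e) ^ 2 ≤
      (‖y‖ ^ 2 - (inner ℝ y e) ^ 2) * (‖ξ‖ ^ 2 - (inner ℝ ξ e) ^ 2) ∧
    0 ≤ ‖y‖ ^ 2 - (inner ℝ y e) ^ 2 ∧ 0 ≤ ‖ξ‖ ^ 2 - (inner ℝ ξ e) ^ 2 := by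
  have hee : inner ℝ e e = (1:ℝ) := by rw [real_inner_self_eq_norm_sq, he]; norm_num
  have h0 : ∀ z w : E, inner ℝ (z - (inner ℝ z e : ℝ) • e) (w - (inner ℝ w e : ℝ) • e) =
      inner ℝ z w - inner ℝ z e * inner ℝ w e := by
    intro z w
    simp only [inner_sub_left, inner_sub_right, real_inner_smul_left, real_inner_smul_right, hee, real_inner_comm e]
    ring
  have h1 := real_inner_mul_inner_self_le (y - (inner ℝ y e : ℝ) • e) (ξ - (inner ℝ ξ e : ℝ) • e)
  have h2 := real_inner_self_nonneg (F := E) (x := y - (inner ℝ y e : ℝ) • e)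
  have h3 := real_inner_self_nonneg (F := E) (x := ξ - (inner ℝ ξ e : ℝ) • e)
  simp only [h0] at h1 h2 h3
  simp only [real_inner_self_eq_norm_sq, ← sq] at h1 h2 h3
  exact ⟨h1, h2, h3⟩

/-- Exists a unit inner supporting normal. -/
lemma exists_normal {n : ℕ} {Ω : Set (EuclideanSpace ℝ (Fin n))} (ho : IsOpen Ω) (hc : Convex ℝ Ω)
    (hne : Ω.Nonempty) {p : EuclideanSpace ℝ (Fin n)} (hp : p ∉ Ω) :
    ∃ e : EuclideanSpace ℝ (Fin n), ‖e‖ = 1 ∧ ∀ x ∈ Ω, 0 < inner ℝ (x - p) e := by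
  obtain ⟨f, hf⟩ := geometric_hahn_banach_point_open hc ho hp
  set g := (InnerProductSpace.toDual ℝ _).symm f with hg
  have hgx : ∀ x, inner ℝ x g = f x := by
    intro x
    rw [real_inner_comm, hg, InnerProductSpace.toDual_symm_apply]
  obtain ⟨x₀, hx₀⟩ := hne
  have hg0 : g ≠ 0 := by
    intro h
    have h1 := hf x₀ hx₀
    rw [← hgx, ← hgx, h] at h1
    simp at h1
  refine ⟨‖g‖⁻¹ • g, ?_, ?_⟩
  · rw [norm_smul, norm_inv, norm_norm, inv_mul_cancel₀ (norm_ne_zero_iff.2 hg0)]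
  · intro x hx
    rw [real_inner_smul_right, hgx, map_sub]
    have := hf x hx
    have := norm_pos_iff.2 hg0
    apply mul_pos (by positivity) (by linarith)

lemma infDist_le_of_normal {n : ℕ} {Ω : Set (EuclideanSpace ℝ (Fin n))}
    {p e : EuclideanSpace ℝ (Fin n)} (he : ‖e‖ = 1) (h : ∀ x ∈ Ω, 0 < inner ℝ (x - p) e)
    {x : EuclideanSpace ℝ (Fin n)} (hx : x ∈ Ω) :
    Metric.infDist x (frontier Ω) ≤ inner ℝ (x - p) e := by
  have hee : inner ℝ e e = (1:ℝ) := by rw [real_inner_self_eq_norm_sq, he]; norm_num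
  have hz : x - (inner ℝ (x - p) e : ℝ) • e ∉ Ω := by
    intro hmem
    have h1 := h _ hmem
    rw [sub_right_comm, inner_sub_left, real_inner_smul_left, hee] at h1
    simp at h1
  have hne : Ω ≠ Set.univ := fun hu => hz (hu ▸ Set.mem_univ _)
  obtain ⟨y, hy, hyd⟩ := exists_mem_frontier_infDist_compl_eq_dist hx hne
  calc _ ≤ dist x y := Metric.infDist_le_dist_of_mem hy
    _ = Metric.infDist x Ωᶜ := hyd.symm
    _ ≤ dist x (x - (inner ℝ (x - p) e : ℝ) • e) := Metric.infDist_le_dist_of_mem hz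
    _ = _ := by
      rw [dist_eq_norm, sub_sub_cancel, norm_smul, he, mul_one, Real.norm_of_nonneg (h x hx).le]

set_option maxHeartbeats 2000000 in
/-- The differential inequality at an interior touching point. -/
lemma touching {n : ℕ} (u : EuclideanSpace ℝ (Fin n) → ℝ) (p e x : EuclideanSpace ℝ (Fin n))
    (M γ K D : ℝ) (hM : 0 < M) (hγ : 0 < γ)
    (hK : 1 + 4 * γ ^ 2 * D ^ 2 ≤ γ * (1 - γ) * (K - D ^ 2)) (hγ1 : γ < 1)
    (he : ‖e‖ = 1) (hs : 0 < inner ℝ (x - p) e) (hD : ‖x - p‖ ≤ D)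
    (hu : ContDiffAt ℝ 2 u x)
    (hmin : IsLocalMin (fun y => u y - M * ((inner ℝ (y - p) e : ℝ) ^ γ *
      (‖y - p‖ ^ 2 - (inner ℝ (y - p) e : ℝ) ^ 2 - K))) x) :
    (M * (inner ℝ (x - p) e : ℝ) ^ γ) ^ n ≤ (inner ℝ (x - p) e : ℝ) ^ 2 * hessianDet u x := by
  set s : ℝ := inner ℝ (x - p) e with hsdef
  have main := det_ge_special _ (hess_herm u x hu) e.ofLp (by
      have := EuclideanSpace.real_norm_sq_eq e
      rw [he] at this
      simp only [dotProduct, ← sq]; linarith) s (M * s ^ (γ - 2)) hs (by positivity) (by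
    intro v
    rw [hess_quad]
    set ξ : EuclideanSpace ℝ (Fin n) := WithLp.toLp 2 v with hξ
    have hvv : v ⬝ᵥ v = ‖ξ‖ ^ 2 := by
      rw [EuclideanSpace.real_norm_sq_eq]
      simp [dotProduct, ← sq, hξ]
    have hev : e.ofLp ⬝ᵥ v = inner ℝ ξ e := by
      rw [EuclideanSpace.inner_eq_star_dotProduct]; simp [hξ]
    rw [hvv, hev]
    set σ : ℝ := inner ℝ ξ e with hσ
    obtain ⟨hcs, hw0, hτ0⟩ := cs_proj e (x - p) ξ he
    rw [← hsdef, ← hσ] at hcs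
    rw [← hsdef] at hw0
    rw [← hσ] at hτ0
    set m : ℝ := inner ℝ (x - p) ξ - s * σ with hm
    set w : ℝ := ‖x - p‖ ^ 2 - s ^ 2 with hw
    set τ : ℝ := ‖ξ‖ ^ 2 - σ ^ 2 with hτ
    have hwD : w ≤ D ^ 2 := by
      have : ‖x - p‖ ^ 2 ≤ D ^ 2 := by gcongr
      nlinarith [sq_nonneg s]
    obtain ⟨a1, a2⟩ := hess_line u x ξ hu
    obtain ⟨b1, b2⟩ := barrier_line M γ s σ w m τ K hs
    have hloc : IsLocalMin (fun t : ℝ => u (x + t • ξ) -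
        M * ((s + t * σ) ^ γ * (w + 2 * t * m + t ^ 2 * τ - K))) 0 := by
      have hc : Tendsto (fun t : ℝ => x + t • ξ) (𝓝 0) (𝓝 x) := by
        have : Continuous (fun t : ℝ => x + t • ξ) := by fun_prop
        simpa using this.tendsto 0
      have e1 : ∀ t : ℝ, (inner ℝ (x + t • ξ - p) e : ℝ) = s + t * σ := by
        intro t
        rw [add_sub_right_comm, inner_add_left, real_inner_smul_left]
      have e2 : ∀ t : ℝ, ‖x + t • ξ - p‖ ^ 2 - (s + t * σ) ^ 2 = w + 2 * t * m + t ^ 2 * τ := by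
        intro t
        rw [add_sub_right_comm, norm_add_sq_real, real_inner_smul_right, norm_smul, mul_pow, Real.norm_eq_abs, sq_abs]
        simp only [hw, hm, hτ]; ring
      have := hc.eventually hmin
      filter_upwards [this] with t ht
      simp only [e1, e2] at ht
      rw [← hsdef, ← hw] at ht
      simpa using ht
    have h2 := second_deriv_nonneg _ _ _ (by
      filter_upwards [a1, b1] with t h1 h2 using h1.sub h2) (a2.sub b2) hloc
    have h3 : σ ^ 2 + s ^ 2 * τ ≤ γ * (1 - γ) * σ ^ 2 * (K - w) + 4 * γ * s * σ * m + 2 * τ * s ^ 2 := by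
      have h5 : 0 ≤ γ * (1 - γ) := mul_nonneg hγ.le (by linarith)
      have h4 : 1 + 4 * γ ^ 2 * w ≤ γ * (1 - γ) * (K - w) := by
        nlinarith [mul_le_mul_of_nonneg_left hwD h5, mul_le_mul_of_nonneg_left hwD (sq_nonneg γ)]
      have h6 := mul_le_mul_of_nonneg_left h4 (sq_nonneg σ)
      have h7 : -(s ^ 2 * τ + 4 * γ ^ 2 * w * σ ^ 2) ≤ 4 * γ * s * σ * m := by
        have h8 : (4 * γ * s * σ * m) ^ 2 ≤ (s ^ 2 * τ + 4 * γ ^ 2 * w * σ ^ 2) ^ 2 := by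
          have h9 := mul_le_mul_of_nonneg_left hcs (sq_nonneg (4 * γ * s * σ))
          nlinarith [sq_nonneg (s ^ 2 * τ - 4 * γ ^ 2 * w * σ ^ 2)]
        have h10 : 0 ≤ s ^ 2 * τ + 4 * γ ^ 2 * w * σ ^ 2 := by positivity
        have := abs_le_of_sq_le_sq h8 h10
        exact (abs_le.1 this).1
      nlinarith
    have h4 : 0 < M * s ^ (γ - 2) := by positivity
    nlinarith [mul_le_mul_of_nonneg_left h3 h4.le])
  have e2 : s ^ γ = s ^ (γ - 2) * s ^ 2 := by
    rw [← Real.rpow_add_natCast hs.ne']; norm_num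
  rw [e2, ← mul_assoc]
  exact main

/-- Lower barrier estimate. -/
lemma barrier_bound {n : ℕ} (hn : 2 ≤ n) (A α β D γ K M : ℝ) (hA : 0 < A) (hα : 0 ≤ α)
    (hβ : (n : ℝ) + 1 ≤ β) (hD : 1 ≤ D) (hγ : 0 < γ) (hγ1 : γ < 1)
    (hθ : 0 ≤ β - n + 1 - (n + α) * γ)
    (hK : 1 + 4 * γ ^ 2 * D ^ 2 ≤ γ * (1 - γ) * (K - D ^ 2))
    (hM1 : 1 ≤ M) (hM : A * D ^ (β - n + 1 - (n + α) * γ) < M)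
    (Ω : Set (EuclideanSpace ℝ (Fin n))) (F : EuclideanSpace ℝ (Fin n) → ℝ → ℝ)
    (u : EuclideanSpace ℝ (Fin n) → ℝ)
    (ho : IsOpen Ω) (hc : Convex ℝ Ω) (hb : Bornology.IsBounded Ω) (hne : Ω.Nonempty)
    (hdiam : Metric.diam Ω ≤ D) (hF : SatisfiesFCond Ω F A α β) (hu : IsClassicalSolution Ω F u)
    (p : EuclideanSpace ℝ (Fin n)) (hp : p ∈ frontier Ω) (x : EuclideanSpace ℝ (Fin n)) (hx : x ∈ Ω) :
    |u x| ≤ M * K * ‖x - p‖ ^ γ := by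
  obtain ⟨hcont, -, hC2, hneg, hbd, hdet⟩ := hu
  obtain ⟨-, -, hFb⟩ := hF
  have hpΩ : p ∉ Ω := by
    rw [ho.frontier_eq] at hp; exact hp.2
  obtain ⟨e, he, hs⟩ := exists_normal ho hc hne hpΩ
  have hcomp : IsCompact (closure Ω) := hb.isCompact_closure
  have hdist : ∀ y ∈ closure Ω, ‖y - p‖ ≤ D := by
    intro y hy
    rw [← dist_eq_norm]
    refine (Metric.dist_le_diam_of_mem hb.closure hy (frontier_subset_closure hp)).trans ?_
    rwa [Metric.diam_closure]
  have hsc : ∀ y ∈ closure Ω, 0 ≤ (inner ℝ (y - p) e : ℝ) := by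
    intro y hy
    have hcl : IsClosed {y : EuclideanSpace ℝ (Fin n) | 0 ≤ (inner ℝ (y - p) e : ℝ)} :=
      isClosed_le continuous_const (by fun_prop)
    exact (closure_minimal (fun z hz => (hs z hz).le) hcl) hy
  have hγγ : 0 < γ * (1 - γ) := mul_pos hγ (by linarith)
  have hγγ1 : γ * (1 - γ) ≤ 1 := by nlinarith
  have hKD : 1 ≤ K - D ^ 2 := by
    by_contra hcon
    push Not at hcon
    have h1 : γ * (1 - γ) * (K - D ^ 2) < γ * (1 - γ) * 1 := mul_lt_mul_of_pos_left hcon hγγ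
    nlinarith [mul_nonneg (sq_nonneg γ) (sq_nonneg D)]
  have hQ : ∀ y ∈ closure Ω, ‖y - p‖ ^ 2 - (inner ℝ (y - p) e : ℝ) ^ 2 - K ≤ -1 := by
    intro y hy
    have : ‖y - p‖ ^ 2 ≤ D ^ 2 := by gcongr; exact hdist y hy
    nlinarith [sq_nonneg (inner ℝ (y - p) e : ℝ)]
  set v : EuclideanSpace ℝ (Fin n) → ℝ := fun y => M * ((inner ℝ (y - p) e : ℝ) ^ γ *
      (‖y - p‖ ^ 2 - (inner ℝ (y - p) e : ℝ) ^ 2 - K)) with hv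
  have hvcont : Continuous v := by
    have h1 : Continuous fun y : EuclideanSpace ℝ (Fin n) => (inner ℝ (y - p) e : ℝ) ^ γ :=
      Continuous.rpow_const (by fun_prop) (fun _ => Or.inr hγ.le)
    rw [hv]; fun_prop
  obtain ⟨x₀, hx₀, hmin⟩ := hcomp.exists_isMinOn (hne.mono subset_closure) (hcont.sub hvcont.continuousOn)
  have hvx : v x ≤ u x := by
    by_contra hlt
    push Not at hlt
    have hx₀lt : u x₀ < v x₀ := by
      have : u x₀ - v x₀ ≤ u x - v x := hmin (subset_closure hx)
      linarith
    have hx₀Ω : x₀ ∈ Ω := by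
      by_contra hnot
      have hfr : x₀ ∈ frontier Ω := by rw [ho.frontier_eq]; exact ⟨hx₀, hnot⟩
      have h1 := hbd x₀ hfr
      have h2 : v x₀ ≤ 0 := by
        have h3 := hQ x₀ hx₀
        have h4 := Real.rpow_nonneg (hsc x₀ hx₀) γ
        have : (inner ℝ (x₀ - p) e : ℝ) ^ γ *
          (‖x₀ - p‖ ^ 2 - (inner ℝ (x₀ - p) e : ℝ) ^ 2 - K) ≤ 0 :=
          mul_nonpos_of_nonneg_of_nonpos h4 (by linarith)
        exact mul_nonpos_of_nonneg_of_nonpos (by linarith) this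
      linarith
    have hΩn : Ω ∈ 𝓝 x₀ := ho.mem_nhds hx₀Ω
    have hloc : IsLocalMin (fun y => u y - v y) x₀ := by
      filter_upwards [hΩn] with y hy using hmin (subset_closure hy)
    have ht := touching u p e x₀ M γ K D (by linarith) hγ hK hγ1 he (hs x₀ hx₀Ω) (hdist x₀ hx₀)
      (hC2.contDiffAt hΩn) hloc
    rw [hdet x₀ hx₀Ω] at ht
    have hFx := (hFb x₀ hx₀Ω (u x₀) (hneg x₀ hx₀Ω)).2
    have hd := infDist_le_of_normal he hs hx₀Ω
    have hQx := hQ x₀ hx₀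
    have hvx₀ : v x₀ = M * ((inner ℝ (x₀ - p) e : ℝ) ^ γ *
      (‖x₀ - p‖ ^ 2 - (inner ℝ (x₀ - p) e : ℝ) ^ 2 - K)) := rfl
    have hsp := hs x₀ hx₀Ω
    have hsD : (inner ℝ (x₀ - p) e : ℝ) ≤ D := by
      have := real_inner_le_norm (x₀ - p) e
      rw [he, mul_one] at this
      exact this.trans (hdist x₀ hx₀)
    set s : ℝ := inner ℝ (x₀ - p) e with hsdef
    have hMp : 0 < M := by linarith
    have hsγ : 0 < s ^ γ := Real.rpow_pos_of_pos hsp γ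
    have habs : M * s ^ γ ≤ |u x₀| := by
      rw [abs_of_neg (hneg x₀ hx₀Ω)]
      have : M * s ^ γ * (‖x₀ - p‖ ^ 2 - s ^ 2 - K) ≤ M * s ^ γ * (-1) :=
        mul_le_mul_of_nonneg_left hQx (by positivity)
      nlinarith
    have h1 : |u x₀| ^ (-α) ≤ (M * s ^ γ) ^ (-α) :=
      Real.rpow_le_rpow_of_nonpos (by positivity) habs (by linarith)
    have h2 : Metric.infDist x₀ (frontier Ω) ^ (β - n - 1) ≤ s ^ (β - n - 1) :=
      Real.rpow_le_rpow Metric.infDist_nonneg hd (by linarith)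
    have h3 : F x₀ (u x₀) ≤ A * s ^ (β - n - 1) * (M * s ^ γ) ^ (-α) := by
      refine hFx.trans ?_
      gcongr
    have h4 : (M * s ^ γ) ^ n ≤ s ^ 2 * (A * s ^ (β - n - 1) * (M * s ^ γ) ^ (-α)) :=
      ht.trans (mul_le_mul_of_nonneg_left h3 (sq_nonneg s))
    have hMs : 0 < M * s ^ γ := by positivity
    have h5 : (M * s ^ γ) ^ ((n : ℝ) + α) ≤ A * s ^ (β - n + 1) := by
      have h6 := mul_le_mul_of_nonneg_right h4 (Real.rpow_nonneg hMs.le α)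
      have e1 : (M * s ^ γ) ^ n * (M * s ^ γ) ^ α = (M * s ^ γ) ^ ((n : ℝ) + α) := by
        rw [Real.rpow_add hMs, Real.rpow_natCast]
      have e2 : (M * s ^ γ) ^ (-α) * (M * s ^ γ) ^ α = 1 := by
        rw [← Real.rpow_add hMs]; simp
      have e3 : s ^ (β - n - 1) * s ^ 2 = s ^ (β - n + 1) := by
        rw [← Real.rpow_add_natCast hsp.ne']; congr 1; push_cast; ring
      rw [e1] at h6
      calc _ ≤ _ := h6
        _ = A * (s ^ (β - n - 1) * s ^ 2) * ((M * s ^ γ) ^ (-α) * (M * s ^ γ) ^ α) := by ring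
        _ = _ := by rw [e2, e3, mul_one]
    have e4 : (M * s ^ γ) ^ ((n : ℝ) + α) = M ^ ((n : ℝ) + α) * s ^ (((n : ℝ) + α) * γ) := by
      rw [Real.mul_rpow hMp.le hsγ.le, ← Real.rpow_mul hsp.le, mul_comm γ]
    have e5 : s ^ (β - n + 1) = s ^ (β - n + 1 - (n + α) * γ) * s ^ (((n : ℝ) + α) * γ) := by
      rw [← Real.rpow_add hsp]; congr 1; ring
    rw [e4, e5, ← mul_assoc] at h5
    have h7 := le_of_mul_le_mul_right h5 (Real.rpow_pos_of_pos hsp _)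
    have h8 : s ^ (β - n + 1 - (n + α) * γ) ≤ D ^ (β - n + 1 - (n + α) * γ) :=
      Real.rpow_le_rpow hsp.le hsD hθ
    have h9 : M ≤ M ^ ((n : ℝ) + α) := by
      apply Real.self_le_rpow_of_one_le hM1
      have : (2:ℝ) ≤ n := by exact_mod_cast hn
      linarith
    have h10 := mul_le_mul_of_nonneg_left h8 hA.le
    linarith
  rw [abs_of_neg (hneg x hx)]
  have hsx := hs x hx
  have hsle : (inner ℝ (x - p) e : ℝ) ≤ ‖x - p‖ := by
    have := real_inner_le_norm (x - p) e
    rwa [he, mul_one] at this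
  have hvx' : v x = M * ((inner ℝ (x - p) e : ℝ) ^ γ *
      (‖x - p‖ ^ 2 - (inner ℝ (x - p) e : ℝ) ^ 2 - K)) := rfl
  obtain ⟨-, hw, -⟩ := cs_proj e (x - p) (x - p) he
  set s : ℝ := inner ℝ (x - p) e with hsdef
  have hsγ : 0 < s ^ γ := Real.rpow_pos_of_pos hsx γ
  have h1 : M * s ^ γ * (-K) ≤ v x := by
    rw [hvx', ← mul_assoc]
    exact mul_le_mul_of_nonneg_left (by linarith) (by positivity)
  have h2 : s ^ γ ≤ ‖x - p‖ ^ γ := Real.rpow_le_rpow hsx.le hsle hγ.le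
  have hK0 : 0 ≤ M * K := mul_nonneg (by linarith) (by nlinarith [sq_nonneg D])
  nlinarith [mul_le_mul_of_nonneg_left h2 hK0]

/-- For a point `x` beyond `y`, convexity and vanishing boundary data. -/
lemma one_sided {n : ℕ} (C γ : ℝ) (hC : 0 ≤ C) (hγ1 : γ < 1)
    (Ω : Set (EuclideanSpace ℝ (Fin n))) (u : EuclideanSpace ℝ (Fin n) → ℝ)
    (ho : IsOpen Ω) (hb : Bornology.IsBounded Ω)
    (hconv : ConvexOn ℝ Ω u) (hneg : ∀ x ∈ Ω, u x < 0)
    (hbar : ∀ p ∈ frontier Ω, ∀ x ∈ Ω, |u x| ≤ C * ‖x - p‖ ^ γ)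
    (x : EuclideanSpace ℝ (Fin n)) (hx : x ∈ Ω) (y : EuclideanSpace ℝ (Fin n)) (hy : y ∈ Ω) (hxy : x ≠ y) :
    u x - u y ≤ C * ‖x - y‖ ^ γ := by
  have hr : 0 < ‖x - y‖ := norm_pos_iff.2 (sub_ne_zero.2 hxy)
  -- the exit parameter
  set g : ℝ → EuclideanSpace ℝ (Fin n) := fun t => y + t • (x - y) with hg
  have hgc : Continuous g := by rw [hg]; fun_prop
  set S : Set ℝ := {t | 0 ≤ t ∧ g t ∈ Ω} with hS
  have h1S : (1:ℝ) ∈ S := ⟨zero_le_one, by simpa [hg] using hx⟩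
  obtain ⟨R, hR⟩ := hb.subset_closedBall y
  have hSb : BddAbove S := by
    refine ⟨R / ‖x - y‖, fun t ht => ?_⟩
    have := hR ht.2
    rw [Metric.mem_closedBall, dist_eq_norm] at this
    simp only [hg, add_sub_cancel_left, norm_smul, Real.norm_of_nonneg ht.1] at this
    rwa [le_div_iff₀ hr]
  set T := sSup S with hT
  have h1T : 1 ≤ T := le_csSup hSb h1S
  have hTn : g T ∉ Ω := by
    intro hmem
    have h2 : ∀ᶠ t in 𝓝 T, g t ∈ Ω := hgc.continuousAt.eventually (ho.mem_nhds hmem)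
    have h3 : ∀ᶠ t in 𝓝[>] T, g t ∈ Ω ∧ T < t := by
      filter_upwards [nhdsWithin_le_nhds h2, self_mem_nhdsWithin] with t a b using ⟨a, b⟩
    obtain ⟨t, ht1, ht2⟩ := h3.exists
    exact absurd (le_csSup hSb (show t ∈ S from ⟨by linarith, ht1⟩)) (not_le.2 ht2)
  have hTc : g T ∈ closure Ω := by
    have h2 : T ∈ closure S := csSup_mem_closure ⟨1, h1S⟩ hSb
    exact closure_mono (by rintro _ ⟨t, ht, rfl⟩; exact ht.2) (image_closure_subset_closure_image hgc ⟨T, h2, rfl⟩)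
  have hTf : g T ∈ frontier Ω := by rw [ho.frontier_eq]; exact ⟨hTc, hTn⟩
  have hT0 : 0 < T := by linarith
  have key : ∀ t ∈ S, 1 ≤ t → u x - u y ≤ t⁻¹ * (- u y) := by
    intro t ht h1t
    have ht0 : 0 < t := by linarith
    have hti : t⁻¹ ≤ 1 := inv_le_one_of_one_le₀ h1t
    have := hconv.2 hy ht.2 (show 0 ≤ 1 - t⁻¹ by linarith) (show 0 ≤ t⁻¹ by positivity) (by ring)
    have e1 : (1 - t⁻¹) • y + t⁻¹ • g t = x := by
      simp only [hg, smul_add, smul_smul, inv_mul_cancel₀ ht0.ne', one_smul, sub_smul]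
      abel
    rw [e1] at this
    simp only [smul_eq_mul] at this
    have h3 := mul_nonpos_of_nonneg_of_nonpos (show 0 ≤ t⁻¹ by positivity) (hneg _ ht.2).le
    nlinarith
  have key2 : u x - u y ≤ T⁻¹ * (-u y) := by
    rcases le_or_gt (u x - u y) 0 with h | h
    · exact h.trans (mul_nonneg (by positivity) (by linarith [hneg y hy]))
    · have h4 : T ≤ (-u y) / (u x - u y) := by
        apply csSup_le ⟨1, h1S⟩
        intro t ht
        rcases le_or_gt 1 t with h5 | h5
        · have h6 := key t ht h5
          rw [le_div_iff₀ h]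
          have ht0 : 0 < t := by linarith
          calc t * (u x - u y) ≤ t * (t⁻¹ * (-u y)) := by gcongr
            _ = -u y := by field_simp
        · rw [le_div_iff₀ h]
          nlinarith [hneg x hx]
      rw [le_div_iff₀ h] at h4
      rw [inv_mul_eq_div, le_div_iff₀ hT0]
      linarith
  have h5 := hbar _ hTf y hy
  rw [abs_of_neg (hneg y hy)] at h5
  have h6 : ‖y - g T‖ = T * ‖x - y‖ := by
    simp only [hg, sub_add_cancel_left, norm_neg, norm_smul, Real.norm_of_nonneg hT0.le]
  rw [h6, Real.mul_rpow hT0.le hr.le] at h5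
  have h7 : T ^ γ ≤ T := by
    simpa using Real.rpow_le_rpow_of_exponent_le h1T hγ1.le
  calc u x - u y ≤ T⁻¹ * (-u y) := key2
    _ ≤ T⁻¹ * (C * (T ^ γ * ‖x - y‖ ^ γ)) := by gcongr
    _ ≤ T⁻¹ * (C * (T * ‖x - y‖ ^ γ)) := by gcongr
    _ = C * ‖x - y‖ ^ γ := by field_simp

end Helpers

/-- Theorem 1.1 (regularity part): every classical solution is `γ₁`-Hölder continuous on the
closure of `Ω`, with `C^{γ₁}`-norm bounded by a constant depending only on
`α, β, A, diam Ω` (through the bound `D`) and `n`. -/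
theorem global_holder_regularity
    (n : ℕ) (hn : 2 ≤ n) (A α β D γ₁ : ℝ) (hA : 0 < A) (hα : 0 ≤ α)
    (hβ : (n : ℝ) + 1 ≤ β)
    (hγ₁ : (β < α + 2 * n - 1 ∧ γ₁ = (β - n + 1) / (n + α)) ∨
      (α + 2 * n - 1 ≤ β ∧ γ₁ ∈ Set.Ioo (0 : ℝ) 1)) :
    ∃ C : ℝ, 0 < C ∧
      ∀ (Ω : Set (EuclideanSpace ℝ (Fin n))) (F : EuclideanSpace ℝ (Fin n) → ℝ → ℝ)
        (u : EuclideanSpace ℝ (Fin n) → ℝ),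
        IsOpen Ω → Convex ℝ Ω → Bornology.IsBounded Ω → Ω.Nonempty →
        Metric.diam Ω ≤ D →
        SatisfiesFCond Ω F A α β →
        IsClassicalSolution Ω F u →
        (∀ z ∈ closure Ω, |u z| ≤ C) ∧
          ∀ x ∈ closure Ω, ∀ y ∈ closure Ω, |u x - u y| ≤ C * ‖x - y‖ ^ γ₁ := by
  have hn2 : (2:ℝ) ≤ n := by exact_mod_cast hn
  have hγ : 0 < γ₁ ∧ γ₁ < 1 ∧ 0 ≤ β - n + 1 - (n + α) * γ₁ := by
    have hpos : 0 < (n:ℝ) + α := by linarith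
    rcases hγ₁ with ⟨h1, h2⟩ | ⟨h1, h2, h3⟩
    · refine ⟨?_, ?_, ?_⟩
      · rw [h2]; exact div_pos (by linarith) hpos
      · rw [h2, div_lt_one hpos]; linarith
      · rw [h2, mul_div_cancel₀ _ hpos.ne']; linarith
    · exact ⟨h2, h3, by nlinarith⟩
  obtain ⟨hγ0, hγ1, hθ⟩ := hγ
  have hγγ : 0 < γ₁ * (1 - γ₁) := mul_pos hγ0 (by linarith)
  obtain ⟨E, hE⟩ : ∃ E : ℝ, E = max D 1 := ⟨_, rfl⟩
  have hE1 : 1 ≤ E := hE ▸ le_max_right _ _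
  have hDE : D ≤ E := hE ▸ le_max_left _ _
  obtain ⟨K, hKdef⟩ : ∃ K : ℝ, K = E ^ 2 + (1 + 4 * γ₁ ^ 2 * E ^ 2) / (γ₁ * (1 - γ₁)) := ⟨_, rfl⟩
  have hK : 1 + 4 * γ₁ ^ 2 * E ^ 2 ≤ γ₁ * (1 - γ₁) * (K - E ^ 2) := by
    rw [hKdef, add_sub_cancel_left, mul_div_cancel₀ _ hγγ.ne']
  have hKpos : 0 < K := by rw [hKdef]; positivity
  obtain ⟨M, hMdef⟩ : ∃ M : ℝ, M = A * E ^ (β - n + 1 - (n + α) * γ₁) + 1 := ⟨_, rfl⟩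
  have hM1 : 1 ≤ M := by rw [hMdef]; have : 0 ≤ A * E ^ (β - n + 1 - (n + α) * γ₁) := by positivity
                         linarith
  have hM : A * E ^ (β - n + 1 - (n + α) * γ₁) < M := by rw [hMdef]; linarith
  have hMp : 0 < M := by linarith
  refine ⟨M * K * E ^ γ₁, by positivity, ?_⟩
  intro Ω F u ho hc hb hne hdiam hF hu
  have hbar : ∀ p ∈ frontier Ω, ∀ x ∈ Ω, |u x| ≤ M * K * ‖x - p‖ ^ γ₁ := fun p hp x hx =>
    barrier_bound hn A α β E γ₁ K M hA hα hβ hE1 hγ0 hγ1 hθ hK hM1 hM Ω F u ho hc hb hne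
      (hdiam.trans hDE) hF hu p hp x hx
  obtain ⟨-, hconv, -, hneg, hbd, -⟩ := hu
  have hcase : ∀ z ∈ closure Ω, z ∈ Ω ∨ z ∈ frontier Ω := by
    intro z hz
    by_cases h : z ∈ Ω
    · exact Or.inl h
    · exact Or.inr (by rw [ho.frontier_eq]; exact ⟨hz, h⟩)
  have hEγ : 1 ≤ E ^ γ₁ := Real.one_le_rpow hE1 hγ0.le
  have hMKE : M * K ≤ M * K * E ^ γ₁ := le_mul_of_one_le_right (by positivity) hEγ
  have : Nontrivial (EuclideanSpace ℝ (Fin n)) := by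
    have : Nonempty (Fin n) := ⟨⟨0, by omega⟩⟩
    infer_instance
  have hfr : (frontier Ω).Nonempty := by
    rw [nonempty_frontier_iff]
    refine ⟨hne, ?_⟩
    rintro rfl
    exact NormedSpace.unbounded_univ ℝ (EuclideanSpace ℝ (Fin n)) hb
  refine ⟨?_, ?_⟩
  · intro z hz
    rcases hcase z hz with h | h
    · obtain ⟨p, hp⟩ := hfr
      refine (hbar p hp z h).trans ?_
      have : ‖z - p‖ ≤ E := by
        rw [← dist_eq_norm]
        refine (Metric.dist_le_diam_of_mem hb.closure hz (frontier_subset_closure hp)).trans ?_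
        rw [Metric.diam_closure]; exact hdiam.trans hDE
      gcongr
    · rw [hbd z h, abs_zero]; positivity
  · intro x hx y hy
    refine le_trans ?_ (mul_le_mul_of_nonneg_right hMKE (by positivity))
    by_cases hxy : x = y
    · subst hxy
      simp only [sub_self, abs_zero]; positivity
    rcases hcase x hx with h | h <;> rcases hcase y hy with h' | h'
    · have h1 := one_sided (M * K) γ₁ (by positivity) hγ1 Ω u ho hb hconv hneg hbar x h y h' hxy
      have h2 := one_sided (M * K) γ₁ (by positivity) hγ1 Ω u ho hb hconv hneg hbar y h' x h (Ne.symm hxy)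
      rw [norm_sub_rev] at h2
      rw [abs_le]
      constructor <;> linarith
    · rw [hbd y h', sub_zero]; exact hbar y h' x h
    · rw [hbd x h, zero_sub, abs_neg, norm_sub_rev]; exact hbar x h y h'
    · rw [hbd x h, hbd y h', sub_zero, abs_zero]; positivity
end

section
/- Let Ω ⊂ ℝⁿ (n ≥ 2) be a bounded open convex domain which is an (a,η) type domain with a > 2 and η > 0. Suppose F : Ω × (−∞,0) → ℝ is continuous and non-decreasing in its second argument, and there are constants A > 0, α ≥ 0, β ≥ n+1 with β < α + 2n − 1 − (2n−2)/a such that 0 < F(x,t) ≤ A·d_x^{β−n−1}·|t|^{−α} for all x ∈ Ω and t < 0. If u is a classical solution of det D²u = F(x,u) in Ω with u = 0 on ∂Ω, then there is a constant C depending only on a, n, α, β, η, A and diam Ω such that |u(y)| ≤ C·d_y^{γ₂} for every y ∈ Ω, where γ₂ = (β−n+1)/(n+α) + (2n−2)/(a(n+α)). -/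
/-- The last coordinate index of `Fin n`. -/
def lastIdx (n : ℕ) (hn : 0 < n) : Fin n := ⟨n - 1, Nat.sub_lt hn one_pos⟩

/-- A boundary point `x₀` of `Ω` is of `(a,η)` type: after a translation and rotation,
`x₀ = 0` and `Ω ⊆ {x : xₙ ≥ η |x'|^a}`. -/
def IsATypePoint {n : ℕ} (hn : 0 < n) (Ω : Set (EuclideanSpace ℝ (Fin n)))
    (a η : ℝ) (x₀ : EuclideanSpace ℝ (Fin n)) : Prop :=
  ∃ f : EuclideanSpace ℝ (Fin n) ≃ₗᵢ[ℝ] EuclideanSpace ℝ (Fin n),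
    ∀ y ∈ Ω,
      η * Real.sqrt (∑ j ∈ Finset.univ.erase (lastIdx n hn), f (y - x₀) j ^ 2) ^ a
        ≤ f (y - x₀) (lastIdx n hn)

/-- `Ω` is an `(a,η)` type domain: every boundary point is of `(a,η)` type. -/
def IsATypeDomain {n : ℕ} (hn : 0 < n) (Ω : Set (EuclideanSpace ℝ (Fin n))) (a η : ℝ) : Prop :=
  ∀ x₀ ∈ frontier Ω, IsATypePoint hn Ω a η x₀

section Aux
open Filter Topology

lemma aux_det_ge {n : ℕ} (G : Matrix (Fin n) (Fin n) ℝ) (hG : G.IsHermitian) (d : Fin n → ℝ)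
    (hd : ∀ i, 0 < d i) (h : ∀ c : Fin n → ℝ, ∑ i, d i * c i ^ 2 ≤ c ⬝ᵥ (G.mulVec c)) :
    ∏ i, d i ≤ G.det := by
  set e : Fin n → ℝ := fun i => (Real.sqrt (d i))⁻¹ with he
  have hde : ∀ i, d i * e i ^ 2 = 1 := by
    intro i
    simp only [he, inv_pow, Real.sq_sqrt (hd i).le]
    exact mul_inv_cancel₀ (hd i).ne'
  set B := Matrix.diagonal e * G * Matrix.diagonal e with hB
  have hBh : B.IsHermitian := by
    have := Matrix.isHermitian_conjTranspose_mul_mul (Matrix.diagonal e) hG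
    simpa [hB, Matrix.diagonal_conjTranspose] using this
  have hev : ∀ i, 1 ≤ hBh.eigenvalues i := by
    intro i
    set v : Fin n → ℝ := (hBh.eigenvectorBasis i).ofLp with hv
    have h1 : B.mulVec v = hBh.eigenvalues i • v := hBh.mulVec_eigenvectorBasis i
    have hvv : v ⬝ᵥ v = 1 := by
      have := hBh.eigenvectorBasis.orthonormal.1 i
      have h2 : ‖hBh.eigenvectorBasis i‖ ^ 2 = 1 := by rw [this]; norm_num
      rw [EuclideanSpace.real_norm_sq_eq] at h2
      simpa [dotProduct, hv, sq] using h2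
    have h3 := h (fun i => e i * v i)
    have h4 : ∑ i, d i * (e i * v i) ^ 2 = 1 := by
      rw [← hvv, dotProduct]
      refine Finset.sum_congr rfl fun j _ => ?_
      linear_combination (v j * v j) * hde j
    have h5 : (fun i => e i * v i) = (Matrix.diagonal e).mulVec v := by
      ext j; simp [Matrix.mulVec_diagonal]
    have h6 : v ⬝ᵥ B.mulVec v = (fun i => e i * v i) ⬝ᵥ G.mulVec (fun i => e i * v i) := by
      rw [hB, ← Matrix.mulVec_mulVec, ← Matrix.mulVec_mulVec, ← h5, Matrix.dotProduct_mulVec]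
      congr 1
      ext j; simp [Matrix.vecMul_diagonal, mul_comm]
    rw [h1, dotProduct_smul, hvv] at h6
    simp only [smul_eq_mul, mul_one] at h6
    rw [h6]; linarith
  have hdet : 1 ≤ B.det := by
    rw [hBh.det_eq_prod_eigenvalues]
    simpa using Finset.prod_le_prod (s := Finset.univ) (f := fun _ : Fin n => (1:ℝ)) (fun _ _ => zero_le_one) (fun i _ => hev i)
  rw [hB, Matrix.det_mul, Matrix.det_mul, Matrix.det_diagonal] at hdet
  have hp : (∏ i, d i) * (∏ i, e i) ^ 2 = 1 := by
    rw [← Finset.prod_pow, ← Finset.prod_mul_distrib]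
    exact Finset.prod_eq_one fun i _ => hde i
  have hd0 : 0 < ∏ i, d i := Finset.prod_pos fun i _ => hd i
  calc ∏ i, d i = (∏ i, d i) * 1 := by ring
    _ ≤ (∏ i, d i) * ((∏ i, e i) * G.det * ∏ i, e i) := by gcongr
    _ = G.det := by linear_combination G.det * hp

lemma aux_det_rot {n : ℕ} (f : EuclideanSpace ℝ (Fin n) ≃ₗᵢ[ℝ] EuclideanSpace ℝ (Fin n))
    (B : EuclideanSpace ℝ (Fin n) →L[ℝ] EuclideanSpace ℝ (Fin n) →L[ℝ] ℝ) :
    (Matrix.of fun i j : Fin n => B (EuclideanSpace.single i (1:ℝ)) (EuclideanSpace.single j (1:ℝ))).det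
    = (Matrix.of fun i j : Fin n => B (f.symm (EuclideanSpace.single i (1:ℝ))) (f.symm (EuclideanSpace.single j (1:ℝ)))).det := by
  set Q : Matrix (Fin n) (Fin n) ℝ := Matrix.of fun k i => f.symm (EuclideanSpace.single i (1:ℝ)) k with hQ
  set H : Matrix (Fin n) (Fin n) ℝ := Matrix.of fun i j : Fin n => B (EuclideanSpace.single i (1:ℝ)) (EuclideanSpace.single j (1:ℝ)) with hH
  have hQQ : Q.transpose * Q = 1 := by
    ext i j
    have := f.symm.inner_map_map (EuclideanSpace.single i (1:ℝ)) (EuclideanSpace.single j (1:ℝ))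
    rw [PiLp.inner_apply] at this
    simp [Matrix.mul_apply, hQ, Matrix.one_apply] at this ⊢
    simp only [mul_comm] at this ⊢
    rw [this, EuclideanSpace.inner_single_left]
    simp [Pi.single_apply]
  have hexp : ∀ i, f.symm (EuclideanSpace.single i (1:ℝ)) = ∑ k, Q k i • EuclideanSpace.single k (1:ℝ) := by
    intro i
    ext k
    simp [hQ, Pi.single_apply]
  have hG : (Matrix.of fun i j : Fin n => B (f.symm (EuclideanSpace.single i (1:ℝ))) (f.symm (EuclideanSpace.single j (1:ℝ)))) = Q.transpose * H * Q := by
    ext i j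
    simp only [Matrix.of_apply, hexp, map_sum, map_smul, Matrix.mul_apply, Matrix.transpose_apply,
      sum_apply, smul_apply, smul_eq_mul, hH]
    refine Finset.sum_congr rfl fun k _ => ?_
    ring
  rw [hG, Matrix.det_mul, Matrix.det_mul, mul_right_comm, ← Matrix.det_mul, hQQ]
  simp

lemma aux_second_test (φ U φ' U' : ℝ → ℝ) (p q : ℝ) (h1 : ∀ᶠ t in 𝓝 (0:ℝ), HasDerivAt φ (φ' t) t)
    (h2 : ∀ᶠ t in 𝓝 (0:ℝ), HasDerivAt U (U' t) t) (h3 : HasDerivAt φ' p 0) (h4 : HasDerivAt U' q 0)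
    (hm : IsLocalMax (fun t => φ t - U t) 0) : p ≤ q := by
  by_contra! hlt
  have hd : deriv (fun t => φ t - U t) =ᶠ[𝓝 0] fun t => φ' t - U' t := by
    filter_upwards [h1, h2] with t a b
    exact (a.sub b).deriv
  have hdd : deriv (deriv (fun t => φ t - U t)) 0 = p - q := by
    rw [hd.deriv_eq]; exact (h3.sub h4).deriv
  have hmin := isLocalMin_of_deriv_deriv_pos (by rw [hdd]; linarith) hm.deriv_eq_zero
    (h1.self_of_nhds.continuousAt.sub h2.self_of_nhds.continuousAt)
  have hc : (fun t => φ t - U t) =ᶠ[𝓝 0] fun _ => φ 0 - U 0 := by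
    filter_upwards [hm, hmin] with t a b
    exact le_antisymm a b
  have : deriv (deriv (fun t => φ t - U t)) 0 = 0 := by
    rw [hc.deriv.deriv_eq]; simp
  linarith

lemma aux_line {s c γ δ κ M R P S : ℝ} (hs : 0 < s) :
    ∃ φ' : ℝ → ℝ, (∀ᶠ t in 𝓝 (0:ℝ), HasDerivAt
      (fun t : ℝ => M * (-2 * (s + t * c) ^ γ + κ * (R + 2 * t * P + t ^ 2 * S) * (s + t * c) ^ δ)) (φ' t) t) ∧
    HasDerivAt φ' (M * (2 * γ * (1 - γ) * s ^ (γ - 2) * c ^ 2 + 2 * κ * S * s ^ δ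
      + 4 * κ * δ * P * c * s ^ (δ - 1) + κ * δ * (δ - 1) * R * c ^ 2 * s ^ (δ - 2))) 0 := by
  have hl : ∀ t : ℝ, HasDerivAt (fun t : ℝ => s + t * c) c t := fun t => by
    simpa using ((hasDerivAt_id t).mul_const c).const_add s
  have hr : ∀ (p t : ℝ), 0 < s + t * c → HasDerivAt (fun t : ℝ => (s + t * c) ^ p) (c * p * (s + t * c) ^ (p - 1)) t :=
    fun p t h => (hl t).rpow_const (Or.inl h.ne')
  have hq : ∀ t : ℝ, HasDerivAt (fun t : ℝ => R + 2 * t * P + t ^ 2 * S) (2 * P + 2 * t * S) t := fun t => by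
    have h1 := ((((hasDerivAt_id t).const_mul 2).mul_const P).const_add R).add (((hasDerivAt_id t).pow 2).mul_const S)
    refine h1.congr_deriv ?_
    simp
  have hq2 : HasDerivAt (fun t : ℝ => 2 * P + 2 * t * S) (2 * S) 0 := by
    simpa using (((hasDerivAt_id (0:ℝ)).const_mul 2).mul_const S).const_add (2 * P)
  refine ⟨fun t => M * (-2 * (c * γ * (s + t * c) ^ (γ - 1)) + (κ * (2 * P + 2 * t * S) * (s + t * c) ^ δ
     + κ * (R + 2 * t * P + t ^ 2 * S) * (c * δ * (s + t * c) ^ (δ - 1)))), ?_, ?_⟩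
  · have : ∀ᶠ t in 𝓝 (0:ℝ), 0 < s + t * c := by
      refine (hl 0).continuousAt.eventually_const_lt ?_
      simpa using hs
    filter_upwards [this] with t ht
    exact (((hr γ t ht).const_mul (-2)).add (((hq t).const_mul κ).mul (hr δ t ht))).const_mul M
  · have h0 : 0 < s + 0 * c := by simpa using hs
    have key := (((((hr (γ - 1) 0 h0).const_mul (c * γ)).const_mul (-2)).add
      (((hq2.const_mul κ).mul (hr δ 0 h0)).add
        (((hq 0).const_mul κ).mul ((hr (δ - 1) 0 h0).const_mul (c * δ))))).const_mul M)
    refine key.congr_deriv ?_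
    simp only [zero_mul, add_zero, mul_zero]
    rw [show γ - 1 - 1 = γ - 2 by ring, show δ - 1 - 1 = δ - 2 by ring]
    ring

lemma aux_quad {s c γ δ κ L b R P S : ℝ} (hs : 0 < s) (hκ : 0 < κ)
    (hδ : δ = γ - b) (hR : R ≤ L * s ^ b) (hL : 0 < L)
    (hκL : κ * L * (1 + |δ * (δ - 1)| + 4 * δ ^ 2) = γ * (1 - γ))
    (hR0 : 0 ≤ R) (hpos : ∀ τ : ℝ, 0 ≤ S + 2 * τ * P + τ ^ 2 * R) :
    κ * s ^ δ * S + γ * (1 - γ) * s ^ (γ - 2) * c ^ 2 ≤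
      2 * γ * (1 - γ) * s ^ (γ - 2) * c ^ 2 + 2 * κ * S * s ^ δ
      + 4 * κ * δ * P * c * s ^ (δ - 1) + κ * δ * (δ - 1) * R * c ^ 2 * s ^ (δ - 2) := by
  set X := s ^ δ with hX
  set Y := s ^ (γ - 2) with hY
  have hX0 : 0 < X := Real.rpow_pos_of_pos hs _
  have hY0 : 0 < Y := Real.rpow_pos_of_pos hs _
  have e1 : s ^ (δ - 1) = X / s := by rw [Real.rpow_sub_one hs.ne']
  have e2 : s ^ (δ - 2) = X / s ^ 2 := by
    rw [Real.rpow_sub hs, Real.rpow_two]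
  have e3 : s ^ b * (X / s ^ 2) = Y := by
    rw [← e2, ← Real.rpow_add hs, hδ, hY]; congr 1; ring
  set Z := R * (X / s ^ 2) with hZ
  have hZ0 : 0 ≤ Z := by positivity
  have hZ1 : Z ≤ L * Y := by
    rw [← e3, hZ, ← mul_assoc]
    gcongr
  have h1 := hpos (2 * δ * c / s)
  have h2 : 0 ≤ κ * X * (S + 2 * (2 * δ * c / s) * P + (2 * δ * c / s) ^ 2 * R) := by positivity
  have h3 : κ * X * (S + 2 * (2 * δ * c / s) * P + (2 * δ * c / s) ^ 2 * R)
      = κ * S * X + 4 * κ * δ * P * c * (X / s) + 4 * κ * δ ^ 2 * c ^ 2 * Z := by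
    rw [hZ]; field_simp; ring
  have h4 : κ * (|δ * (δ - 1)| + 4 * δ ^ 2) * Z ≤ γ * (1 - γ) * Y := by
    calc κ * (|δ * (δ - 1)| + 4 * δ ^ 2) * Z ≤ κ * (|δ * (δ - 1)| + 4 * δ ^ 2) * (L * Y) := by gcongr
      _ ≤ κ * (1 + |δ * (δ - 1)| + 4 * δ ^ 2) * (L * Y) := by gcongr; linarith
      _ = γ * (1 - γ) * Y := by rw [← hκL]; ring
  have h5 : -(|δ * (δ - 1)|) * (κ * Z) ≤ δ * (δ - 1) * (κ * Z) :=
    mul_le_mul_of_nonneg_right (neg_abs_le _) (by positivity)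
  have h6 : 0 ≤ (γ * (1 - γ) * Y + κ * δ * (δ - 1) * Z - 4 * κ * δ ^ 2 * Z) * c ^ 2 := by
    apply mul_nonneg _ (sq_nonneg c)
    linarith
  rw [e1, e2]
  have h7 : κ * δ * (δ - 1) * R * c ^ 2 * (X / s ^ 2) = κ * δ * (δ - 1) * c ^ 2 * Z := by rw [hZ]; ring
  rw [h7]
  rw [h3] at h2
  linarith

lemma aux_hess {n : ℕ} (l : Fin n) (Ω : Set (EuclideanSpace ℝ (Fin n))) (hΩ : IsOpen Ω)
    (u : EuclideanSpace ℝ (Fin n) → ℝ) (hu : ContDiffOn ℝ 2 u Ω)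
    (f : EuclideanSpace ℝ (Fin n) ≃ₗᵢ[ℝ] EuclideanSpace ℝ (Fin n)) (x₀ x : EuclideanSpace ℝ (Fin n))
    (hx : x ∈ Ω) {γ δ κ L b M : ℝ} (hs : 0 < f (x - x₀) l) (hκ : 0 < κ) (hM : 0 < M)
    (hγ : 0 < γ * (1 - γ))
    (hδ : δ = γ - b) (hR : ∑ j ∈ Finset.univ.erase l, f (x - x₀) j ^ 2 ≤ L * (f (x - x₀) l) ^ b) (hL : 0 < L)
    (hκL : κ * L * (1 + |δ * (δ - 1)| + 4 * δ ^ 2) = γ * (1 - γ))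
    (hmax : IsLocalMax (fun x => M * (-2 * (f (x - x₀) l) ^ γ +
      κ * (∑ j ∈ Finset.univ.erase l, f (x - x₀) j ^ 2) * (f (x - x₀) l) ^ δ) - u x) x) :
    (M * (γ * (1 - γ)) * (f (x - x₀) l) ^ (γ - 2)) * (M * κ * (f (x - x₀) l) ^ δ) ^ (n - 1)
      ≤ hessianDet u x := by
  set z := f (x - x₀) with hz
  have hcd : ContDiffAt ℝ 2 u x := hu.contDiffAt (hΩ.mem_nhds hx)
  set H := fderiv ℝ (fderiv ℝ u) x with hH
  have hHd : HasFDerivAt (fderiv ℝ u) H x :=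
    ((hcd.fderiv_right (m := 1) (by norm_num)).differentiableAt (by norm_num)).hasFDerivAt
  have hsymm : ∀ v w, H v w = H w v := by
    have := hcd.isSymmSndFDerivAt (by simp)
    exact fun v w => this v w
  -- second order comparison
  have hquad : ∀ v, M * (κ * z l ^ δ * (∑ j ∈ Finset.univ.erase l, f v j ^ 2)
      + γ * (1 - γ) * z l ^ (γ - 2) * f v l ^ 2) ≤ H v v := by
    intro v
    set w := f v with hw
    have hline : ∀ t : ℝ, HasDerivAt (fun t : ℝ => x + t • v) v t := fun t => by
      simpa using ((hasDerivAt_id t).smul_const v).const_add x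
    have hx0 : x + (0:ℝ) • v = x := by simp
    have hU : ∀ᶠ t in 𝓝 (0:ℝ), HasDerivAt (fun t : ℝ => u (x + t • v)) (fderiv ℝ u (x + t • v) v) t := by
      have : ∀ᶠ t in 𝓝 (0:ℝ), x + t • v ∈ Ω :=
        (hline 0).continuousAt.eventually (by simp only [hx0]; exact hΩ.mem_nhds hx)
      filter_upwards [this] with t ht
      have hd : DifferentiableAt ℝ u (x + t • v) :=
        (hu.contDiffAt (hΩ.mem_nhds ht)).differentiableAt (by norm_num)
      exact hd.hasFDerivAt.comp_hasDerivAt t (hline t)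
    have hU2 : HasDerivAt (fun t : ℝ => fderiv ℝ u (x + t • v) v) (H v v) 0 := by
      have h0 : HasFDerivAt (fderiv ℝ u) H (x + (0:ℝ) • v) := by rw [hx0]; exact hHd
      have h1 := h0.comp_hasDerivAt (0:ℝ) (hline 0)
      have h2 := h1.clm_apply (hasDerivAt_const (0:ℝ) v)
      simpa using h2
    obtain ⟨φ', hφ1, hφ2⟩ := aux_line (s := z l) (c := w l) (γ := γ) (δ := δ) (κ := κ) (M := M)
      (R := ∑ j ∈ Finset.univ.erase l, z j ^ 2) (P := ∑ j ∈ Finset.univ.erase l, z j * w j)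
      (S := ∑ j ∈ Finset.univ.erase l, w j ^ 2) hs
    have hf : ∀ (t : ℝ) (j : Fin n), f (x + t • v - x₀) j = z j + t * w j := by
      intro t j
      rw [show x + t • v - x₀ = (x - x₀) + t • v by abel, map_add, map_smul]
      simp [hz, hw]
    have hsum : ∀ t : ℝ, ∑ j ∈ Finset.univ.erase l, (z j + t * w j) ^ 2 =
        ∑ j ∈ Finset.univ.erase l, z j ^ 2 + 2 * t * ∑ j ∈ Finset.univ.erase l, z j * w j
        + t ^ 2 * ∑ j ∈ Finset.univ.erase l, w j ^ 2 := by
      intro t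
      rw [Finset.mul_sum, Finset.mul_sum, ← Finset.sum_add_distrib, ← Finset.sum_add_distrib]
      exact Finset.sum_congr rfl fun j _ => by ring
    have hm2 : IsLocalMax (fun t : ℝ => M * (-2 * (z l + t * w l) ^ γ + κ *
        (∑ j ∈ Finset.univ.erase l, z j ^ 2 + 2 * t * ∑ j ∈ Finset.univ.erase l, z j * w j
        + t ^ 2 * ∑ j ∈ Finset.univ.erase l, w j ^ 2) * (z l + t * w l) ^ δ) - u (x + t • v)) 0 := by
      have h1 : Tendsto (fun t : ℝ => x + t • v) (𝓝 0) (𝓝 x) := by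
        have := (hline 0).continuousAt.tendsto
        rwa [hx0] at this
      have h2 := h1.eventually hmax
      filter_upwards [h2] with t ht
      simp only [hf, hsum, ← hz] at ht
      simpa only [hx0, zero_mul, mul_zero, add_zero, ne_eq, OfNat.ofNat_ne_zero, not_false_eq_true,
        zero_pow] using ht
    have hle := aux_second_test _ _ _ _ _ _ hφ1 hU hφ2 hU2 hm2
    refine le_trans ?_ hle
    refine mul_le_mul_of_nonneg_left ?_ hM.le
    refine aux_quad hs hκ hδ hR hL hκL (Finset.sum_nonneg fun j _ => sq_nonneg _) ?_
    intro τ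
    have : ∑ j ∈ Finset.univ.erase l, w j ^ 2 + 2 * τ * ∑ j ∈ Finset.univ.erase l, z j * w j
        + τ ^ 2 * ∑ j ∈ Finset.univ.erase l, z j ^ 2 = ∑ j ∈ Finset.univ.erase l, (w j + τ * z j) ^ 2 := by
      rw [Finset.mul_sum, Finset.mul_sum, ← Finset.sum_add_distrib, ← Finset.sum_add_distrib]
      exact Finset.sum_congr rfl fun j _ => by ring
    rw [this]
    exact Finset.sum_nonneg fun j _ => sq_nonneg _
  have hdet : hessianDet u x = (Matrix.of fun i j : Fin n => H (f.symm (EuclideanSpace.single i (1:ℝ)))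
      (f.symm (EuclideanSpace.single j (1:ℝ)))).det := by
    rw [← aux_det_rot]
    simp [hessianDet, iteratedFDeriv_two_apply, hH]
  rw [hdet]
  set d : Fin n → ℝ := fun i => if i = l then M * (γ * (1 - γ)) * z l ^ (γ - 2) else M * κ * z l ^ δ with hd
  have hzγ : 0 < z l ^ (γ - 2) := Real.rpow_pos_of_pos hs _
  have hzδ : 0 < z l ^ δ := Real.rpow_pos_of_pos hs _
  have hsplit : ∀ g : Fin n → ℝ, ∑ i, g i = g l + ∑ i ∈ Finset.univ.erase l, g i := fun g =>
    (Finset.add_sum_erase _ _ (Finset.mem_univ l)).symm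
  have hprod : ∏ i, d i = (M * (γ * (1 - γ)) * z l ^ (γ - 2)) * (M * κ * z l ^ δ) ^ (n - 1) := by
    rw [← Finset.mul_prod_erase _ _ (Finset.mem_univ l)]
    congr 1
    · simp [hd]
    · rw [Finset.prod_congr rfl (g := fun _ => M * κ * z l ^ δ)]
      · simp
      · intro i hi
        simp [hd, Finset.ne_of_mem_erase hi]
  rw [← hprod]
  apply aux_det_ge
  · ext i j
    simp [Matrix.conjTranspose_apply, hsymm (f.symm (EuclideanSpace.single j (1:ℝ)))]
  · intro i
    simp only [hd]
    split_ifs <;> positivity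
  · intro c
    set v := f.symm (WithLp.toLp 2 c) with hv
    have hvs : v = ∑ i, c i • f.symm (EuclideanSpace.single i (1:ℝ)) := by
      rw [hv]
      simp only [← map_smul, ← map_sum]
      congr 1
      ext k
      simp [Pi.single_apply]
    have hfv : f v = WithLp.toLp 2 c := by simp [hv]
    have h1 := hquad v
    rw [hfv] at h1
    have h2 : c ⬝ᵥ (Matrix.of fun i j : Fin n => H (f.symm (EuclideanSpace.single i (1:ℝ)))
      (f.symm (EuclideanSpace.single j (1:ℝ)))).mulVec c = H v v := by
      rw [hvs]
      simp only [map_sum, map_smul, sum_apply, smul_apply, smul_eq_mul,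
        dotProduct, Matrix.mulVec, Matrix.of_apply, Finset.mul_sum]
      rw [Finset.sum_comm]
      refine Finset.sum_congr rfl fun i _ => Finset.sum_congr rfl fun j _ => ?_
      ring
    rw [h2]
    refine le_trans (le_of_eq ?_) h1
    rw [hsplit]
    have : ∑ i ∈ Finset.univ.erase l, d i * c i ^ 2 = M * κ * z l ^ δ * ∑ i ∈ Finset.univ.erase l, c i ^ 2 := by
      rw [Finset.mul_sum]
      refine Finset.sum_congr rfl fun i hi => ?_
      simp [hd, Finset.ne_of_mem_erase hi]
    rw [this]
    simp only [hd, if_true]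
    ring

set_option maxHeartbeats 1000000 in
lemma aux_compare {n : ℕ} (hn : 2 ≤ n) {a η A α β : ℝ} (ha : 2 < a) (hη : 0 < η)
    (hA : 0 < A) (hα : 0 ≤ α) (hβ : (n : ℝ) + 1 ≤ β)
    {Ω : Set (EuclideanSpace ℝ (Fin n))} {F : EuclideanSpace ℝ (Fin n) → ℝ → ℝ}
    {u : EuclideanSpace ℝ (Fin n) → ℝ} (hΩ : IsOpen Ω) (hb : Bornology.IsBounded Ω)
    (hF : SatisfiesFCond Ω F A α β) (hu : IsClassicalSolution Ω F u)
    (l : Fin n) (f : EuclideanSpace ℝ (Fin n) ≃ₗᵢ[ℝ] EuclideanSpace ℝ (Fin n))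
    (x₀ : EuclideanSpace ℝ (Fin n))
    (hf : ∀ y ∈ Ω, η * Real.sqrt (∑ j ∈ Finset.univ.erase l, f (y - x₀) j ^ 2) ^ a ≤ f (y - x₀) l)
    {γ δ κ L M : ℝ} (hγ0 : 0 < γ) (hγ1 : γ < 1) (hγ : (n + α) * γ = β - n + 1 + (2 * n - 2) / a)
    (hδ : δ = γ - 2 / a) (hL : L = (η ^ (2 / a))⁻¹) (hκ : 0 < κ)
    (hκL : κ * L * (1 + |δ * (δ - 1)| + 4 * δ ^ 2) = γ * (1 - γ))
    (hM : 1 ≤ M) (hMA : A < M * (γ * (1 - γ) * κ ^ (n - 1))) :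
    ∀ y ∈ Ω, -(2 * M * (f (y - x₀) l) ^ γ) ≤ u y := by
  obtain ⟨hF1, hF2, hF3⟩ := hF
  obtain ⟨hu1, hu2, hu3, hu4, hu5, hu6⟩ := hu
  have hL0 : 0 < L := by rw [hL]; positivity
  have hγγ : 0 < γ * (1 - γ) := mul_pos hγ0 (by linarith)
  have hM0 : 0 < M := by linarith
  have hκL1 : κ * L ≤ 1 := by
    have h1 : κ * L * 1 ≤ κ * L * (1 + |δ * (δ - 1)| + 4 * δ ^ 2) := by
      gcongr
      nlinarith [abs_nonneg (δ * (δ - 1)), sq_nonneg δ]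
    nlinarith
  have hnn : ∀ y ∈ Ω, 0 ≤ f (y - x₀) l := fun y hy => le_trans (by positivity) (hf y hy)
  have hshift : ∀ (y : EuclideanSpace ℝ (Fin n)) (t : ℝ),
      f (y + t • f.symm (EuclideanSpace.single l (1:ℝ)) - x₀) l = f (y - x₀) l + t := by
    intro y t
    rw [show y + t • f.symm (EuclideanSpace.single l (1:ℝ)) - x₀
      = (y - x₀) + t • f.symm (EuclideanSpace.single l (1:ℝ)) by abel, map_add, map_smul]
    simp
  have hpos : ∀ y ∈ Ω, 0 < f (y - x₀) l := by
    intro y hy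
    have hc : Tendsto (fun t : ℝ => y + t • f.symm (EuclideanSpace.single l (1:ℝ))) (𝓝 0) (𝓝 y) := by
      have : Continuous (fun t : ℝ => y + t • f.symm (EuclideanSpace.single l (1:ℝ))) := by fun_prop
      simpa using this.tendsto 0
    have h1 := hc.eventually (hΩ.mem_nhds hy)
    obtain ⟨ε, hε, h2⟩ := Metric.eventually_nhds_iff.1 h1
    have h3 := h2 (y := -(ε / 2)) (by rw [Real.dist_eq]; rw [sub_zero, abs_neg, abs_of_pos (by linarith)]; linarith)
    have h4 := hnn _ h3
    rw [hshift] at h4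
    linarith
  have hdist : ∀ y ∈ Ω, Metric.infDist y (frontier Ω) ≤ f (y - x₀) l := by
    intro y hy
    set t := f (y - x₀) l with ht
    set y' := y + (-t) • f.symm (EuclideanSpace.single l (1:ℝ)) with hy'
    have hy'Ω : y' ∈ Ωᶜ := by
      intro h
      have := hpos _ h
      rw [hy', hshift] at this
      linarith
    obtain ⟨p, hp, hpd⟩ := exists_mem_frontier_infDist_compl_eq_dist (s := Ω) hy
      (by rintro rfl; exact hy'Ω (Set.mem_univ _))
    calc Metric.infDist y (frontier Ω) ≤ dist y p := Metric.infDist_le_dist_of_mem hp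
      _ = Metric.infDist y Ωᶜ := hpd.symm
      _ ≤ dist y y' := Metric.infDist_le_dist_of_mem hy'Ω
      _ = t := by
        rw [hy', dist_eq_norm]
        simp [norm_smul, abs_of_nonneg (hnn y hy), ← ht]
        exact hnn y hy
  set R : EuclideanSpace ℝ (Fin n) → ℝ := fun y => ∑ j ∈ Finset.univ.erase l, f (y - x₀) j ^ 2 with hRdef
  have hR0 : ∀ y, 0 ≤ R y := fun y => Finset.sum_nonneg fun j _ => sq_nonneg _
  have hR : ∀ y ∈ Ω, R y ≤ L * (f (y - x₀) l) ^ (2 / a) := by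
    intro y hy
    have h1 := hf y hy
    have ha0 : a ≠ 0 := by linarith
    have h2 : Real.sqrt (R y) ^ a ≤ f (y - x₀) l / η := by
      rw [le_div_iff₀ hη]; linarith
    have h3 := Real.rpow_le_rpow (by positivity) h2 (z := 2 / a) (by positivity)
    rw [← Real.rpow_mul (Real.sqrt_nonneg _), mul_div_cancel₀ _ ha0, Real.rpow_two, Real.sq_sqrt (hR0 y),
      Real.div_rpow (hnn y hy) hη.le] at h3
    rw [hL]
    rw [div_eq_inv_mul] at h3
    exact h3
  set W : EuclideanSpace ℝ (Fin n) → ℝ := fun y => M * (-2 * (f (y - x₀) l) ^ γ +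
      κ * R y * (f (y - x₀) l) ^ δ) with hW
  have hW1 : ∀ y ∈ Ω, W y ≤ -(M * (f (y - x₀) l) ^ γ) := by
    intro y hy
    have hs := hpos y hy
    have h1 : κ * R y * (f (y - x₀) l) ^ δ ≤ (f (y - x₀) l) ^ γ := by
      have e : (f (y - x₀) l) ^ (2 / a) * (f (y - x₀) l) ^ δ = (f (y - x₀) l) ^ γ := by
        rw [← Real.rpow_add hs, hδ]; congr 1; ring
      calc κ * R y * (f (y - x₀) l) ^ δ ≤ κ * (L * (f (y - x₀) l) ^ (2 / a)) * (f (y - x₀) l) ^ δ := by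
            gcongr
            exact hR y hy
        _ = κ * L * (f (y - x₀) l) ^ γ := by rw [← e]; ring
        _ ≤ 1 * (f (y - x₀) l) ^ γ := by gcongr
        _ = _ := one_mul _
    have h2 : W y ≤ M * (-2 * (f (y - x₀) l) ^ γ + (f (y - x₀) l) ^ γ) := by
      simp only [hW]
      gcongr
    linarith
  have hWneg : ∀ y ∈ Ω, W y < 0 := by
    intro y hy
    have hs := hpos y hy
    have : 0 < M * (f (y - x₀) l) ^ γ := by positivity
    linarith [hW1 y hy]
  have hWc : ContinuousOn W Ω := by
    have hcoord : ∀ j, Continuous fun y => f (y - x₀) j := by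
      intro j
      exact (EuclideanSpace.proj j : EuclideanSpace ℝ (Fin n) →L[ℝ] ℝ).continuous.comp
        (f.continuous.comp (continuous_id.sub continuous_const))
    have hRc : Continuous R := continuous_finsetSum _ fun j _ => (hcoord j).pow 2
    have hpw : ∀ p : ℝ, ContinuousOn (fun y => (f (y - x₀) l) ^ p) Ω := fun p =>
      (hcoord l).continuousOn.rpow_const fun y hy => Or.inl (hpos y hy).ne'
    exact continuousOn_const.mul ((continuousOn_const.mul (hpw γ)).add
      ((continuousOn_const.mul hRc.continuousOn).mul (hpw δ)))
  have hmain : ∀ y ∈ Ω, W y ≤ u y := by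
    by_contra! hcon
    obtain ⟨x₁, hx₁, hlt⟩ := hcon
    set m := W x₁ - u x₁ with hm
    have hm0 : 0 < m := by linarith
    set K := closure Ω ∩ u ⁻¹' Set.Iic (-m) with hK
    have hKc : IsCompact K := by
      apply Metric.isCompact_of_isClosed_isBounded
      · exact hu1.preimage_isClosed_of_isClosed isClosed_closure isClosed_Iic
      · exact hb.closure.subset Set.inter_subset_left
    have hKΩ : K ⊆ Ω := by
      rintro y ⟨hy1, hy2⟩
      by_contra hy
      have : y ∈ frontier Ω := by
        rw [frontier, hΩ.interior_eq]; exact ⟨hy1, hy⟩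
      have h0 := hu5 y this
      simp only [Set.mem_preimage, Set.mem_Iic] at hy2
      linarith
    have hx₁K : x₁ ∈ K := by
      refine ⟨subset_closure hx₁, ?_⟩
      simp only [Set.mem_preimage, Set.mem_Iic]
      linarith [hWneg x₁ hx₁]
    obtain ⟨x, hxK, hxmax⟩ := hKc.exists_isMaxOn ⟨x₁, hx₁K⟩
      ((hWc.mono hKΩ).sub (hu1.mono Set.inter_subset_left))
    have hx : x ∈ Ω := hKΩ hxK
    have hmx : m ≤ W x - u x := hxmax hx₁K
    have hglob : ∀ y ∈ Ω, W y - u y ≤ W x - u x := by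
      intro y hy
      by_cases hyK : y ∈ K
      · exact hxmax hyK
      · have : -m < u y := by
          by_contra! h
          exact hyK ⟨subset_closure hy, h⟩
        linarith [hWneg y hy]
    have hloc : IsLocalMax (fun y => W y - u y) x := by
      filter_upwards [hΩ.mem_nhds hx] with y hy using hglob y hy
    have hs := hpos x hx
    have hdet := aux_hess l Ω hΩ u hu3 f x₀ x hx hs hκ hM0 hγγ hδ (hR x hx) hL0 hκL hloc
    set s := f (x - x₀) l with hsdef
    rw [hu6 x hx] at hdet
    have h1 : F x (u x) ≤ F x (W x) := hF2 x hx _ _ (by linarith) (hWneg x hx)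
    have h2 := (hF3 x hx _ (hWneg x hx)).2
    have hWabs : M * s ^ γ ≤ |W x| := by
      rw [abs_of_neg (hWneg x hx)]; linarith [hW1 x hx]
    have hWα : |W x| ^ (-α) ≤ s ^ (-(α * γ)) := by
      calc |W x| ^ (-α) ≤ (s ^ γ) ^ (-α) := by
            apply Real.rpow_le_rpow_of_nonpos (by positivity) _ (by linarith)
            refine le_trans ?_ hWabs
            have : 0 < s ^ γ := by positivity
            nlinarith
        _ = s ^ (-(α * γ)) := by
            rw [← Real.rpow_mul hs.le]; congr 1; ring
    have hd : Metric.infDist x (frontier Ω) ^ (β - n - 1) ≤ s ^ (β - n - 1) :=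
      Real.rpow_le_rpow Metric.infDist_nonneg (hdist x hx) (by linarith)
    have h3 : F x (W x) ≤ A * s ^ (β - n - 1 - α * γ) := by
      refine h2.trans ?_
      calc A * Metric.infDist x (frontier Ω) ^ (β - n - 1) * |W x| ^ (-α)
          ≤ A * s ^ (β - n - 1) * s ^ (-(α * γ)) := by gcongr
        _ = A * s ^ (β - n - 1 - α * γ) := by
          rw [mul_assoc, ← Real.rpow_add hs]; congr 2
    have hn1 : ((n - 1 : ℕ) : ℝ) = n - 1 := by
      rw [Nat.cast_sub (by omega)]; simp
    have h4 : (M * (γ * (1 - γ)) * s ^ (γ - 2)) * (M * κ * s ^ δ) ^ (n - 1)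
        = M ^ (n - 1) * (M * (γ * (1 - γ) * κ ^ (n - 1))) * s ^ (β - n - 1 - α * γ) := by
      have e : s ^ (γ - 2) * (s ^ δ) ^ (n - 1) = s ^ (β - n - 1 - α * γ) := by
        rw [← Real.rpow_natCast (s ^ δ), ← Real.rpow_mul hs.le, ← Real.rpow_add hs]
        congr 1
        rw [hn1, hδ]
        have : (2 * (n:ℝ) - 2) / a = 2 / a * (n - 1) := by ring
        rw [this] at hγ
        linarith
      rw [← e, mul_pow, mul_pow]; ring
    have hsp : 0 < s ^ (β - n - 1 - α * γ) := by positivity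
    have h5 : A < M ^ (n - 1) * (M * (γ * (1 - γ) * κ ^ (n - 1))) := by
      have hp1 : 1 ≤ M ^ (n - 1) := one_le_pow₀ hM
      exact hMA.trans_le (le_mul_of_one_le_left (hA.trans hMA).le hp1)
    have h6 := mul_lt_mul_of_pos_right h5 hsp
    rw [h4] at hdet
    linarith
  intro y hy
  refine le_trans ?_ (hmain y hy)
  have hs := hpos y hy
  have : 0 ≤ M * (κ * R y * (f (y - x₀) l) ^ δ) := by
    have := hR0 y
    positivity
  simp only [hW]
  linarith

end Aux

/-- Theorem 1.2 (pointwise form): on an `(a,η)` type domain with `a > 2`,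
`|u(y)| ≤ C d_y^{γ₂}` with `γ₂ = (β-n+1)/(n+α) + (2n-2)/(a(n+α))` and `C` depending
only on `a, n, α, β, η, A` and `diam Ω` (through the bound `D`). -/
theorem pointwise_distance_bound_aEta_domain
    (n : ℕ) (hn : 2 ≤ n) (a η A α β D : ℝ) (ha : 2 < a) (hη : 0 < η)
    (hA : 0 < A) (hα : 0 ≤ α) (hβ : (n : ℝ) + 1 ≤ β)
    (hβ' : β < α + 2 * n - 1 - (2 * n - 2) / a) :
    ∃ C : ℝ, 0 < C ∧
      ∀ (Ω : Set (EuclideanSpace ℝ (Fin n))) (F : EuclideanSpace ℝ (Fin n) → ℝ → ℝ)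
        (u : EuclideanSpace ℝ (Fin n) → ℝ),
        IsOpen Ω → Convex ℝ Ω → Bornology.IsBounded Ω → Ω.Nonempty →
        Metric.diam Ω ≤ D →
        IsATypeDomain (by omega) Ω a η →
        SatisfiesFCond Ω F A α β →
        IsClassicalSolution Ω F u →
        ∀ y ∈ Ω, |u y| ≤
          C * Metric.infDist y (frontier Ω) ^
            ((β - n + 1) / (n + α) + (2 * n - 2) / (a * (n + α))) := by
  have hn2 : (2:ℝ) ≤ n := by exact_mod_cast hn
  have ha0 : 0 < a := by linarith
  have hnα : 0 < (n:ℝ) + α := by linarith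
  set γ := (β - n + 1) / (n + α) + (2 * n - 2) / (a * (n + α)) with hγdef
  have hγ : (n + α) * γ = β - n + 1 + (2 * n - 2) / a := by
    rw [hγdef]; field_simp
  have hfr : 0 ≤ (2 * (n:ℝ) - 2) / a := div_nonneg (by linarith) ha0.le
  have hγ0 : 0 < γ := by
    have : 0 < (n + α) * γ := by rw [hγ]; linarith
    exact pos_of_mul_pos_right this hnα.le
  have hγ1 : γ < 1 := by
    have : (n + α) * γ < (n + α) * 1 := by rw [hγ]; linarith
    exact lt_of_mul_lt_mul_left this hnα.le
  have hγγ : 0 < γ * (1 - γ) := mul_pos hγ0 (by linarith)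
  set δ := γ - 2 / a with hδ
  set L := (η ^ (2 / a))⁻¹ with hL
  have hL0 : 0 < L := by rw [hL]; positivity
  have hT : 0 < 1 + |δ * (δ - 1)| + 4 * δ ^ 2 := by positivity
  set κ := γ * (1 - γ) / (L * (1 + |δ * (δ - 1)| + 4 * δ ^ 2)) with hκdef
  have hκ : 0 < κ := by positivity
  have hκL : κ * L * (1 + |δ * (δ - 1)| + 4 * δ ^ 2) = γ * (1 - γ) := by
    rw [hκdef]; field_simp
  have hE : 0 < γ * (1 - γ) * κ ^ (n - 1) := by positivity
  set M := 1 + A / (γ * (1 - γ) * κ ^ (n - 1)) with hMdef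
  have hM : 1 ≤ M := by
    have : 0 < A / (γ * (1 - γ) * κ ^ (n - 1)) := by positivity
    linarith
  have hMA : A < M * (γ * (1 - γ) * κ ^ (n - 1)) := by
    have : M * (γ * (1 - γ) * κ ^ (n - 1)) = γ * (1 - γ) * κ ^ (n - 1) + A := by
      rw [hMdef, add_mul, div_mul_cancel₀ _ hE.ne', one_mul]
    linarith
  refine ⟨2 * M, by linarith, ?_⟩
  intro Ω F u hΩ _ hb hne _ htype hF hu y hy
  have hfne : (frontier Ω).Nonempty := by
    by_contra h
    rw [Set.not_nonempty_iff_eq_empty] at h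
    have hcl : IsClopen Ω := isClopen_iff_frontier_eq_empty.2 h
    have huniv : Ω = Set.univ := hcl.eq_univ hne
    haveI : Nonempty (Fin n) := ⟨⟨0, by omega⟩⟩
    rw [huniv] at hb
    exact NormedSpace.unbounded_univ ℝ (EuclideanSpace ℝ (Fin n)) hb
  obtain ⟨x₀, hx₀, hd⟩ := isClosed_frontier.exists_infDist_eq_dist hfne y
  obtain ⟨f, hf⟩ := htype x₀ hx₀
  have hcmp := aux_compare hn ha hη hA hα hβ hΩ hb hF hu _ f x₀ hf hγ0 hγ1 hγ hδ hL hκ hκL hM hMA y hy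
  rw [abs_of_neg (hu.2.2.2.1 y hy)]
  set l := lastIdx n (by omega) with hl
  have h1 : f (y - x₀) l ≤ Metric.infDist y (frontier Ω) := by
    rw [hd, dist_eq_norm, ← f.norm_map]
    exact (le_abs_self _).trans (PiLp.norm_apply_le (f (y - x₀)) l)
  have h0 : 0 ≤ f (y - x₀) l := le_trans (by positivity) (hf y hy)
  have h2 := Real.rpow_le_rpow h0 h1 hγ0.le
  have h3 : 2 * M * (f (y - x₀) l) ^ γ ≤ 2 * M * Metric.infDist y (frontier Ω) ^ γ := by
    gcongr
  linarith
end

section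
/- Let Ω ⊂ ℝⁿ (n ≥ 2) be a bounded open convex domain which is an (a,η) type domain with a > 2 and η > 0. Suppose F : Ω × (−∞,0) → ℝ is continuous and non-decreasing in its second argument, and there are constants A > 0, α ≥ 0, β ≥ n+1 such that 0 < F(x,t) ≤ A·d_x^{β−n−1}·|t|^{−α} for all x ∈ Ω and t < 0. Let γ₂ = (β−n+1)/(n+α) + (2n−2)/(a(n+α)) if β < α + 2n − 1 − (2n−2)/a, and let γ₂ be any number in (0,1) if β ≥ α + 2n − 1 − (2n−2)/a. Then every classical solution u of det D²u = F(x,u) in Ω with u = 0 on ∂Ω is γ₂-Hölder continuous on the closure of Ω. -/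
section AuxLemmas

open Filter Topology

open Matrix in
lemma aux_det_ge_one {n : ℕ} (H : Matrix (Fin n) (Fin n) ℝ) (hH : H.IsHermitian)
    (h : ∀ v : Fin n → ℝ, v ⬝ᵥ v ≤ v ⬝ᵥ (H *ᵥ v)) : 1 ≤ H.det := by
  rw [hH.det_eq_prod_eigenvalues]
  have h1 : ∀ i, 1 ≤ hH.eigenvalues i := by
    intro i
    have h2 := hH.eigenvalues_eq i
    have h3 := h (hH.eigenvectorBasis i)
    have h4 : ((hH.eigenvectorBasis i : Fin n → ℝ)) ⬝ᵥ (hH.eigenvectorBasis i : Fin n → ℝ) = 1 := by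
      have := hH.eigenvectorBasis.orthonormal.1 i
      rw [EuclideanSpace.norm_eq, Real.sqrt_eq_one] at this
      simpa [dotProduct, ← sq] using this
    simp at h2
    rw [h2, ← h4]
    exact h3
  simp only [RCLike.ofReal_real_eq_id, id]
  calc (1:ℝ) = ∏ _i : Fin n, (1:ℝ) := by simp
    _ ≤ _ := Finset.prod_le_prod (fun _ _ => zero_le_one) (fun i _ => h1 i)

open Matrix in
lemma aux_det_lower {n : ℕ} (H P : Matrix (Fin n) (Fin n) ℝ) (hH : H.IsHermitian)
    (hP : Pᵀ * P = 1) (D : Fin n → ℝ) (hD : ∀ i, 0 < D i)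
    (h : ∀ v : Fin n → ℝ, ∑ i, D i * ((Pᵀ *ᵥ v) i) ^ 2 ≤ v ⬝ᵥ (H *ᵥ v)) :
    ∏ i, D i ≤ H.det := by
  set S : Matrix (Fin n) (Fin n) ℝ := Matrix.diagonal fun i => (Real.sqrt (D i))⁻¹ with hS
  have hSt : Sᵀ = S := by simp [hS]
  have hdP : P.det * P.det = 1 := by
    have := congrArg Matrix.det hP
    simpa using this
  have hHt : Hᵀ = H := by simpa [Matrix.IsHermitian] using hH
  have hherm : ((P * S)ᵀ * H * (P * S)).IsHermitian := by
    simp only [Matrix.IsHermitian, Matrix.conjTranspose_eq_transpose_of_trivial,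
      Matrix.transpose_mul, Matrix.transpose_transpose, hHt, Matrix.mul_assoc]
  have key := aux_det_ge_one _ hherm (by
    intro v
    have h1 := h ((P * S) *ᵥ v)
    have e1 : v ⬝ᵥ (((P * S)ᵀ * H * (P * S)) *ᵥ v)
        = ((P * S) *ᵥ v) ⬝ᵥ (H *ᵥ ((P * S) *ᵥ v)) := by
      rw [Matrix.mul_assoc, ← Matrix.mulVec_mulVec, Matrix.dotProduct_mulVec,
        Matrix.vecMul_transpose, Matrix.mulVec_mulVec]
    have e2 : Pᵀ *ᵥ ((P * S) *ᵥ v) = S *ᵥ v := by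
      rw [Matrix.mulVec_mulVec, ← Matrix.mul_assoc, hP, Matrix.one_mul]
    rw [e1]
    refine le_trans (le_of_eq ?_) h1
    rw [e2]
    simp only [dotProduct, hS, Matrix.mulVec_diagonal]
    refine Finset.sum_congr rfl fun i _ => ?_
    rw [mul_pow, inv_pow, Real.sq_sqrt (hD i).le]
    have := (hD i).ne'
    field_simp)
  have hpos : 0 < ∏ i, D i := Finset.prod_pos fun i _ => hD i
  have e3 : ((P * S)ᵀ * H * (P * S)).det = H.det * (∏ i, D i)⁻¹ := by
    have e4 : S.det * S.det = (∏ i, D i)⁻¹ := by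
      rw [hS, Matrix.det_diagonal, ← Finset.prod_mul_distrib, ← Finset.prod_inv_distrib]
      refine Finset.prod_congr rfl fun i _ => ?_
      rw [← mul_inv, Real.mul_self_sqrt (hD i).le]
    rw [Matrix.det_mul, Matrix.det_mul, Matrix.det_transpose, Matrix.det_mul, ← e4]
    calc _ = (P.det * P.det) * H.det * (S.det * S.det) := by ring
      _ = _ := by rw [hdP]; ring
  rw [e3, ← div_eq_mul_inv, le_div_iff₀ hpos, one_mul] at key
  exact key

lemma aux_det_form {n : ℕ} (B : EuclideanSpace ℝ (Fin n) → EuclideanSpace ℝ (Fin n) → ℝ)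
    (L : EuclideanSpace ℝ (Fin n) →L[ℝ] EuclideanSpace ℝ (Fin n) →L[ℝ] ℝ)
    (hBL : ∀ v w, B v w = L v w)
    (hs : ∀ v w, L v w = L w v)
    (f : EuclideanSpace ℝ (Fin n) ≃ₗᵢ[ℝ] EuclideanSpace ℝ (Fin n))
    (D : Fin n → ℝ) (hD : ∀ i, 0 < D i)
    (h : ∀ v, ∑ i, D i * (f v i) ^ 2 ≤ L v v) :
    ∏ i, D i ≤ (Matrix.of fun i j : Fin n =>
      B (EuclideanSpace.single i (1 : ℝ)) (EuclideanSpace.single j (1 : ℝ))).det := by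
  simp only [hBL]
  refine aux_det_lower _ (Matrix.of fun k i => f.symm (EuclideanSpace.single i (1:ℝ)) k) ?_ ?_ D hD ?_
  · ext i j
    simp [Matrix.conjTranspose_apply, hs]
  · ext i j
    have := f.symm.inner_map_map (EuclideanSpace.single i (1:ℝ)) (EuclideanSpace.single j (1:ℝ))
    rw [PiLp.inner_apply] at this
    simp [Matrix.mul_apply, Matrix.one_apply] at this ⊢
    rw [EuclideanSpace.inner_single_left] at this
    simp at this
    rw [← this] 
    exact Finset.sum_congr rfl fun _ _ => mul_comm _ _
  · intro v
    have h1 := h (WithLp.toLp 2 v)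
    have hv : WithLp.toLp 2 v = ∑ i, v i • EuclideanSpace.single i (1:ℝ) := by
      ext j
      simp [Finset.sum_apply, Pi.single_apply]
    convert h1 using 1
    · refine Finset.sum_congr rfl fun i _ => ?_
      congr 2
      have := f.inner_map_map (f.symm (EuclideanSpace.single i (1:ℝ))) (WithLp.toLp 2 v)
      rw [f.apply_symm_apply, PiLp.inner_apply (f.symm _), EuclideanSpace.inner_single_left] at this
      simp at this
      rw [this]
      simp [Matrix.mulVec, dotProduct, mul_comm]
    · rw [hv]
      simp [Matrix.mulVec, dotProduct, Finset.mul_sum]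
      refine Finset.sum_congr rfl fun i _ => Finset.sum_congr rfl fun j _ => ?_
      rw [hs (EuclideanSpace.single i 1)]
      ring


lemma aux_second {φ φ' : ℝ → ℝ} {c : ℝ} (h1 : ∀ᶠ s in 𝓝 (0:ℝ), HasDerivAt φ (φ' s) s)
    (h2 : HasDerivAt φ' c 0) (hm : IsLocalMin φ 0) : 0 ≤ c := by
  by_contra hc
  push Not at hc
  have e1 : deriv φ =ᶠ[𝓝 0] φ' := h1.mono fun s hs => hs.deriv
  have e2 : deriv (deriv φ) 0 = c := by rw [e1.deriv_eq]; exact h2.deriv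
  have hM : IsLocalMax φ 0 := isLocalMax_of_deriv_deriv_neg (by rw [e2]; exact hc)
    hm.deriv_eq_zero h1.self_of_nhds.continuousAt
  have e3 : φ =ᶠ[𝓝 0] fun _ => φ 0 := by
    filter_upwards [hm, hM] with s a b using le_antisymm b a
  have e4 : deriv φ =ᶠ[𝓝 0] fun _ => 0 := by
    have := e3.deriv
    simpa using this
  have e5 : deriv (deriv φ) 0 = 0 := by rw [e4.deriv_eq]; simp
  rw [e2] at e5
  exact hc.ne e5

lemma aux_line_s4 {E : Type*} [NormedAddCommGroup E] [NormedSpace ℝ E] {u : E → ℝ} {p : E}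
    (hu : ContDiffAt ℝ 2 u p) (h : E) :
    (∀ᶠ s in 𝓝 (0:ℝ), HasDerivAt (fun s : ℝ => u (p + s • h)) (fderiv ℝ u (p + s • h) h) s) ∧
    HasDerivAt (fun s : ℝ => fderiv ℝ u (p + s • h) h) (fderiv ℝ (fderiv ℝ u) p h h) 0 := by
  have hl : ∀ s : ℝ, HasDerivAt (fun s : ℝ => p + s • h) h s := by
    intro s
    simpa using ((hasDerivAt_id s).smul_const h).const_add p
  constructor
  · have h1 : ∀ᶠ x in 𝓝 p, DifferentiableAt ℝ u x := by
      have := hu.eventually (by simp)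
      exact this.mono fun x hx => hx.differentiableAt (by simp)
    have h2 : Tendsto (fun s : ℝ => p + s • h) (𝓝 0) (𝓝 p) := by
      have := (hl 0).continuousAt.tendsto
      simpa using this
    filter_upwards [h2.eventually h1] with s hs
    exact hs.hasFDerivAt.comp_hasDerivAt s (hl s)
  · have h1 : DifferentiableAt ℝ (fderiv ℝ u) p :=
      (hu.fderiv_right (m := 1) (by norm_num)).differentiableAt (by simp)
    have h2 : HasFDerivAt (fderiv ℝ u) (fderiv ℝ (fderiv ℝ u) p) (p + (0:ℝ) • h) := by
      simpa using h1.hasFDerivAt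
    have h3 := h2.comp_hasDerivAt (0:ℝ) (hl 0)
    simpa using h3.clm_apply (hasDerivAt_const (0:ℝ) h)

lemma aux_w (K M γ m T τ R b c : ℝ) (hT : 0 < T) :
    ∃ w' : ℝ → ℝ, (∀ᶠ s in 𝓝 (0:ℝ), HasDerivAt (fun s : ℝ =>
        -(K * (M * (T + s * τ) ^ γ - (R + 2 * s * b + s ^ 2 * c) * (T + s * τ) ^ m))) (w' s) s) ∧
      HasDerivAt w' (K * (M * (γ * (1 - γ)) * T ^ (γ - 2) * τ ^ 2 + 2 * c * T ^ m
        + 4 * b * m * T ^ (m - 1) * τ + R * (m * (m - 1)) * T ^ (m - 2) * τ ^ 2)) 0 := by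
  have hl : ∀ s : ℝ, HasDerivAt (fun s : ℝ => T + s * τ) τ s := by
    intro s
    simpa using ((hasDerivAt_id s).mul_const τ).const_add T
  have hR : ∀ s : ℝ, HasDerivAt (fun s : ℝ => R + 2 * s * b + s ^ 2 * c) (2 * b + 2 * s * c) s := by
    intro s
    have h1 := ((((hasDerivAt_id s).const_mul 2).mul_const b).const_add R).add
      (((hasDerivAt_id s).pow 2).mul_const c)
    refine HasDerivAt.congr_deriv h1 ?_
    simp
  have hp : ∀ (r s : ℝ), 0 < T + s * τ →
      HasDerivAt (fun s : ℝ => (T + s * τ) ^ r) (τ * r * (T + s * τ) ^ (r - 1)) s := by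
    intro r s hs
    exact (hl s).rpow_const (Or.inl hs.ne')
  have hR' : HasDerivAt (fun s : ℝ => 2 * b + 2 * s * c) (2 * c) 0 := by
    have h1 := (((hasDerivAt_id (0:ℝ)).const_mul 2).mul_const c).const_add (2 * b)
    simpa using h1
  refine ⟨fun s => -(K * (M * (τ * γ * (T + s * τ) ^ (γ - 1)) - ((2 * b + 2 * s * c) * (T + s * τ) ^ m
    + (R + 2 * s * b + s ^ 2 * c) * (τ * m * (T + s * τ) ^ (m - 1))))), ?_, ?_⟩
  · have hev : ∀ᶠ s in 𝓝 (0:ℝ), 0 < T + s * τ := by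
      have := (hl 0).continuousAt.eventually (lt_mem_nhds (a := 0) (by simpa using hT))
      exact this
    filter_upwards [hev] with s hs
    exact ((((hp γ s hs).const_mul M).sub ((hR s).mul (hp m s hs))).const_mul K).neg
  · have h0 : 0 < T + 0 * τ := by simpa using hT
    have h1 := (((((hp (γ-1) 0 h0).const_mul (τ * γ)).const_mul M).sub
      ((hR'.mul (hp m 0 h0)).add ((hR 0).mul ((hp (m-1) 0 h0).const_mul (τ * m))))).const_mul K).neg
    refine HasDerivAt.congr_deriv h1 ?_
    simp only [zero_mul, mul_zero, add_zero]
    rw [show γ - 1 - 1 = γ - 2 by ring, show m - 1 - 1 = m - 2 by ring]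
    ring

lemma aux_w_lower {K M γ m δ T τ R b c c0 : ℝ} (hT : 0 < T) (hK : 0 < K) (hm : m = γ - δ)
    (hR0 : 0 ≤ R) (hR : R ≤ c0 * T ^ δ) (hc : 0 ≤ c)
    (hb : b ^ 2 ≤ R * c) (hM : 1 + c0 * (4 * m ^ 2 + |m * (m - 1)|) ≤ M * (γ * (1 - γ))) :
    K * (T ^ m * c + T ^ (γ - 2) * τ ^ 2) ≤
    K * (M * (γ * (1 - γ)) * T ^ (γ - 2) * τ ^ 2 + 2 * c * T ^ m
        + 4 * b * m * T ^ (m - 1) * τ + R * (m * (m - 1)) * T ^ (m - 2) * τ ^ 2) := by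
  refine mul_le_mul_of_nonneg_left ?_ hK.le
  have hp : 0 < T ^ (m - 2) := Real.rpow_pos_of_pos hT _
  have e1 : T ^ (m - 1) = T ^ (m - 2) * T := by
    rw [← Real.rpow_add_one hT.ne']; congr 1; ring
  have e2 : T ^ m = T ^ (m - 2) * T ^ 2 := by
    rw [← Real.rpow_natCast T 2, ← Real.rpow_add hT]; congr 1; push_cast; ring
  have e3 : T ^ (γ - 2) = T ^ (m - 2) * T ^ δ := by
    rw [← Real.rpow_add hT]; congr 1; rw [hm]; ring
  have q : 0 ≤ c * T ^ 2 + 4 * b * m * T * τ + 4 * m ^ 2 * R * τ ^ 2 := by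
    rcases hc.eq_or_lt with h0 | h0
    · have : b = 0 := by
        rw [← h0, mul_zero] at hb
        exact pow_eq_zero_iff (two_ne_zero) |>.1 (le_antisymm hb (sq_nonneg b))
      rw [this, ← h0]
      simp
      positivity
    · have h1 : 0 ≤ c * (c * T ^ 2 + 4 * b * m * T * τ + 4 * m ^ 2 * R * τ ^ 2) := by
        have := mul_nonneg (sub_nonneg.2 hb) (sq_nonneg (2 * m * τ))
        nlinarith [sq_nonneg (c * T + 2 * b * m * τ)]
      exact nonneg_of_mul_nonneg_right h1 h0
  have hTd : 0 < T ^ δ := Real.rpow_pos_of_pos hT _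
  set X := T ^ (m - 2)
  set Y := T ^ δ
  have h1 : R * (4 * m ^ 2 + |m * (m - 1)|) ≤ (M * (γ * (1 - γ)) - 1) * Y := by
    calc _ ≤ (c0 * Y) * (4 * m ^ 2 + |m * (m - 1)|) := by gcongr
      _ = c0 * (4 * m ^ 2 + |m * (m - 1)|) * Y := by ring
      _ ≤ _ := by gcongr; linarith
  have h2 : -(R * |m * (m - 1)|) ≤ R * (m * (m - 1)) := by
    have := mul_le_mul_of_nonneg_left (neg_abs_le (m * (m-1))) hR0
    linarith
  have h3 : 0 ≤ ((M * (γ * (1 - γ)) - 1) * Y + R * (m * (m - 1)) - 4 * m ^ 2 * R) * τ ^ 2 := by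
    refine mul_nonneg ?_ (sq_nonneg _)
    linarith
  rw [e1, e2, e3]
  have := mul_nonneg hp.le (add_nonneg q h3)
  linarith

lemma aux_frontier {E : Type*} [NormedAddCommGroup E] [NormedSpace ℝ E] {Ω : Set E}
    (ho : IsOpen Ω) {x q : E} (hx : x ∈ Ω) (hq : q ∉ Ω) :
    ∃ z ∈ frontier Ω, z ∈ segment ℝ x q := by
  by_contra hcon
  push Not at hcon
  have hpre : IsPreconnected (segment ℝ x q) := (convex_segment x q).isPreconnected
  have hcov : segment ℝ x q ⊆ Ω ∪ (closure Ω)ᶜ := by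
    intro z hz
    by_cases hzΩ : z ∈ Ω
    · exact Or.inl hzΩ
    · right
      intro hc
      refine hcon z ?_ hz
      rw [ho.frontier_eq]
      exact ⟨hc, hzΩ⟩
  have hqc : q ∈ (closure Ω)ᶜ := (hcov (right_mem_segment ℝ x q)).resolve_left hq
  obtain ⟨z, -, hz1, hz2⟩ := hpre Ω (closure Ω)ᶜ ho isClosed_closure.isOpen_compl hcov
    ⟨x, left_mem_segment ℝ x q, hx⟩ ⟨q, right_mem_segment ℝ x q, hqc⟩
  exact hz2 (subset_closure hz1)

lemma aux_infDist {E : Type*} [NormedAddCommGroup E] [NormedSpace ℝ E] {Ω : Set E}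
    (ho : IsOpen Ω) {x q : E} (hx : x ∈ Ω) (hq : q ∉ Ω) :
    Metric.infDist x (frontier Ω) ≤ ‖x - q‖ := by
  obtain ⟨z, hz, hs⟩ := aux_frontier ho hx hq
  refine (Metric.infDist_le_dist_of_mem hz).trans ?_
  obtain ⟨a, b, ha, hb, hab, rfl⟩ := hs
  rw [dist_eq_norm, show x - (a • x + b • q) = b • (x - q) by
    rw [show a = 1 - b by linarith]; module, norm_smul, Real.norm_eq_abs, abs_of_nonneg hb]
  exact mul_le_of_le_one_left (norm_nonneg _) (by linarith)

lemma aux_arith {n : ℕ} (hn : 1 ≤ n) {K T A α β γ m δ d w T0 : ℝ} (hK : 0 < K) (hT : 0 < T)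
    (hA : 0 < A) (hα : 0 ≤ α) (hβ : (n : ℝ) + 1 ≤ β) (hm : m = γ - δ)
    (he : γ * (n + α) ≤ β - n + 1 + (n - 1) * δ) (hTT : T ≤ T0)
    (hKK : A * T0 ^ (β - n + 1 + (n - 1) * δ - γ * (n + α)) < K ^ ((n : ℝ) + α))
    (hd0 : 0 ≤ d) (hd : d ≤ T) (hw : K * T ^ γ ≤ w) :
    A * d ^ (β - n - 1) * w ^ (-α) < K * T ^ (γ - 2) * (K * T ^ m) ^ (n - 1) := by
  have h1 : d ^ (β - n - 1) ≤ T ^ (β - n - 1) := Real.rpow_le_rpow hd0 hd (by linarith)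
  have h2 : w ^ (-α) ≤ (K * T ^ γ) ^ (-α) :=
    Real.rpow_le_rpow_of_nonpos (by positivity) hw (by linarith)
  have h2' : 0 ≤ w ^ (-α) := Real.rpow_nonneg (le_trans (by positivity) hw) _
  set e := β - n + 1 + (n - 1) * δ - γ * (n + α) with hedef
  have h3 : T ^ e ≤ T0 ^ e := Real.rpow_le_rpow hT.le hTT (by linarith)
  have e1 : (K * T ^ γ) ^ (-α) = K ^ (-α) * T ^ (-(γ * α)) := by
    rw [Real.mul_rpow hK.le (Real.rpow_nonneg hT.le _), ← Real.rpow_mul hT.le]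
    congr 2; ring
  have e2 : K * T ^ (γ - 2) * (K * T ^ m) ^ (n - 1)
      = K ^ (n:ℝ) * T ^ (γ - 2 + m * (n - 1)) := by
    rw [mul_pow, ← Real.rpow_mul_natCast hT.le, Nat.cast_sub hn, Nat.cast_one, Real.rpow_add hT]
    have : K ^ (n:ℝ) = K * K ^ (n - 1) := by
      rw [Real.rpow_natCast, ← pow_succ', Nat.sub_add_cancel hn]
    rw [this]; ring
  have e3 : T ^ (β - n - 1) * T ^ (-(γ * α)) = T ^ e * T ^ (γ - 2 + m * (n - 1)) := by
    rw [← Real.rpow_add hT, ← Real.rpow_add hT]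
    congr 1; rw [hedef, hm]; ring
  have e4 : K ^ ((n:ℝ) + α) * K ^ (-α) = K ^ (n:ℝ) := by
    rw [← Real.rpow_add hK]; congr 1; ring
  have hKa : 0 < K ^ (-α) := Real.rpow_pos_of_pos hK _
  have hTp : 0 < T ^ (γ - 2 + m * (n - 1)) := Real.rpow_pos_of_pos hT _
  rw [e2]
  calc A * d ^ (β - n - 1) * w ^ (-α) ≤ A * T ^ (β - n - 1) * (K ^ (-α) * T ^ (-(γ * α))) := by
        rw [← e1]; gcongr
    _ = (A * T ^ e) * K ^ (-α) * T ^ (γ - 2 + m * (n - 1)) := by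
        linear_combination A * K ^ (-α) * e3
    _ ≤ (A * T0 ^ e) * K ^ (-α) * T ^ (γ - 2 + m * (n - 1)) := by gcongr
    _ < K ^ ((n:ℝ) + α) * K ^ (-α) * T ^ (γ - 2 + m * (n - 1)) := by gcongr
    _ = _ := by rw [e4]

lemma aux_point {n : ℕ} (hn : 0 < n) {a η A α β γ δ m c0 K M D : ℝ} (ha : 2 < a) (hη : 0 < η)
    (hA : 0 < A) (hα : 0 ≤ α) (hβ : (n : ℝ) + 1 ≤ β) (hγ0 : 0 < γ)
    (hδ : δ = 2 / a) (hm : m = γ - δ)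
    (he : γ * (n + α) ≤ β - n + 1 + (n - 1) * δ)
    (hc0 : c0 = (η⁻¹) ^ δ) (hK : 0 < K)
    (hM1 : 1 + c0 ≤ M) (hM2 : 1 + c0 * (4 * m ^ 2 + |m * (m - 1)|) ≤ M * (γ * (1 - γ)))
    (hKK : A * (2 * D) ^ (β - n + 1 + (n - 1) * δ - γ * (n + α)) < K ^ ((n : ℝ) + α))
    {Ω : Set (EuclideanSpace ℝ (Fin n))} {F : EuclideanSpace ℝ (Fin n) → ℝ → ℝ}
    {u : EuclideanSpace ℝ (Fin n) → ℝ}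
    (hΩopen : IsOpen Ω) (hcomp : IsCompact (closure Ω))
    (hD : ∀ x ∈ closure Ω, ∀ y ∈ closure Ω, ‖x - y‖ ≤ D)
    (hF : SatisfiesFCond Ω F A α β)
    (hu : IsClassicalSolution Ω F u)
    {x₀ : EuclideanSpace ℝ (Fin n)} (hx₀ : x₀ ∈ frontier Ω) (hp : IsATypePoint hn Ω a η x₀)
    {z : EuclideanSpace ℝ (Fin n)} (hz : z ∈ closure Ω) (hzx : z ≠ x₀) :
    -(K * M * (2 * ‖z - x₀‖) ^ γ) ≤ u z := by
  obtain ⟨f, hf⟩ := hp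
  obtain ⟨hucont, -, huC2, huneg, hubd, hudet⟩ := hu
  obtain ⟨-, hFmono, hFb⟩ := hF
  set l := lastIdx n hn with hl
  set ε := ‖z - x₀‖ with hε
  have hε0 : 0 < ε := norm_pos_iff.2 (sub_ne_zero.2 hzx)
  have hx₀c : x₀ ∈ closure Ω := frontier_subset_closure hx₀
  let t : EuclideanSpace ℝ (Fin n) → ℝ := fun y => f (y - x₀) l
  let R : EuclideanSpace ℝ (Fin n) → ℝ := fun y => ∑ j ∈ Finset.univ.erase l, f (y - x₀) j ^ 2
  let T : EuclideanSpace ℝ (Fin n) → ℝ := fun y => t y + ε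
  let W : EuclideanSpace ℝ (Fin n) → ℝ := fun y => -(K * (M * (T y) ^ γ - R y * (T y) ^ m))
  have htc : Continuous t := by fun_prop
  have hRc : Continuous R := by fun_prop
  have hTc : Continuous T := htc.add continuous_const
  have hR0 : ∀ y, 0 ≤ R y := fun y => Finset.sum_nonneg fun j _ => sq_nonneg _
  have hcl : ∀ y ∈ closure Ω, η * Real.sqrt (R y) ^ a ≤ t y := by
    intro y hy
    refine le_on_closure (s := Ω) (f := fun y => η * Real.sqrt (R y) ^ a) (g := t) hf ?_
      htc.continuousOn hy
    exact (continuous_const.mul (hRc.sqrt.rpow_const fun _ => Or.inr (by linarith))).continuousOn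
  have ht0 : ∀ y ∈ closure Ω, 0 ≤ t y := fun y hy =>
    le_trans (mul_nonneg hη.le (Real.rpow_nonneg (Real.sqrt_nonneg _) _)) (hcl y hy)
  have hT0 : ∀ y ∈ closure Ω, 0 < T y := fun y hy => add_pos_of_nonneg_of_pos (ht0 y hy) hε0
  have htn : ∀ y, t y ≤ ‖y - x₀‖ := by
    intro y
    have := PiLp.norm_apply_le (f (y - x₀)) l
    rw [f.norm_map] at this
    exact (le_abs_self _).trans this
  have hTD : ∀ y ∈ closure Ω, T y ≤ 2 * D := by
    intro y hy
    have h1 := hD y hy x₀ hx₀c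
    have h2 := hD z hz x₀ hx₀c
    have h3 := htn y
    simp only [T]
    linarith
  have hδ0 : 0 < δ := by rw [hδ]; positivity
  have hc00 : 0 ≤ c0 := by rw [hc0]; positivity
  have hRb : ∀ y ∈ closure Ω, R y ≤ c0 * T y ^ δ := by
    intro y hy
    have h1 : Real.sqrt (R y) ^ a ≤ η⁻¹ * T y := by
      rw [inv_mul_eq_div, le_div_iff₀ hη]
      have := hcl y hy
      simp only [T]
      linarith
    have h2 : (Real.sqrt (R y) ^ a) ^ δ ≤ (η⁻¹ * T y) ^ δ :=
      Real.rpow_le_rpow (Real.rpow_nonneg (Real.sqrt_nonneg _) _) h1 hδ0.le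
    rw [← Real.rpow_mul (Real.sqrt_nonneg _), hδ, mul_div_cancel₀ _ (by linarith), Real.rpow_two,
      Real.sq_sqrt (hR0 y), ← hδ, Real.mul_rpow (by positivity) (hT0 y hy).le, ← hc0] at h2
    exact h2
  have hRT : ∀ y ∈ closure Ω, R y * T y ^ m ≤ c0 * T y ^ γ := by
    intro y hy
    have h1 : T y ^ γ = T y ^ δ * T y ^ m := by
      rw [← Real.rpow_add (hT0 y hy)]; congr 1; rw [hm]; ring
    rw [h1, ← mul_assoc]
    exact mul_le_mul_of_nonneg_right (hRb y hy) (Real.rpow_nonneg (hT0 y hy).le _)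
  have hWup : ∀ y ∈ closure Ω, K * T y ^ γ ≤ -W y := by
    intro y hy
    simp only [W, neg_neg]
    refine mul_le_mul_of_nonneg_left ?_ hK.le
    have h1 : 0 < T y ^ γ := Real.rpow_pos_of_pos (hT0 y hy) _
    have h2 := mul_le_mul_of_nonneg_right hM1 h1.le
    have h3 := hRT y hy
    linarith
  have hWneg : ∀ y ∈ closure Ω, W y < 0 := by
    intro y hy
    have h1 : 0 < K * T y ^ γ := mul_pos hK (Real.rpow_pos_of_pos (hT0 y hy) _)
    have := hWup y hy
    linarith
  have hWc : ContinuousOn W (closure Ω) := by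
    have h1 : ∀ r : ℝ, ContinuousOn (fun y => T y ^ r) (closure Ω) := fun r =>
      hTc.continuousOn.rpow_const fun y hy => Or.inl (hT0 y hy).ne'
    exact (continuousOn_const.mul ((continuousOn_const.mul (h1 γ)).sub
      (hRc.continuousOn.mul (h1 m)))).neg
  by_contra hcon
  push Not at hcon
  have hWz : -(K * M * (2 * ε) ^ γ) ≤ W z := by
    simp only [W]
    have h1 : T z ^ γ ≤ (2 * ε) ^ γ := by
      refine Real.rpow_le_rpow (hT0 z hz).le ?_ hγ0.le
      have := htn z
      simp only [T]
      linarith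
    have h2 : 0 ≤ R z * T z ^ m := mul_nonneg (hR0 z) (Real.rpow_nonneg (hT0 z hz).le _)
    have hM0 : 0 ≤ M := by linarith
    have h3 : K * M * T z ^ γ ≤ K * M * (2 * ε) ^ γ := by gcongr
    have h4 := mul_nonneg hK.le h2
    linarith
  obtain ⟨p, hpc, hpmin⟩ := hcomp.exists_isMinOn ⟨z, hz⟩ (hucont.sub hWc)
  have hpneg : u p < W p := by
    have : u p - W p ≤ u z - W z := hpmin hz
    linarith
  have hpΩ : p ∈ Ω := by
    by_contra hno
    have : p ∈ frontier Ω := by rw [hΩopen.frontier_eq]; exact ⟨hpc, hno⟩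
    have h1 := hubd p this
    have h2 := hWneg p hpc
    linarith
  have hTp := hT0 p hpc
  have huC : ContDiffAt ℝ 2 u p := huC2.contDiffAt (hΩopen.mem_nhds hpΩ)
  -- the Hessian lower bound
  let Dg : Fin n → ℝ := fun i => if i = l then K * T p ^ (γ - 2) else K * T p ^ m
  have hDg : ∀ i, 0 < Dg i := by
    intro i
    simp only [Dg]
    split_ifs <;> exact mul_pos hK (Real.rpow_pos_of_pos hTp _)
  have hquad : ∀ v, ∑ i, Dg i * (f v i) ^ 2 ≤ fderiv ℝ (fderiv ℝ u) p v v := by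
    intro v
    set τ := f v l with hτ
    set b := ∑ j ∈ Finset.univ.erase l, f (p - x₀) j * f v j with hb
    set c := ∑ j ∈ Finset.univ.erase l, f v j ^ 2 with hc
    have hfl : ∀ (s : ℝ) (j : Fin n), f (p + s • v - x₀) j = f (p - x₀) j + s * f v j := by
      intro s j
      rw [show p + s • v - x₀ = (p - x₀) + s • v by abel, map_add, map_smul]
      simp
    have hWl : ∀ s : ℝ, W (p + s • v) =
        -(K * (M * (T p + s * τ) ^ γ - (R p + 2 * s * b + s ^ 2 * c) * (T p + s * τ) ^ m)) := by
      intro s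
      have h1 : T (p + s • v) = T p + s * τ := by
        simp only [T, t, hfl]; ring
      have h2 : R (p + s • v) = R p + 2 * s * b + s ^ 2 * c := by
        simp only [R, hfl, hb, hc, Finset.mul_sum, ← Finset.sum_add_distrib]
        refine Finset.sum_congr rfl fun j _ => ?_
        ring
      simp only [W, h1, h2]
    obtain ⟨w', hw1, hw2⟩ := aux_w K M γ m (T p) τ (R p) b c hTp
    obtain ⟨hu1, hu2⟩ := aux_line_s4 huC v
    have hlow := aux_w_lower (τ := τ) (b := b) (c := c) hTp hK hm (hR0 p) (hRb p hpc)
      (Finset.sum_nonneg fun j _ => sq_nonneg _)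
      (Finset.sum_mul_sq_le_sq_mul_sq _ _ _) hM2
    have hloc : IsLocalMin (fun s : ℝ => u (p + s • v) -
        -(K * (M * (T p + s * τ) ^ γ - (R p + 2 * s * b + s ^ 2 * c) * (T p + s * τ) ^ m))) 0 := by
      have h1 : Tendsto (fun s : ℝ => p + s • v) (𝓝 0) (𝓝 p) := by
        have : Continuous fun s : ℝ => p + s • v := by fun_prop
        simpa using this.tendsto 0
      filter_upwards [h1.eventually (hΩopen.mem_nhds hpΩ)] with s hs
      have h2 : u p - W p ≤ u (p + s • v) - W (p + s • v) := hpmin (subset_closure hs)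
      rw [← hWl s, ← hWl 0]
      simpa using h2
    have hsec := aux_second (hu1.and hw1 |>.mono fun s hs => hs.1.sub hs.2) (hu2.sub hw2) hloc
    have hsum : ∑ i, Dg i * (f v i) ^ 2 = K * (T p ^ m * c + T p ^ (γ - 2) * τ ^ 2) := by
      rw [← Finset.add_sum_erase _ _ (Finset.mem_univ l)]
      have : ∑ i ∈ Finset.univ.erase l, Dg i * (f v i) ^ 2 = K * T p ^ m * c := by
        rw [hc, Finset.mul_sum]
        refine Finset.sum_congr rfl fun j hj => ?_
        simp only [Dg, if_neg (Finset.ne_of_mem_erase hj)]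
      rw [this]
      simp only [Dg, if_true]
      ring
    rw [hsum]
    linarith
  have hdet : ∏ i, Dg i ≤ hessianDet u p := by
    refine aux_det_form (fun v w => iteratedFDeriv ℝ 2 u p ![v, w]) (fderiv ℝ (fderiv ℝ u) p)
      ?_ ?_ f Dg hDg hquad
    · intro v w
      simp [iteratedFDeriv_two_apply]
    · exact huC.isSymmSndFDerivAt (by simp)
  have hprod : ∏ i, Dg i = K * T p ^ (γ - 2) * (K * T p ^ m) ^ (n - 1) := by
    rw [← Finset.mul_prod_erase _ _ (Finset.mem_univ l)]
    congr 1
    · simp [Dg]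
    · rw [Finset.prod_congr rfl (g := fun _ => K * T p ^ m)
        (fun j hj => by simp only [Dg, if_neg (Finset.ne_of_mem_erase hj)])]
      simp [Finset.card_erase_of_mem]
  have hdist : Metric.infDist p (frontier Ω) ≤ T p := by
    have hq : p - T p • f.symm (EuclideanSpace.single l 1) ∉ Ω := by
      intro hq
      have h1 := ht0 _ (subset_closure hq)
      have h2 : t (p - T p • f.symm (EuclideanSpace.single l 1)) = t p - T p := by
        simp only [t]
        rw [show p - T p • f.symm (EuclideanSpace.single l 1) - x₀
          = (p - x₀) - T p • f.symm (EuclideanSpace.single l 1) by abel, map_sub, map_smul,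
          f.apply_symm_apply]
        simp
      rw [h2] at h1
      simp only [T] at h1
      linarith
    refine (aux_infDist hΩopen hpΩ hq).trans (le_of_eq ?_)
    rw [sub_sub_cancel, norm_smul, f.symm.norm_map]
    simp [abs_of_pos hTp]
  have hFW := (hFb p hpΩ (W p) (hWneg p hpc)).2
  have hFu := hFmono p hpΩ (u p) (W p) hpneg.le (hWneg p hpc)
  have hfin := aux_arith (m := m) hn hK hTp hA hα hβ hm he (hTD p hpc) hKK Metric.infDist_nonneg
    hdist (hWup p hpc)
  rw [abs_of_neg (hWneg p hpc)] at hFW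
  rw [hprod, hudet p hpΩ] at hdet
  linarith

lemma aux_holder {E : Type*} [NormedAddCommGroup E] [NormedSpace ℝ E] {Ω : Set E} {u : E → ℝ}
    {C γ : ℝ} (hC : 0 ≤ C) (ho : IsOpen Ω) (hΩb : Bornology.IsBounded Ω)
    (hconv : Convex ℝ Ω)
    (huc : ContinuousOn u (closure Ω)) (hucv : ConvexOn ℝ Ω u) (hubd : ∀ x ∈ frontier Ω, u x = 0)
    (hb : ∀ z ∈ frontier Ω, ∀ w ∈ closure Ω, -u w ≤ C * ‖w - z‖ ^ γ) :
    ∀ x ∈ closure Ω, ∀ y ∈ closure Ω, u x - u y ≤ C * ‖x - y‖ ^ γ := by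
  have hcc : Convex ℝ (closure Ω) := hconv.closure
  have hcv : ∀ a b : ℝ, 0 ≤ a → 0 ≤ b → a + b = 1 → ∀ x ∈ closure Ω, ∀ y ∈ closure Ω,
      u (a • x + b • y) ≤ a * u x + b * u y := by
    intro a b ha hb' hab x hx y hy
    have hmem : (x, y) ∈ closure (Ω ×ˢ Ω) := by rw [closure_prod_eq]; exact ⟨hx, hy⟩
    refine le_on_closure (s := Ω ×ˢ Ω) (f := fun q : E × E => u (a • q.1 + b • q.2))
      (g := fun q : E × E => a * u q.1 + b * u q.2) ?_ ?_ ?_ hmem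
    · rintro ⟨q1, q2⟩ ⟨h1, h2⟩
      exact hucv.2 h1 h2 ha hb' hab
    · rw [closure_prod_eq]
      refine huc.comp (by fun_prop) ?_
      rintro ⟨q1, q2⟩ ⟨h1, h2⟩
      exact hcc h1 h2 ha hb' hab
    · rw [closure_prod_eq]
      refine (continuousOn_const.mul (huc.comp continuousOn_fst fun q hq => hq.1)).add
        (continuousOn_const.mul (huc.comp continuousOn_snd fun q hq => hq.2))
  intro x hx y hy
  by_cases hxΩ : x ∈ Ω
  · rcases eq_or_ne x y with rfl | hxy
    · rw [sub_self]
      exact mul_nonneg hC (Real.rpow_nonneg (norm_nonneg _) _)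
    have hpos : 0 < ‖x - y‖ := norm_pos_iff.2 (sub_ne_zero.2 hxy)
    obtain ⟨r, hr⟩ := hΩb.subset_closedBall x
    have hr0 : 0 ≤ r := by
      have := hr hxΩ
      simpa using this
    obtain ⟨N, hN⟩ : ∃ N : ℝ, N = (r + 1) / ‖x - y‖ := ⟨_, rfl⟩
    have hN0 : 0 < N := by rw [hN]; positivity
    have hq : x + N • (x - y) ∉ Ω := by
      intro hq
      have := hr hq
      rw [Metric.mem_closedBall, dist_eq_norm, add_sub_cancel_left, norm_smul, Real.norm_eq_abs,
        abs_of_pos hN0, hN, div_mul_cancel₀ _ hpos.ne'] at this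
      linarith
    obtain ⟨z, hz, a, b, ha, hb', hab, hzz⟩ := aux_frontier ho hxΩ hq
    obtain ⟨s, hs⟩ : ∃ s : ℝ, s = b * N := ⟨_, rfl⟩
    have hs0 : 0 ≤ s := by rw [hs]; positivity
    have hzs : z = x + s • (x - y) := by
      rw [← hzz, hs, show a = 1 - b by linarith]; module
    have hzc : z ∈ closure Ω := frontier_subset_closure hz
    have hden : 0 < 1 + s := by linarith
    obtain ⟨θ, hθ⟩ : ∃ θ : ℝ, θ = 1 / (1 + s) := ⟨_, rfl⟩
    have hθ0 : 0 ≤ θ := by rw [hθ]; positivity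
    have hθ1 : 0 ≤ 1 - θ := by
      rw [hθ, sub_nonneg, div_le_one hden]; linarith
    have hθs : θ * (1 + s) = 1 := by rw [hθ]; field_simp
    have hx1 : (1 - θ) • y + θ • z = x := by
      rw [hzs]
      have : (1 - θ) • y + θ • (x + s • (x - y))
          = (θ * (1 + s)) • x + (1 - θ * (1 + s)) • y := by module
      rw [this, hθs]; simp
    have hw1 : θ • y + (1 - θ) • z = z + y - x := by
      rw [← hx1]; module
    have h1 := hcv (1 - θ) θ hθ1 hθ0 (by ring) y hy z hzc
    have h2 := hcv θ (1 - θ) hθ0 hθ1 (by ring) y hy z hzc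
    rw [hx1] at h1
    have hwc : z + y - x ∈ closure Ω := by
      rw [← hw1]; exact hcc hy hzc hθ0 hθ1 (by ring)
    rw [hw1] at h2
    have h3 := hb z hz _ hwc
    rw [show z + y - x - z = -(x - y) by abel, norm_neg] at h3
    have h4 := hubd z hz
    rw [h4] at h1 h2
    linarith
  · have hxf : x ∈ frontier Ω := by rw [ho.frontier_eq]; exact ⟨hx, hxΩ⟩
    have := hb x hxf y hy
    rw [hubd x hxf, norm_sub_rev]
    linarith

end AuxLemmas

/-- Theorem 1.2: on an `(a,η)` type domain with `a > 2`, every classical solution is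
`γ₂`-Hölder continuous on the closure of `Ω`. -/
theorem global_holder_regularity_aEta_domain
    (n : ℕ) (hn : 2 ≤ n) (a η A α β γ₂ : ℝ) (ha : 2 < a) (hη : 0 < η)
    (hA : 0 < A) (hα : 0 ≤ α) (hβ : (n : ℝ) + 1 ≤ β)
    (hγ₂ : (β < α + 2 * n - 1 - (2 * n - 2) / a ∧
        γ₂ = (β - n + 1) / (n + α) + (2 * n - 2) / (a * (n + α))) ∨
      (α + 2 * n - 1 - (2 * n - 2) / a ≤ β ∧ γ₂ ∈ Set.Ioo (0 : ℝ) 1))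
    (Ω : Set (EuclideanSpace ℝ (Fin n))) (F : EuclideanSpace ℝ (Fin n) → ℝ → ℝ)
    (u : EuclideanSpace ℝ (Fin n) → ℝ)
    (hΩopen : IsOpen Ω) (hΩconv : Convex ℝ Ω)
    (hΩbdd : Bornology.IsBounded Ω) (hΩne : Ω.Nonempty)
    (hΩtype : IsATypeDomain (by omega) Ω a η)
    (hF : SatisfiesFCond Ω F A α β)
    (hu : IsClassicalSolution Ω F u) :
    ∃ C : ℝ, 0 < C ∧
      ∀ x ∈ closure Ω, ∀ y ∈ closure Ω, |u x - u y| ≤ C * ‖x - y‖ ^ γ₂ := by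
  have hn0 : 0 < n := by omega
  have hnR : (2:ℝ) ≤ n := by exact_mod_cast hn
  have ha0 : 0 < a := by linarith
  have hnα : 0 < (n:ℝ) + α := by linarith
  obtain ⟨δ, hδ⟩ : ∃ δ : ℝ, δ = 2 / a := ⟨_, rfl⟩
  have hδa : (2 * (n:ℝ) - 2) / a = (n - 1) * δ := by rw [hδ]; ring
  have hδ0 : 0 < δ := by rw [hδ]; positivity
  have hγ : 0 < γ₂ ∧ γ₂ < 1 ∧ γ₂ * (n + α) ≤ β - n + 1 + (n - 1) * δ := by
    have hnδ : 0 < ((n:ℝ) - 1) * δ := mul_pos (by linarith) hδ0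
    rw [hδa] at hγ₂
    rcases hγ₂ with ⟨h1, h2⟩ | ⟨h1, h2, h3⟩
    · have h3 : γ₂ = (β - n + 1 + (n - 1) * δ) / (n + α) := by
        rw [h2, ← hδa]
        field_simp
      refine ⟨?_, ?_, ?_⟩
      · rw [h3]
        exact div_pos (by linarith) hnα
      · rw [h3, div_lt_one hnα]
        linarith
      · rw [h3, div_mul_cancel₀ _ hnα.ne']
    · refine ⟨h2, h3, ?_⟩
      have := mul_le_mul_of_nonneg_right h3.le hnα.le
      linarith
  obtain ⟨hγ0, hγ1, he⟩ := hγ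
  have hcomp : IsCompact (closure Ω) := hΩbdd.isCompact_closure
  obtain ⟨D, hD⟩ : ∃ D : ℝ, ∀ x ∈ closure Ω, ∀ y ∈ closure Ω, ‖x - y‖ ≤ D := by
    obtain ⟨D, hD⟩ := Metric.isBounded_iff.1 hcomp.isBounded
    exact ⟨D, fun x hx y hy => by rw [← dist_eq_norm]; exact hD hx hy⟩
  obtain ⟨x1, hx1⟩ := hΩne
  have hD0 : 0 ≤ D := (norm_nonneg _).trans (hD x1 (subset_closure hx1) x1 (subset_closure hx1))
  obtain ⟨c0, hc0⟩ : ∃ c0 : ℝ, c0 = (η⁻¹) ^ δ := ⟨_, rfl⟩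
  have hc00 : 0 ≤ c0 := by rw [hc0]; positivity
  obtain ⟨m, hm⟩ : ∃ m : ℝ, m = γ₂ - δ := ⟨_, rfl⟩
  have hgg : 0 < γ₂ * (1 - γ₂) := mul_pos hγ0 (by linarith)
  obtain ⟨M, hM1, hM2⟩ : ∃ M : ℝ, 1 + c0 ≤ M ∧
      1 + c0 * (4 * m ^ 2 + |m * (m - 1)|) ≤ M * (γ₂ * (1 - γ₂)) := by
    refine ⟨max (1 + c0) ((1 + c0 * (4 * m ^ 2 + |m * (m - 1)|)) / (γ₂ * (1 - γ₂))),
      le_max_left _ _, ?_⟩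
    rw [← div_le_iff₀ hgg]
    exact le_max_right _ _
  obtain ⟨K, hK, hKK⟩ : ∃ K : ℝ, 0 < K ∧
      A * (2 * D) ^ (β - n + 1 + (n - 1) * δ - γ₂ * (n + α)) < K ^ ((n : ℝ) + α) := by
    have hp : 0 ≤ A * (2 * D) ^ (β - n + 1 + (n - 1) * δ - γ₂ * (n + α)) := by positivity
    refine ⟨(A * (2 * D) ^ (β - n + 1 + (n - 1) * δ - γ₂ * (n + α)) + 1) ^ ((n:ℝ) + α)⁻¹,
      Real.rpow_pos_of_pos (by linarith) _, ?_⟩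
    rw [Real.rpow_inv_rpow (by linarith) hnα.ne']
    linarith
  have hM0 : 0 < M := by linarith
  have hCpos : 0 < K * M * 2 ^ γ₂ := by positivity
  have hb : ∀ z ∈ frontier Ω, ∀ w ∈ closure Ω, -u w ≤ (K * M * 2 ^ γ₂) * ‖w - z‖ ^ γ₂ := by
    intro z hz w hw
    rcases eq_or_ne w z with rfl | hwz
    · rw [hu.2.2.2.2.1 w hz, neg_zero]
      positivity
    · have := aux_point hn0 ha hη hA hα hβ hγ0 hδ hm he hc0 hK hM1 hM2 hKK hΩopen hcomp hD hF hu hz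
        (hΩtype z hz) hw hwz
      rw [Real.mul_rpow (by norm_num) (norm_nonneg _)] at this
      linarith
  have hH := aux_holder hCpos.le hΩopen hΩbdd hΩconv hu.1 hu.2.1 hu.2.2.2.2.1 hb
  refine ⟨K * M * 2 ^ γ₂, hCpos, fun x hx y hy => ?_⟩
  rw [abs_le]
  have h1 := hH x hx y hy
  have h2 := hH y hy x hx
  rw [norm_sub_rev] at h2
  constructor <;> linarith
end

section
/- Let Ω ⊂ ℝⁿ (n ≥ 2) be a bounded open convex domain satisfying the exterior sphere condition with radius R > 0. Suppose F : Ω × (−∞,0) → ℝ is continuous and non-decreasing in its second argument, and there are constants A > 0, α ≥ 0, β ≥ n+1 with β < α + n such that 0 < F(x,t) ≤ A·d_x^{β−n−1}·|t|^{−α} for all x ∈ Ω and t < 0. If u is a classical solution of det D²u = F(x,u) in Ω with u = 0 on ∂Ω, then there is a constant C depending only on n, α, β, A, R and diam Ω such that |u(y)| ≤ C·d_y^{β/(n+α)} for every y ∈ Ω. -/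
/-- `Ω` satisfies the exterior sphere condition with radius `R`: through every boundary
point there is a closed ball of radius `R` containing `Ω`. -/
def ExteriorSphereCond {n : ℕ} (Ω : Set (EuclideanSpace ℝ (Fin n))) (R : ℝ) : Prop :=
  ∀ x₀ ∈ frontier Ω, ∃ y₀ : EuclideanSpace ℝ (Fin n),
    Ω ⊆ Metric.closedBall y₀ R ∧ x₀ ∈ Metric.sphere y₀ R

open scoped MatrixOrder Topology

theorem one_le_det_aux {n : ℕ} {M : Matrix (Fin n) (Fin n) ℝ} (hM : (M - 1).PosSemidef) :
    1 ≤ M.det := by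
  have hH : M.IsHermitian := by
    have := hM.1.add (Matrix.isHermitian_one (n := Fin n) (α := ℝ))
    simpa using this
  rw [hH.det_eq_prod_eigenvalues]
  have : ∀ i, 1 ≤ hH.eigenvalues i := by
    intro i
    rw [hH.eigenvalues_eq]
    have h := hM.dotProduct_mulVec_nonneg (hH.eigenvectorBasis i)
    rw [Matrix.sub_mulVec, Matrix.one_mulVec, dotProduct_sub] at h
    have h1 : star (⇑(hH.eigenvectorBasis i)) ⬝ᵥ ⇑(hH.eigenvectorBasis i) = (1:ℝ) := by
      have h2 := hH.eigenvectorBasis.orthonormal.1 i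
      have h3 := real_inner_self_eq_norm_sq (hH.eigenvectorBasis i)
      rw [h2, EuclideanSpace.inner_eq_star_dotProduct] at h3
      simpa [dotProduct_comm] using h3
    rw [h1] at h
    simp only [RCLike.re_to_real]
    linarith
  calc (1:ℝ) = ∏ i : Fin n, 1 := by simp
    _ ≤ _ := Finset.prod_le_prod (fun _ _ => zero_le_one) (fun i _ => this i)

theorem det_mono_aux {n : ℕ} {H B : Matrix (Fin n) (Fin n) ℝ} (hB : B.PosDef)
    (h : (H - B).PosSemidef) : B.det ≤ H.det := by
  obtain ⟨C, hC⟩ := CStarAlgebra.nonneg_iff_eq_star_mul_self.mp hB.posSemidef.nonneg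
  have hd : C.det ≠ 0 := by
    intro h0
    have := hB.det_pos
    rw [hC, Matrix.det_mul, h0] at this
    simp at this
  have hu : IsUnit C.det := isUnit_iff_ne_zero.mpr hd
  have h1 := h.conjTranspose_mul_mul_same C⁻¹
  have hCC : C * C⁻¹ = 1 := Matrix.mul_nonsing_inv _ hu
  have h2 : (C⁻¹).conjTranspose * (H - B) * C⁻¹ = (C⁻¹).conjTranspose * H * C⁻¹ - 1 := by
    rw [mul_sub, sub_mul]
    congr 1
    rw [hC, Matrix.star_eq_conjTranspose]
    calc _ = (C * C⁻¹).conjTranspose * (C * C⁻¹) := by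
          simp only [Matrix.conjTranspose_mul, Matrix.mul_assoc]
      _ = 1 := by simp [hCC]
  rw [h2] at h1
  have h3 := one_le_det_aux h1
  have h4 : B.det = C.det * C.det := by
    rw [hC, Matrix.star_eq_conjTranspose, Matrix.det_mul, Matrix.det_conjTranspose]; simp
  have h5 : C.det * C⁻¹.det = 1 := by rw [← Matrix.det_mul, hCC, Matrix.det_one]
  rw [Matrix.det_mul, Matrix.det_mul, Matrix.det_conjTranspose] at h3
  simp only [star_trivial] at h3
  rw [h4]
  have h6 : H.det = (C.det * C.det) * (C⁻¹.det * H.det * C⁻¹.det) := by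
    calc H.det = (C.det * C⁻¹.det) * (C.det * C⁻¹.det) * H.det := by rw [h5]; ring
      _ = _ := by ring
  rw [h6]
  nlinarith [mul_self_nonneg C.det]

/-- The model matrix `a I + b p pᵀ`. -/
theorem det_model_aux {n : ℕ} (a b : ℝ) (ha : 0 < a) (p : Fin n → ℝ) :
    (a • (1 : Matrix (Fin n) (Fin n) ℝ) + b • Matrix.vecMulVec p p).det
      = a ^ n * (1 + b / a * (p ⬝ᵥ p)) := by
  have : a • (1 : Matrix (Fin n) (Fin n) ℝ) + b • Matrix.vecMulVec p p
      = a • (1 + Matrix.replicateCol Unit ((b/a) • p) * Matrix.replicateRow Unit p) := by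
    ext i j
    simp [Matrix.vecMulVec_apply, Matrix.mul_apply]
    field_simp
  rw [this, Matrix.det_smul, Matrix.det_one_add_replicateCol_mul_replicateRow]
  simp

theorem quad_model_aux {n : ℕ} (a b : ℝ) (p v : Fin n → ℝ) :
    v ⬝ᵥ ((a • (1 : Matrix (Fin n) (Fin n) ℝ) + b • Matrix.vecMulVec p p).mulVec v)
      = a * (v ⬝ᵥ v) + b * (p ⬝ᵥ v) ^ 2 := by
  rw [Matrix.add_mulVec, Matrix.smul_mulVec, Matrix.smul_mulVec, Matrix.one_mulVec,
    Matrix.vecMulVec_mulVec]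
  simp [dotProduct_add, dotProduct_comm v p]
  left; ring

theorem posDef_model_aux {n : ℕ} (a b : ℝ) (ha : 0 < a) (hb : 0 ≤ b) (p : Fin n → ℝ) :
    (a • (1 : Matrix (Fin n) (Fin n) ℝ) + b • Matrix.vecMulVec p p).PosDef := by
  refine Matrix.PosDef.of_dotProduct_mulVec_pos ?_ ?_
  · ext i j
    by_cases h : i = j
    · simp [Matrix.vecMulVec_apply, h]
    · simp [Matrix.vecMulVec_apply, h, Ne.symm h, mul_comm]
  · intro v hv
    rw [star_trivial, quad_model_aux]
    have : 0 < v ⬝ᵥ v := by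
      have := Matrix.dotProduct_star_self_pos_iff.mpr hv
      simpa using this
    positivity

theorem second_deriv_nonneg_aux {f f' : ℝ → ℝ} {c : ℝ} (hmin : IsLocalMin f 0)
    (h1 : ∀ᶠ t in 𝓝 (0:ℝ), HasDerivAt f (f' t) t) (h2 : HasDerivAt f' c 0) : 0 ≤ c := by
  by_contra hc
  push Not at hc
  have he : deriv f =ᶠ[𝓝 0] f' := h1.mono fun t ht => ht.deriv
  have hdd : deriv (deriv f) 0 = c := by rw [he.deriv_eq]; exact h2.deriv
  have hmax : IsLocalMax f 0 :=
    isLocalMax_of_deriv_deriv_neg (by rw [hdd]; exact hc) hmin.deriv_eq_zero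
      h1.self_of_nhds.continuousAt
  have hconst : f =ᶠ[𝓝 0] fun _ => f 0 := by
    filter_upwards [hmin, hmax] with t h3 h4
    exact le_antisymm h4 h3
  have : deriv (deriv f) 0 = 0 := by
    have h5 := hconst.deriv
    rw [h5.deriv_eq]; simp
  linarith

theorem ball_dist_aux {n : ℕ} (hn : 2 ≤ n) {Ω : Set (EuclideanSpace ℝ (Fin n))} (ho : IsOpen Ω)
    {y₀ : EuclideanSpace ℝ (Fin n)} {R : ℝ}
    (hsub : Ω ⊆ Metric.closedBall y₀ R) {x : EuclideanSpace ℝ (Fin n)} (hx : x ∈ Ω) :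
    Metric.infDist x (frontier Ω) + ‖x - y₀‖ ≤ R := by
  have hb : Metric.ball x (Metric.infDist x (frontier Ω)) ⊆ Ω := by
    rcases (Metric.ball x (Metric.infDist x (frontier Ω))).eq_empty_or_nonempty with h | h
    · rw [h]; exact Set.empty_subset _
    refine IsPreconnected.subset_left_of_subset_union ho (isClosed_closure (s := Ω)).isOpen_compl
      ?_ ?_ ?_ (convex_ball _ _).isPreconnected
    · exact disjoint_compl_right.mono_left subset_closure |>.mono_right le_rfl
    · intro y hy
      by_contra hcon
      simp only [Set.mem_union, Set.mem_compl_iff, not_or, not_not] at hcon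
      have hf : y ∈ frontier Ω := by
        rw [ho.frontier_eq]; exact ⟨hcon.2, hcon.1⟩
      have := Metric.infDist_le_dist_of_mem (x := x) hf
      rw [Metric.mem_ball, dist_comm] at hy
      linarith
    · exact ⟨x, Metric.mem_ball_self (Metric.nonempty_ball.mp h), hx⟩
  set d := Metric.infDist x (frontier Ω)
  have hd : 0 ≤ d := Metric.infDist_nonneg
  obtain ⟨e, he, hex⟩ : ∃ e : EuclideanSpace ℝ (Fin n), ‖e‖ = 1 ∧ x - y₀ = ‖x - y₀‖ • e := by
    by_cases h0 : x - y₀ = 0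
    · refine ⟨EuclideanSpace.single ⟨0, by omega⟩ 1, by simp, by simp [h0]⟩
    · refine ⟨‖x - y₀‖⁻¹ • (x - y₀), ?_, ?_⟩
      · rw [norm_smul, norm_inv, norm_norm, inv_mul_cancel₀ (norm_ne_zero_iff.mpr h0)]
      · rw [smul_smul, mul_inv_cancel₀ (norm_ne_zero_iff.mpr h0), one_smul]
  refine le_of_forall_pos_lt_add ?_
  intro ε hε
  have hxR : ‖x - y₀‖ ≤ R := by simpa [dist_eq_norm] using hsub hx
  by_cases hde : d < ε
  · linarith
  push Not at hde
  have hm : x + (d - ε/2) • e ∈ Metric.closedBall y₀ R := by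
    apply hsub; apply hb
    rw [Metric.mem_ball, dist_eq_norm, add_sub_cancel_left, norm_smul, he, Real.norm_eq_abs,
      abs_of_nonneg (by linarith)]
    linarith
  rw [Metric.mem_closedBall, dist_eq_norm] at hm
  have h7 : x + (d - ε/2) • e - y₀ = (‖x - y₀‖ + (d - ε/2)) • e := by
    rw [add_smul, ← hex]; abel
  rw [h7, norm_smul, he, Real.norm_eq_abs,
      abs_of_nonneg (by have := norm_nonneg (x - y₀); linarith)] at hm
  linarith

theorem hess_quad_aux {n : ℕ} (u : EuclideanSpace ℝ (Fin n) → ℝ) (z : EuclideanSpace ℝ (Fin n))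
    (v : Fin n → ℝ) :
    v ⬝ᵥ ((Matrix.of fun i j : Fin n => iteratedFDeriv ℝ 2 u z
      ![EuclideanSpace.single i (1 : ℝ), EuclideanSpace.single j (1 : ℝ)]).mulVec v)
      = fderiv ℝ (fderiv ℝ u) z (WithLp.toLp 2 v) (WithLp.toLp 2 v) := by
  have hv : (WithLp.toLp 2 v : EuclideanSpace ℝ (Fin n))
      = ∑ i, v i • EuclideanSpace.single i (1:ℝ) := by
    ext j
    simp [Finset.sum_apply, Pi.single_apply]
  rw [hv]
  simp only [map_sum, map_smul, _root_.sum_apply, _root_.smul_apply,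
    dotProduct, Matrix.mulVec, Matrix.of_apply, iteratedFDeriv_two_apply, Matrix.cons_val_zero,
    Matrix.cons_val_one, smul_eq_mul, Finset.mul_sum]
  rw [Finset.sum_comm]
  refine Finset.sum_congr rfl fun i _ => Finset.sum_congr rfl fun j _ => ?_
  ring

theorem u_deriv_aux {n : ℕ} {Ω : Set (EuclideanSpace ℝ (Fin n))} (ho : IsOpen Ω)
    {u : EuclideanSpace ℝ (Fin n) → ℝ} (hu : ContDiffOn ℝ 2 u Ω) {z : EuclideanSpace ℝ (Fin n)}
    (hz : z ∈ Ω) (v : EuclideanSpace ℝ (Fin n)) :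
    (∀ᶠ t in 𝓝 (0:ℝ), HasDerivAt (fun t : ℝ => u (z + t • v)) (fderiv ℝ u (z + t • v) v) t) ∧
    HasDerivAt (fun t : ℝ => fderiv ℝ u (z + t • v) v) (fderiv ℝ (fderiv ℝ u) z v v) 0 := by
  have hl : ∀ t : ℝ, HasDerivAt (fun t : ℝ => z + t • v) v t := fun t => by
    simpa using ((hasDerivAt_id t).smul_const v).const_add z
  have hc : Continuous (fun t : ℝ => z + t • v) := by fun_prop
  constructor
  · have : ∀ᶠ t in 𝓝 (0:ℝ), z + t • v ∈ Ω :=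
      hc.continuousAt.eventually (by simpa using ho.mem_nhds hz)
    filter_upwards [this] with t ht
    have hd : DifferentiableAt ℝ u (z + t • v) :=
      (hu.contDiffAt (ho.mem_nhds ht)).differentiableAt (by norm_num)
    exact hd.hasFDerivAt.comp_hasDerivAt t (hl t)
  · have hd : DifferentiableAt ℝ (fderiv ℝ u) z :=
      ((hu.contDiffAt (ho.mem_nhds hz)).fderiv_right (m := 1) (by norm_num)).differentiableAt
        (by norm_num)
    have h1 : HasFDerivAt (fderiv ℝ u) (fderiv ℝ (fderiv ℝ u) z) (z + (0:ℝ) • v) := by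
      simpa using hd.hasFDerivAt
    have h2 := h1.comp_hasDerivAt 0 (hl 0)
    exact h2.clm_apply (hasDerivAt_const (0:ℝ) v) |>.congr_deriv (by simp)

theorem w_deriv_aux (M γ r s q : ℝ) (hr : 0 < r) :
    (∀ᶠ t in 𝓝 (0:ℝ), HasDerivAt (fun t : ℝ => -M * (r - 2 * t * s - t ^ 2 * q) ^ γ)
      (-M * ((-2 * s - 2 * t * q) * γ * (r - 2 * t * s - t ^ 2 * q) ^ (γ - 1))) t) ∧
    HasDerivAt (fun t : ℝ => -M * ((-2 * s - 2 * t * q) * γ *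
      (r - 2 * t * s - t ^ 2 * q) ^ (γ - 1)))
      (2 * M * γ * r ^ (γ - 1) * q + 4 * M * γ * (1 - γ) * r ^ (γ - 2) * s ^ 2) 0 := by
  have hl : ∀ t : ℝ, HasDerivAt (fun t : ℝ => r - 2 * t * s - t ^ 2 * q) (-2 * s - 2 * t * q) t := by
    intro t
    have h1 := (((hasDerivAt_id t).const_mul 2).mul_const s).const_sub r
    have h2 := ((hasDerivAt_id t).pow 2).mul_const q
    refine (h1.sub h2).congr_deriv ?_
    simp
  have hc : Continuous (fun t : ℝ => r - 2 * t * s - t ^ 2 * q) := by fun_prop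
  constructor
  · have : ∀ᶠ t in 𝓝 (0:ℝ), 0 < r - 2 * t * s - t ^ 2 * q :=
      hc.continuousAt.eventually (lt_mem_nhds (by simpa using hr))
    filter_upwards [this] with t ht
    exact ((hl t).rpow_const (Or.inl ht.ne')).const_mul _
  · have h1 : HasDerivAt (fun t : ℝ => (-2 * s - 2 * t * q) * γ) (-2 * q * γ) 0 := by
      have := ((((hasDerivAt_id (0:ℝ)).const_mul 2).mul_const q).const_sub (-2 * s)).mul_const γ
      refine this.congr_deriv ?_
      simp
    have h2 := (hl 0).rpow_const (p := γ - 1) (Or.inl (by simpa using hr.ne'))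
    refine ((h1.mul h2).const_mul (-M)).congr_deriv ?_
    have h3 : γ - 1 - 1 = γ - 2 := by ring
    rw [h3]
    simp
    ring

/-- Hessian comparison at an interior minimum point of `u - w`, with
`w = -M (R² - |x - y₀|²)^γ`. -/
theorem hess_compare_aux {n : ℕ} {Ω : Set (EuclideanSpace ℝ (Fin n))} (ho : IsOpen Ω)
    {u : EuclideanSpace ℝ (Fin n) → ℝ} (hu : ContDiffOn ℝ 2 u Ω) {z y₀ : EuclideanSpace ℝ (Fin n)}
    (hz : z ∈ Ω) (M γ R : ℝ) (hM : 0 < M) (hγ : 0 < γ) (hγ1 : γ < 1)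
    (hr : 0 < R ^ 2 - ‖z - y₀‖ ^ 2)
    (hmin : IsLocalMin (fun x => u x - -M * (R ^ 2 - ‖x - y₀‖ ^ 2) ^ γ) z) :
    (2 * M * γ * (R ^ 2 - ‖z - y₀‖ ^ 2) ^ (γ - 1)) ^ n *
      (1 + 2 * (1 - γ) / (R ^ 2 - ‖z - y₀‖ ^ 2) * ‖z - y₀‖ ^ 2) ≤ hessianDet u z := by
  set r := R ^ 2 - ‖z - y₀‖ ^ 2 with hrdef
  set p : Fin n → ℝ := fun i => (z - y₀) i with hp
  have hpp : p ⬝ᵥ p = ‖z - y₀‖ ^ 2 := by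
    rw [EuclideanSpace.real_norm_sq_eq]
    simp [dotProduct, hp, sq]
  set a := 2 * M * γ * r ^ (γ - 1) with ha_def
  set b := 4 * M * γ * (1 - γ) * r ^ (γ - 2) with hb_def
  have ha : 0 < a := by positivity
  have h1γ : 0 < 1 - γ := by linarith
  have hb : 0 ≤ b := by positivity
  have hba : b / a = 2 * (1 - γ) / r := by
    have : r ^ (γ - 1) = r ^ (γ - 2) * r := by
      rw [show γ - 1 = (γ - 2) + 1 by ring, Real.rpow_add hr, Real.rpow_one]
    rw [ha_def, hb_def, this]
    have := Real.rpow_pos_of_pos hr (γ - 2)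
    field_simp
    norm_num
  have hdet := det_model_aux a b ha p
  rw [hba, hpp] at hdet
  rw [← hdet]
  unfold hessianDet
  apply det_mono_aux (posDef_model_aux a b ha hb p)
  refine Matrix.PosSemidef.of_dotProduct_mulVec_nonneg ?_ ?_
  · refine Matrix.IsHermitian.sub ?_ (posDef_model_aux a b ha hb p).1
    ext i j
    simp only [Matrix.conjTranspose_apply, Matrix.of_apply, star_trivial, iteratedFDeriv_two_apply,
      Matrix.cons_val_zero, Matrix.cons_val_one]
    exact ((hu.contDiffAt (ho.mem_nhds hz)).isSymmSndFDerivAt (by simp)) _ _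
  · intro v
    rw [star_trivial, Matrix.sub_mulVec, dotProduct_sub, hess_quad_aux, quad_model_aux]
    set V : EuclideanSpace ℝ (Fin n) := WithLp.toLp 2 v with hV
    obtain ⟨hu1, hu2⟩ := u_deriv_aux ho hu hz V
    have hvv : v ⬝ᵥ v = ‖V‖ ^ 2 := by
      rw [EuclideanSpace.real_norm_sq_eq]
      simp [dotProduct, hV, sq]
    have hpv : p ⬝ᵥ v = inner ℝ (z - y₀) V := by
      rw [EuclideanSpace.inner_eq_star_dotProduct]
      simp [dotProduct, hp, hV, mul_comm]
    obtain ⟨hw1, hw2⟩ := w_deriv_aux M γ r (p ⬝ᵥ v) (v ⬝ᵥ v) hr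
    have hline : ∀ t : ℝ, R ^ 2 - ‖z + t • V - y₀‖ ^ 2
        = r - 2 * t * (p ⬝ᵥ v) - t ^ 2 * (v ⬝ᵥ v) := by
      intro t
      have : z + t • V - y₀ = (z - y₀) + t • V := by abel
      rw [this, norm_add_sq_real, inner_smul_right, norm_smul, mul_pow, hpv, hvv, hrdef,
        Real.norm_eq_abs, sq_abs]
      ring
    have hm : IsLocalMin (fun t : ℝ => u (z + t • V) -
        -M * (r - 2 * t * (p ⬝ᵥ v) - t ^ 2 * (v ⬝ᵥ v)) ^ γ) 0 := by
      have hc : ContinuousAt (fun t : ℝ => z + t • V) 0 := by fun_prop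
      have h0 : IsLocalMin (fun x => u x - -M * (R ^ 2 - ‖x - y₀‖ ^ 2) ^ γ)
          ((fun t : ℝ => z + t • V) 0) := by simpa using hmin
      have := IsLocalMin.comp_continuous (g := fun t : ℝ => z + t • V) (b := 0) h0 hc
      simpa only [Function.comp_def, hline] using this
    have := second_deriv_nonneg_aux hm ((hu1.and hw1).mono fun t ht => ht.1.sub ht.2)
      (hu2.sub hw2)
    have e : a * (v ⬝ᵥ v) + b * (p ⬝ᵥ v) ^ 2 = 2 * M * γ * r ^ (γ - 1) * (v ⬝ᵥ v) +
      4 * M * γ * (1 - γ) * r ^ (γ - 2) * (p ⬝ᵥ v) ^ 2 := rfl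
    rw [e]
    exact this

/-- The final numerical contradiction. -/
theorem numeric_aux (n : ℕ) (hn : 2 ≤ n) (A α β R γ M m d ρ N U : ℝ) (hA : 0 < A) (hα : 0 ≤ α)
    (hR : 0 < R) (hβ : (n : ℝ) + 1 ≤ β) (hγβ : γ * (n + α) = β) (hγ : 0 < γ) (hγ1 : γ < 1)
    (hm : 0 < m) (hm1 : m ≤ R ^ 2) (hm2 : m ≤ 2 * (1 - γ) * R ^ 2)
    (hM : M = 1 + A * R ^ (-(β - n - 1)) / ((2 * γ) ^ n * m))
    (hd : 0 < d) (hdρ : R * d ≤ ρ) (hρ : ρ = R ^ 2 - N) (hN : 0 ≤ N)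
    (hU : M * ρ ^ γ ≤ U)
    (h : (2 * M * γ * ρ ^ (γ - 1)) ^ n * (1 + 2 * (1 - γ) / ρ * N)
      ≤ A * d ^ (β - n - 1) * U ^ (-α)) : False := by
  have hρ0 : 0 < ρ := lt_of_lt_of_le (mul_pos hR hd) hdρ
  have hden : 0 < (2 * γ) ^ n * m := by positivity
  have hK : 0 < A * R ^ (-(β - n - 1)) := by positivity
  have hM1 : 1 ≤ M := by rw [hM]; have := div_pos hK hden; linarith
  have hM0 : 0 < M := by linarith
  have hργ : 0 < ρ ^ γ := Real.rpow_pos_of_pos hρ0 _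
  have h1 : U ^ (-α) ≤ ρ ^ (-(γ * α)) := by
    have : U ^ (-α) ≤ (ρ ^ γ) ^ (-α) :=
      Real.rpow_le_rpow_of_nonpos hργ (by nlinarith) (by linarith)
    rwa [← Real.rpow_mul hρ0.le, mul_neg] at this
  have h2 : d ^ (β - n - 1) ≤ R ^ (-(β - n - 1)) * ρ ^ (β - n - 1) := by
    have h3 : d ≤ ρ / R := by rw [le_div_iff₀ hR]; linarith
    have := Real.rpow_le_rpow hd.le h3 (by linarith : 0 ≤ β - n - 1)
    rw [Real.div_rpow hρ0.le hR.le] at this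
    rw [Real.rpow_neg hR.le]
    calc _ ≤ _ := this
      _ = _ := by field_simp
  have h3 : A * d ^ (β - n - 1) * U ^ (-α)
      ≤ A * R ^ (-(β - n - 1)) * ρ ^ (n * (γ - 1) - 1) := by
    have e : ρ ^ (n * (γ - 1) - 1) = ρ ^ (β - n - 1) * ρ ^ (-(γ * α)) := by
      rw [← Real.rpow_add hρ0]; congr 1; linarith
    rw [e]
    have hU0 : 0 ≤ U ^ (-α) := Real.rpow_nonneg (by nlinarith [mul_pos hM0 hργ]) _
    have := mul_le_mul h2 h1 hU0 (by positivity)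
    calc A * d ^ (β - n - 1) * U ^ (-α) = A * (d ^ (β - n - 1) * U ^ (-α)) := by ring
      _ ≤ A * (R ^ (-(β - n - 1)) * ρ ^ (β - n - 1) * ρ ^ (-(γ * α))) := by gcongr
      _ = _ := by ring
  have h4 : (2 * M * γ * ρ ^ (γ - 1)) ^ n * (1 + 2 * (1 - γ) / ρ * N)
      = M ^ n * ((2 * γ) ^ n * (ρ + 2 * (1 - γ) * N)) * ρ ^ (n * (γ - 1) - 1) := by
    have e : ρ ^ (n * (γ - 1) - 1) = (ρ ^ (γ - 1)) ^ n / ρ := by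
      rw [Real.rpow_sub hρ0, Real.rpow_one, ← Real.rpow_natCast (ρ ^ (γ - 1)) n,
        ← Real.rpow_mul hρ0.le, mul_comm (n:ℝ)]
    rw [e, mul_pow, show 2 * M * γ = M * (2 * γ) by ring, mul_pow]
    field_simp
  have h5 : m ≤ ρ + 2 * (1 - γ) * N := by
    have hN2 : N ≤ R ^ 2 := by linarith
    have hR2 : 0 < R ^ 2 := by positivity
    by_cases hc : 1 ≤ 2 * (1 - γ)
    · nlinarith
    · push Not at hc
      nlinarith
  have h6 : A * R ^ (-(β - n - 1)) < M ^ n * ((2 * γ) ^ n * (ρ + 2 * (1 - γ) * N)) := by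
    have h7 : M ≤ M ^ n := le_self_pow₀ hM1 (by omega)
    have h8 : M * ((2 * γ) ^ n * m) = (2 * γ) ^ n * m + A * R ^ (-(β - n - 1)) := by
      rw [hM]; field_simp
    calc A * R ^ (-(β - n - 1)) < M * ((2 * γ) ^ n * m) := by rw [h8]; linarith
      _ ≤ _ := by gcongr
  have h9 : 0 < ρ ^ (n * (γ - 1) - 1) := Real.rpow_pos_of_pos hρ0 _
  have := mul_lt_mul_of_pos_right h6 h9
  rw [h4] at h
  linarith

/-- Theorem 1.3 (i), pointwise form: on a domain satisfying the exterior sphere condition,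
`|u(y)| ≤ C d_y^{β/(n+α)}` with `C` depending only on `n, α, β, A, R` and `diam Ω`
(through the bound `D`). -/
theorem pointwise_distance_bound_exterior_sphere
    (n : ℕ) (hn : 2 ≤ n) (A α β R D : ℝ) (hA : 0 < A) (hα : 0 ≤ α) (hR : 0 < R)
    (hβ : (n : ℝ) + 1 ≤ β) (hβ' : β < α + n) :
    ∃ C : ℝ, 0 < C ∧
      ∀ (Ω : Set (EuclideanSpace ℝ (Fin n))) (F : EuclideanSpace ℝ (Fin n) → ℝ → ℝ)
        (u : EuclideanSpace ℝ (Fin n) → ℝ),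
        IsOpen Ω → Convex ℝ Ω → Bornology.IsBounded Ω → Ω.Nonempty →
        Metric.diam Ω ≤ D →
        ExteriorSphereCond Ω R →
        SatisfiesFCond Ω F A α β →
        IsClassicalSolution Ω F u →
        ∀ y ∈ Ω, |u y| ≤ C * Metric.infDist y (frontier Ω) ^ (β / (n + α)) := by
  have hn0 : (0:ℝ) ≤ n := Nat.cast_nonneg n
  have hnα : 0 < (n:ℝ) + α := by linarith
  set γ := β / (n + α) with hγdef
  have hγβ : γ * (n + α) = β := by rw [hγdef]; field_simp
  have hγ : 0 < γ := div_pos (by linarith) hnα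
  have hγ1 : γ < 1 := by rw [hγdef, div_lt_one hnα]; linarith
  have h1γ : 0 < 1 - γ := by linarith
  set m := min (R ^ 2) (2 * (1 - γ) * R ^ 2) with hmdef
  have hm : 0 < m := lt_min (by positivity) (by positivity)
  obtain ⟨M, hM⟩ : ∃ M : ℝ, M = 1 + A * R ^ (-(β - n - 1)) / ((2 * γ) ^ n * m) := ⟨_, rfl⟩
  have hM0 : 0 < M := by rw [hM]; positivity
  refine ⟨M * (2 * R) ^ γ, by positivity, ?_⟩
  intro Ω F u ho _ hbd hne _ hES hF hu y hy
  obtain ⟨huc, _, hu2, huneg, hu0, heq⟩ := hu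
  have hΩu : Ω ≠ Set.univ := by
    rintro rfl
    have : Nonempty (Fin n) := ⟨⟨0, by omega⟩⟩
    exact NormedSpace.unbounded_univ ℝ (EuclideanSpace ℝ (Fin n)) hbd
  have hfne : (frontier Ω).Nonempty := nonempty_frontier_iff.mpr ⟨hne, hΩu⟩
  obtain ⟨x₀, hx₀, hx₀d⟩ := isClosed_frontier.exists_infDist_eq_dist hfne y
  obtain ⟨y₀, hsub, hsph⟩ := hES x₀ hx₀
  have hdpos : ∀ x ∈ Ω, 0 < Metric.infDist x (frontier Ω) := by
    intro x hx
    refine (isClosed_frontier.notMem_iff_infDist_pos hfne).mp ?_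
    rw [ho.frontier_eq]
    exact fun h => h.2 hx
  have hball : ∀ x ∈ Ω, R * Metric.infDist x (frontier Ω) ≤ R ^ 2 - ‖x - y₀‖ ^ 2 := by
    intro x hx
    have h1 := ball_dist_aux hn ho hsub hx
    have h2 := hdpos x hx
    have h3 := norm_nonneg (x - y₀)
    nlinarith
  have hclsub : closure Ω ⊆ Metric.closedBall y₀ R := closure_minimal hsub Metric.isClosed_closedBall
  -- comparison
  have hcomp : ∀ x ∈ Ω, 0 ≤ u x - -M * (R ^ 2 - ‖x - y₀‖ ^ 2) ^ γ := by
    have hcpt : IsCompact (closure Ω) := hbd.isCompact_closure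
    have hcont : ContinuousOn (fun x => u x - -M * (R ^ 2 - ‖x - y₀‖ ^ 2) ^ γ) (closure Ω) := by
      refine huc.sub (Continuous.continuousOn ?_)
      refine continuous_const.mul (Continuous.rpow_const (by fun_prop) ?_)
      intro x; right; exact hγ.le
    obtain ⟨z, hz, hzmin⟩ := hcpt.exists_isMinOn hne.closure hcont
    intro x hx
    refine le_trans ?_ (hzmin (subset_closure hx))
    by_contra hneg
    push Not at hneg
    have hzΩ : z ∈ Ω := by
      by_contra hzn
      have h1 : u z = 0 := hu0 z (by rw [ho.frontier_eq]; exact ⟨hz, hzn⟩)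
      have h2 : ‖z - y₀‖ ≤ R := by simpa [dist_eq_norm] using hclsub hz
      have h3 : 0 ≤ (R ^ 2 - ‖z - y₀‖ ^ 2) ^ γ :=
        Real.rpow_nonneg (by nlinarith [norm_nonneg (z - y₀)]) _
      have h4 := mul_nonneg hM0.le h3
      simp only [h1] at hneg
      linarith
    have hr : 0 < R ^ 2 - ‖z - y₀‖ ^ 2 :=
      lt_of_lt_of_le (mul_pos hR (hdpos z hzΩ)) (hball z hzΩ)
    have hloc : IsLocalMin (fun x => u x - -M * (R ^ 2 - ‖x - y₀‖ ^ 2) ^ γ) z :=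
      (hzmin.on_subset subset_closure).isLocalMin (ho.mem_nhds hzΩ)
    have hH := hess_compare_aux ho hu2 hzΩ M γ R hM0 hγ hγ1 hr hloc
    rw [heq z hzΩ] at hH
    have hF2 := (hF.2.2 z hzΩ (u z) (huneg z hzΩ)).2
    refine numeric_aux n hn A α β R γ M m _ _ (‖z - y₀‖ ^ 2) |u z| hA hα hR hβ hγβ hγ hγ1 hm
      (min_le_left _ _) (min_le_right _ _) hM (hdpos z hzΩ) (hball z hzΩ) rfl (by positivity) ?_
      (hH.trans hF2)
    rw [abs_of_neg (huneg z hzΩ)]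
    linarith
  have h1 := hcomp y hy
  have h2 : |u y| ≤ M * (R ^ 2 - ‖y - y₀‖ ^ 2) ^ γ := by
    rw [abs_of_neg (huneg y hy)]; linarith
  refine h2.trans ?_
  rw [mul_assoc, ← Real.mul_rpow (by positivity) Metric.infDist_nonneg]
  have h3 : R ^ 2 - ‖y - y₀‖ ^ 2 ≤ 2 * R * Metric.infDist y (frontier Ω) := by
    rw [hx₀d]
    have h4 : dist x₀ y₀ = R := hsph
    have h5 := dist_triangle x₀ y y₀
    rw [h4, dist_comm x₀ y, dist_eq_norm y y₀] at h5
    have h6 : ‖y - y₀‖ ≤ R := by simpa [dist_eq_norm] using hsub hy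
    have h7 : (0:ℝ) ≤ dist y x₀ := dist_nonneg
    nlinarith [norm_nonneg (y - y₀)]
  have h8 : 0 ≤ R ^ 2 - ‖y - y₀‖ ^ 2 :=
    le_trans (mul_nonneg hR.le (hdpos y hy).le) (hball y hy)
  gcongr
end
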